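/- arXiv:1311.2745 — 8 statements merged into one kernel-verified Lean document; each statement's English description precedes it below -/
import Mathlib

section
/- Let n ≥ 2 and let x₁, x₂ ∈ ℂ[X] be polynomials of degree exactly n−1, both with nonzero constant coefficient, such that x₁·(x₁)~ = x₂·(x₂)~ (i.e., the two signals have the same autocorrelation). Suppose x₂ is not of the form c·x₁ nor of the form c·(x₁)~ for any c ∈ ℂ (i.e., the signals are not equivalent). Then there exist polynomials g, h ∈ ℂ[X] and constants c₁, c₂ ∈ ℂ with |c₁| = |c₂| = 1 such that: (i) (x₁ = c₁·g·h or x₁ = c₁·(g·h)~) and (x₂ = c₂·g·(h~) or x₂ = c₂·(g·(h~))~); (ii) deg g + deg h = n−1 and deg g ≥ 1, deg h ≥ 1; (iii) g(0) ≠ 0, h(0) = 1, and the leading coefficients of g and h are nonzero; (iv) deg g ≥ deg h. -/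
open Polynomial

/-- The conjugate-reversal of a polynomial: conjugate every coefficient and reverse the
order of the coefficient sequence.  For `P` with `P(0) ≠ 0` this is the polynomial `P~` of
the same degree with `P~(z) = z^{deg P} · conj(P)(1/z)`. -/
noncomputable def conjReverse (p : Polynomial ℂ) : Polynomial ℂ :=
  (p.map (starRingEnd ℂ)).reverse

lemma conjReverse_mul (p q : Polynomial ℂ) :
    conjReverse (p * q) = conjReverse p * conjReverse q := by
  simp [conjReverse, Polynomial.map_mul, Polynomial.reverse_mul_of_domain]

lemma conjReverse_C (c : ℂ) : conjReverse (C c) = C ((starRingEnd ℂ) c) := by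
  simp [conjReverse]

lemma conjReverse_natDegree (p : Polynomial ℂ) (hp : p.coeff 0 ≠ 0) :
    (conjReverse p).natDegree = p.natDegree := by
  have h : (p.map (starRingEnd ℂ)).natTrailingDegree = 0 := by
    rw [Polynomial.natTrailingDegree_eq_zero]
    right
    simpa using hp
  have := Polynomial.reverse_natDegree (p.map (starRingEnd ℂ))
  rw [h] at this
  simpa [conjReverse] using this

lemma conjReverse_conjReverse (p : Polynomial ℂ) (hp : p.coeff 0 ≠ 0) :
    conjReverse (conjReverse p) = p := by
  have h1 := conjReverse_natDegree p hp
  have h2 : ((conjReverse p).map (starRingEnd ℂ)).natDegree = p.natDegree := by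
    simpa using h1
  ext k
  rw [conjReverse, Polynomial.coeff_reverse, h2, Polynomial.coeff_map, conjReverse,
    Polynomial.coeff_reverse]
  simp [Polynomial.revAt_invol]

lemma conjReverse_ne_zero (p : Polynomial ℂ) (hp : p ≠ 0) : conjReverse p ≠ 0 := by
  simpa [conjReverse] using hp

lemma normalize_factorization (m : ℕ) (x₁ x₂ g a : Polynomial ℂ) (c : ℂ) (hc : ‖c‖ = 1)
    (h1 : x₁ = g * a)
    (h2 : x₂ = C c * (g * conjReverse a) ∨ x₂ = C c * conjReverse (g * conjReverse a))
    (hd : g.natDegree + a.natDegree = m) (ha1 : 1 ≤ a.natDegree) (hag : a.natDegree ≤ g.natDegree)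
    (hg0 : g.coeff 0 ≠ 0) (ha0 : a.coeff 0 ≠ 0) :
    ∃ (g h : Polynomial ℂ) (c₁ c₂ : ℂ), ‖c₁‖ = 1 ∧ ‖c₂‖ = 1 ∧
      (x₁ = c₁ • (g * h) ∨ x₁ = c₁ • conjReverse (g * h)) ∧
      (x₂ = c₂ • (g * conjReverse h) ∨ x₂ = c₂ • conjReverse (g * conjReverse h)) ∧
      g.natDegree + h.natDegree = m ∧ 1 ≤ g.natDegree ∧ 1 ≤ h.natDegree ∧
      g.coeff 0 ≠ 0 ∧ h.coeff 0 = 1 ∧ g.leadingCoeff ≠ 0 ∧ h.leadingCoeff ≠ 0 ∧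
      h.natDegree ≤ g.natDegree := by
  set t := a.coeff 0 with ht
  have htc : (starRingEnd ℂ) t ≠ 0 := by simpa using ha0
  have hgd : (C t * g).natDegree = g.natDegree := Polynomial.natDegree_C_mul ha0
  have had : (C t⁻¹ * a).natDegree = a.natDegree := Polynomial.natDegree_C_mul (inv_ne_zero ha0)
  have hgne : g ≠ 0 := by rintro rfl; simp at hg0
  have hane : a ≠ 0 := by rintro rfl; simp at ha1
  have key : ∃ c₂ : ℂ, ‖c₂‖ = 1 ∧ (x₂ = c₂ • ((C t * g) * conjReverse (C t⁻¹ * a)) ∨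
      x₂ = c₂ • conjReverse ((C t * g) * conjReverse (C t⁻¹ * a))) := by
    rcases h2 with h2 | h2
    · refine ⟨c * ((starRingEnd ℂ) t * t⁻¹), by simp [hc, ha0], Or.inl ?_⟩
      have e : (C c : ℂ[X]) = C (c * ((starRingEnd ℂ) t * t⁻¹)) * (C t * C ((starRingEnd ℂ) t⁻¹)) := by
        rw [← C_mul, ← C_mul]
        congr 1
        rw [map_inv₀]
        field_simp
      rw [h2, conjReverse_mul, conjReverse_C, Polynomial.smul_eq_C_mul, e]
      ring
    · refine ⟨c * (t * ((starRingEnd ℂ) t)⁻¹), by simp [hc, ha0], Or.inr ?_⟩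
      have e : (C c : ℂ[X]) = C (c * (t * ((starRingEnd ℂ) t)⁻¹)) * (C ((starRingEnd ℂ) t) * C t⁻¹) := by
        rw [← C_mul, ← C_mul]
        congr 1
        field_simp
      rw [h2, Polynomial.smul_eq_C_mul, e]
      simp only [conjReverse_mul, conjReverse_C, Complex.conj_conj]
      ring
  obtain ⟨c₂, hc₂, hx₂⟩ := key
  refine ⟨C t * g, C t⁻¹ * a, 1, c₂, by simp, hc₂, Or.inl ?_, hx₂, by rw [hgd, had, hd],
    by omega, by omega, by simp [hg0, ha0], by simp [← ht, ha0], by simp [ha0, hgne],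
    by simp [ha0, hane], by omega⟩
  have e : (C t * C t⁻¹ : ℂ[X]) = 1 := by
    rw [← C_mul, mul_inv_cancel₀ ha0, C_1]
  rw [one_smul, h1]
  linear_combination (-(g * a)) * e

/-- If `x₁, x₂` are polynomials of degree exactly `n−1 ≥ 1` with nonzero constant
coefficients having the same autocorrelation (`x₁ x₁~ = x₂ x₂~`), and `x₂` is equivalent
neither to `x₁` nor to `x₁~` (up to a scalar), then there is a factorization
`x₁ ≡ g h`, `x₂ ≡ g h~` (up to unimodular constants and conjugate-reversal), where
`deg g + deg h = n − 1`, `deg g ≥ deg h ≥ 1`, `g(0) ≠ 0`, `h(0) = 1`, and the leading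
coefficients of `g` and `h` are nonzero. -/
theorem autocorrelation_factorization
    (n : ℕ) (hn : 2 ≤ n) (x₁ x₂ : Polynomial ℂ)
    (hd1 : x₁.natDegree = n - 1) (hd2 : x₂.natDegree = n - 1)
    (hc1 : x₁.coeff 0 ≠ 0) (hc2 : x₂.coeff 0 ≠ 0)
    (hauto : x₁ * conjReverse x₁ = x₂ * conjReverse x₂)
    (hneq : ∀ c : ℂ, x₂ ≠ c • x₁ ∧ x₂ ≠ c • conjReverse x₁) :
    ∃ (g h : Polynomial ℂ) (c₁ c₂ : ℂ), ‖c₁‖ = 1 ∧ ‖c₂‖ = 1 ∧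
      (x₁ = c₁ • (g * h) ∨ x₁ = c₁ • conjReverse (g * h)) ∧
      (x₂ = c₂ • (g * conjReverse h) ∨ x₂ = c₂ • conjReverse (g * conjReverse h)) ∧
      g.natDegree + h.natDegree = n - 1 ∧ 1 ≤ g.natDegree ∧ 1 ≤ h.natDegree ∧
      g.coeff 0 ≠ 0 ∧ h.coeff 0 = 1 ∧ g.leadingCoeff ≠ 0 ∧ h.leadingCoeff ≠ 0 ∧
      h.natDegree ≤ g.natDegree := by
  obtain ⟨a, ha⟩ := EuclideanDomain.gcd_dvd_left x₁ x₂
  obtain ⟨b, hb⟩ := EuclideanDomain.gcd_dvd_right x₁ x₂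
  have hbez := EuclideanDomain.gcd_eq_gcd_ab x₁ x₂
  generalize EuclideanDomain.gcd x₁ x₂ = g at ha hb hbez
  generalize EuclideanDomain.gcdA x₁ x₂ = u at hbez
  generalize EuclideanDomain.gcdB x₁ x₂ = v at hbez
  subst ha hb
  rw [Polynomial.mul_coeff_zero] at hc1 hc2
  obtain ⟨hg0, ha0⟩ := mul_ne_zero_iff.mp hc1
  obtain ⟨-, hb0⟩ := mul_ne_zero_iff.mp hc2
  have hgne : g ≠ 0 := by rintro rfl; simp at hg0
  have hane : a ≠ 0 := by rintro rfl; simp at ha0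
  have hbne : b ≠ 0 := by rintro rfl; simp at hb0
  have hcop : IsCoprime a b := by
    refine ⟨u, v, mul_left_cancel₀ hgne ?_⟩
    linear_combination -hbez
  rw [Polynomial.natDegree_mul hgne hane] at hd1
  rw [Polynomial.natDegree_mul hgne hbne] at hd2
  have hab : a * conjReverse a = b * conjReverse b := by
    rw [conjReverse_mul, conjReverse_mul] at hauto
    refine mul_left_cancel₀ (mul_ne_zero hgne (conjReverse_ne_zero g hgne)) ?_
    linear_combination hauto
  have hdvd : a ∣ conjReverse b := hcop.dvd_of_dvd_mul_left (hab ▸ dvd_mul_right _ _)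
  obtain ⟨w, hw⟩ := hdvd
  have hwne : w ≠ 0 := by
    rintro rfl
    rw [mul_zero] at hw
    exact conjReverse_ne_zero b hbne hw
  have hwd : w.natDegree = 0 := by
    have h := conjReverse_natDegree b hb0
    rw [hw, Polynomial.natDegree_mul hane hwne] at h
    omega
  obtain ⟨c, rfl⟩ := Polynomial.natDegree_eq_zero.mp hwd
  have hbeq : b = C ((starRingEnd ℂ) c) * conjReverse a := by
    rw [← conjReverse_conjReverse b hb0, hw, conjReverse_mul, conjReverse_C]
    ring
  have hcn : ‖c‖ = 1 := by
    have h1 : (C ((starRingEnd ℂ) c * c) : ℂ[X]) = C 1 := by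
      refine mul_right_cancel₀ (mul_ne_zero hane (conjReverse_ne_zero a hane)) ?_
      rw [hw] at hab
      rw [C_1, one_mul, C_mul]
      linear_combination (-(a * C c)) * hbeq - hab
    have h2 := C_injective h1
    have h3 := congrArg norm h2
    rw [norm_mul, RCLike.norm_conj, norm_one] at h3
    nlinarith [norm_nonneg c]
  have hcn' : ‖(starRingEnd ℂ) c‖ = 1 := by rw [RCLike.norm_conj, hcn]
  have ha1 : 1 ≤ a.natDegree := by
    by_contra hlt
    obtain ⟨s, rfl⟩ := Polynomial.natDegree_eq_zero.mp (by omega : a.natDegree = 0)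
    have hs : s ≠ 0 := by simpa using ha0
    refine (hneq ((starRingEnd ℂ) c * (starRingEnd ℂ) s * s⁻¹)).1 ?_
    rw [hbeq, conjReverse_C, Polynomial.smul_eq_C_mul]
    have e : (C s⁻¹ * C s : ℂ[X]) = 1 := by rw [← C_mul, inv_mul_cancel₀ hs, C_1]
    simp only [C_mul]
    linear_combination (-(C ((starRingEnd ℂ) c) * C ((starRingEnd ℂ) s) * g)) * e
  have hg1 : 1 ≤ g.natDegree := by
    by_contra hlt
    obtain ⟨s, rfl⟩ := Polynomial.natDegree_eq_zero.mp (by omega : g.natDegree = 0)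
    have hs : s ≠ 0 := by simpa using hg0
    have hs' : (starRingEnd ℂ) s ≠ 0 := by simpa using hs
    refine (hneq ((starRingEnd ℂ) c * s * ((starRingEnd ℂ) s)⁻¹)).2 ?_
    rw [hbeq, conjReverse_mul, conjReverse_C, Polynomial.smul_eq_C_mul]
    have e : (C ((starRingEnd ℂ) s)⁻¹ * C ((starRingEnd ℂ) s) : ℂ[X]) = 1 := by
      rw [← C_mul, inv_mul_cancel₀ hs', C_1]
    simp only [C_mul]
    linear_combination (-(C ((starRingEnd ℂ) c) * C s * conjReverse a)) * e
  rcases le_total a.natDegree g.natDegree with hle | hle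
  · refine normalize_factorization (n - 1) _ _ g a _ hcn' rfl (Or.inl ?_) hd1 ha1 hle hg0 ha0
    rw [hbeq]
    ring
  · refine normalize_factorization (n - 1) _ _ a g _ hcn' (mul_comm _ _) (Or.inr ?_)
      (by omega) hg1 hle ha0 hg0
    rw [hbeq, conjReverse_mul, conjReverse_conjReverse g hg0]
    ring
end

section
/- Let n ≥ 1 and let a ∈ ℂⁿ be the autocorrelation of some signal x₀ ∈ ℂⁿ. Then there exists a finite set S ⊆ ℂⁿ with |S| ≤ 2ⁿ such that every signal x ∈ ℂⁿ whose autocorrelation equals a is equivalent (up to time-shift, conjugate-flip and global phase) to some element of S. -/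
/-- Extension of a signal `x ∈ ℂⁿ` by zero to all of `ℤ`. -/
noncomputable def extZ {n : ℕ} (x : Fin n → ℂ) (i : ℤ) : ℂ :=
  if h : 0 ≤ i ∧ i < (n : ℤ) then x ⟨i.toNat, by omega⟩ else 0

/-- The autocorrelation of a signal `x ∈ ℂⁿ`:
`a_m = Σ_{j=0}^{n−1−m} x_j conj(x_{j+m})`. -/
noncomputable def autocorr {n : ℕ} (x : Fin n → ℂ) (m : ℕ) : ℂ :=
  ∑ j ∈ Finset.range (n - m), extZ x (j : ℤ) * (starRingEnd ℂ) (extZ x ((j : ℤ) + (m : ℤ)))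

/-- Two signals `x, x′ ∈ ℂⁿ` are equivalent up to time-shift, conjugate-flip and global
phase: there are `c ∈ ℂ` with `|c| = 1` and `m ∈ ℤ` such that, extending by zero,
either `x′_j = c x_{j−m}` for all `j`, or `x′_j = c conj(x_{m−j})` for all `j`. -/
def equivSig {n : ℕ} (x x' : Fin n → ℂ) : Prop :=
  ∃ (c : ℂ) (m : ℤ), ‖c‖ = 1 ∧
    ((∀ j : ℤ, extZ x' j = c * extZ x (j - m)) ∨
     (∀ j : ℤ, extZ x' j = c * (starRingEnd ℂ) (extZ x (m - j))))

open Polynomial in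
/-- The nonzero roots of a polynomial, with multiplicity. -/
noncomputable def nzr (p : ℂ[X]) : Multiset ℂ := p.roots.filter (· ≠ 0)

/-- Reflection in the unit circle. -/
noncomputable def sg (s : ℂ) : ℂ := ((starRingEnd ℂ) s)⁻¹

theorem sg_sg (s : ℂ) : sg (sg s) = s := by simp [sg]

open Classical in
/-- All ways of replacing some entries of a list by their reflections. -/
noncomputable def cands : List ℂ → Finset (Multiset ℂ)
  | [] => {0}
  | r :: l => (cands l).image (fun M => r ::ₘ M) ∪ (cands l).image (fun M => sg r ::ₘ M)

theorem card_cands (l : List ℂ) : (cands l).card ≤ 2 ^ l.length := by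
  induction l with
  | nil => simp [cands]
  | cons r l ih =>
    classical
    have h1 := Finset.card_image_le (s := cands l) (f := fun M => r ::ₘ M)
    have h2 := Finset.card_image_le (s := cands l) (f := fun M => sg r ::ₘ M)
    have h3 := Finset.card_union_le ((cands l).image (fun M => r ::ₘ M))
      ((cands l).image (fun M => sg r ::ₘ M))
    have : (cands (r :: l)).card ≤ (cands l).card + (cands l).card := by
      rw [cands]
      convert h3.trans (Nat.add_le_add h1 h2)
    rw [List.length_cons, pow_succ]
    omega

theorem mem_cands (l : List ℂ) : ∀ Q : Multiset ℂ,
    Q + Q.map sg = (l : Multiset ℂ) + (l : Multiset ℂ).map sg → Q ∈ cands l := by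
  induction l with
  | nil =>
    intro Q h
    simp at h
    simp [cands, h]
  | cons r l ih =>
    intro Q h
    have key : r ∈ Q ∨ sg r ∈ Q := by
      have : r ∈ Q + Q.map sg := by rw [h]; simp
      rw [Multiset.mem_add, Multiset.mem_map] at this
      rcases this with h | ⟨s, hs, rfl⟩
      · exact Or.inl h
      · right; rwa [sg_sg]
    rw [cands, Finset.mem_union, Finset.mem_image, Finset.mem_image]
    rcases key with hr | hr
    · obtain ⟨Q', rfl⟩ := Multiset.exists_cons_of_mem hr
      left
      refine ⟨Q', ih Q' ?_, rfl⟩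
      rw [← Multiset.cons_coe] at h
      simp only [Multiset.map_cons, Multiset.cons_add, Multiset.add_cons] at h
      exact (Multiset.cons_inj_right _).1 ((Multiset.cons_inj_right _).1 h)
    · obtain ⟨Q', rfl⟩ := Multiset.exists_cons_of_mem hr
      right
      refine ⟨Q', ih Q' ?_, rfl⟩
      rw [← Multiset.cons_coe] at h
      simp only [Multiset.map_cons, Multiset.cons_add, Multiset.add_cons, sg_sg] at h
      rw [Multiset.cons_swap] at h
      exact (Multiset.cons_inj_right _).1 ((Multiset.cons_inj_right _).1 h)

open Polynomial

theorem nzr_mul {p q : ℂ[X]} (h : p * q ≠ 0) : nzr (p * q) = nzr p + nzr q := by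
  rw [nzr, roots_mul h, Multiset.filter_add]; rfl

theorem nzr_C_mul_X_pow (c : ℂ) (k : ℕ) : nzr (C c * X ^ k) = 0 := by
  by_cases hc : c = 0
  · simp [nzr, hc]
  · rw [nzr, roots_C_mul _ hc, roots_X_pow, Multiset.filter_eq_nil]
    intro a ha
    rw [Multiset.nsmul_singleton] at ha
    simp [Multiset.eq_of_mem_replicate ha]

theorem decomp (p : ℂ[X]) :
    ∃ k, p = C p.leadingCoeff * X ^ k * ((nzr p).map (fun s => X - C s)).prod := by
  refine ⟨(p.roots.filter (fun s => ¬ s ≠ 0)).card, ?_⟩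
  have h : ((p.roots.filter (fun s => ¬ s ≠ 0)).map (fun s => X - C s)).prod
      = (X : ℂ[X]) ^ (p.roots.filter (fun s => ¬ s ≠ 0)).card := by
    have h0 : (p.roots.filter (fun s => ¬ s ≠ 0)).map (fun s => X - C s)
        = (p.roots.filter (fun s => ¬ s ≠ 0)).map (fun _ => (X : ℂ[X])) := by
      refine Multiset.map_congr rfl fun s hs => ?_
      have := (Multiset.mem_filter.1 hs).2
      simp at this
      simp [this]
    rw [h0, Multiset.map_const', Multiset.prod_replicate]
  rw [← h, mul_assoc, ← Multiset.prod_add, ← Multiset.map_add, add_comm, nzr,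
    Multiset.filter_add_not]
  exact (IsAlgClosed.splits p).eq_prod_roots

theorem nzr_reflect_prod (R : Multiset ℂ) (hR : ∀ s ∈ R, s ≠ 0) :
    reflect R.card (R.map (fun s => X - C s)).prod ≠ 0 ∧
    nzr (reflect R.card (R.map (fun s => X - C s)).prod) = R.map (fun s => s⁻¹) := by
  refine ⟨?_, ?_⟩
  · rw [Ne, reflect_eq_zero_iff]
    exact (monic_multiset_prod_of_monic R _ fun s _ => monic_X_sub_C s).ne_zero
  induction R using Multiset.induction_on with
  | empty => simp [nzr]
  | cons s R ih =>
    have hs : s ≠ 0 := hR s (by simp)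
    rw [Multiset.map_cons, Multiset.prod_cons, Multiset.card_cons, add_comm,
      reflect_mul _ _ (by simp) (natDegree_multiset_prod_X_sub_C_eq_card R).le]
    have h1 : reflect 1 (X - C s) = C (-s) * (X - C s⁻¹) := by
      rw [reflect_sub, reflect_one_X, reflect_C, mul_sub, ← C_mul]
      simp [hs]
      ring
    have h2 : reflect R.card (R.map (fun s => X - C s)).prod ≠ 0 := by
      rw [Ne, reflect_eq_zero_iff]
      exact (monic_multiset_prod_of_monic R _ fun s _ => monic_X_sub_C s).ne_zero
    have h3 : (C (-s) * (X - C s⁻¹)) ≠ 0 :=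
      mul_ne_zero (by simpa using hs) (X_sub_C_ne_zero _)
    rw [h1, nzr_mul (mul_ne_zero h3 h2), ih fun t ht => hR t (by simp [ht]), nzr,
      roots_C_mul _ (neg_ne_zero.2 hs), roots_X_sub_C, Multiset.map_cons,
      Multiset.filter_singleton, if_pos (inv_ne_zero hs), Multiset.singleton_add]

theorem nzr_ne (p : ℂ[X]) : ∀ s ∈ nzr p, s ≠ 0 := fun _ hs => (Multiset.mem_filter.1 hs).2

theorem nzr_star (p : ℂ[X]) (N : ℕ) (hp : p ≠ 0) (hN : p.natDegree ≤ N) :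
    nzr (reflect N (p.map (starRingEnd ℂ))) = (nzr p).map sg := by
  obtain ⟨k, hk⟩ := decomp p
  have hc : p.leadingCoeff ≠ 0 := leadingCoeff_ne_zero.2 hp
  generalize p.leadingCoeff = c at hk hc
  have hR := nzr_ne p
  generalize nzr p = R at hk hR
  have hM := (monic_multiset_prod_of_monic R _ fun s _ => monic_X_sub_C s)
  have hdeg : k + R.card ≤ N := by
    rw [hk, natDegree_mul (mul_ne_zero (by simpa using hc) (by simp)) hM.ne_zero,
      natDegree_C_mul_X_pow k c hc, natDegree_multiset_prod_X_sub_C_eq_card] at hN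
    exact hN
  have hmap : p.map (starRingEnd ℂ) = (C (starRingEnd ℂ c) * X ^ k) *
      ((R.map (starRingEnd ℂ)).map (fun s => X - C s)).prod := by
    rw [hk, Polynomial.map_mul, Polynomial.map_multiset_prod, Multiset.map_map, Multiset.map_map]
    simp [Function.comp_def]
  have hNe : N = (N - R.card) + R.card := by omega
  have hcc : starRingEnd ℂ c ≠ 0 := by simpa using hc
  have hR' : ∀ s ∈ R.map (starRingEnd ℂ), s ≠ 0 := by
    intro s hs
    obtain ⟨t, ht, rfl⟩ := Multiset.mem_map.1 hs
    simpa using hR t ht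
  obtain ⟨h1, h2⟩ := nzr_reflect_prod (R.map (starRingEnd ℂ)) hR'
  rw [Multiset.card_map] at h1 h2
  rw [hmap, hNe, reflect_mul _ _ ((natDegree_C_mul_X_pow_le _ _).trans (by omega))
    (by rw [natDegree_multiset_prod_X_sub_C_eq_card, Multiset.card_map]),
    reflect_C_mul_X_pow, nzr_mul (mul_ne_zero (mul_ne_zero (by simpa using hc) (by simp)) h1),
    nzr_C_mul_X_pow, h2, zero_add, Multiset.map_map]
  rfl

/-- The generating polynomial of a signal. -/
noncomputable def sp {n : ℕ} (x : Fin n → ℂ) : ℂ[X] :=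
  ∑ i ∈ Finset.range n, C (extZ x i) * X ^ i

theorem extZ_neg {n : ℕ} (x : Fin n → ℂ) {i : ℤ} (h : i < 0) : extZ x i = 0 := by
  rw [extZ, dif_neg]; omega

theorem extZ_ge {n : ℕ} (x : Fin n → ℂ) {i : ℤ} (h : (n : ℤ) ≤ i) : extZ x i = 0 := by
  rw [extZ, dif_neg]; omega

theorem coeff_sp {n : ℕ} (x : Fin n → ℂ) (i : ℕ) : (sp x).coeff i = extZ x i := by
  simp only [sp, finsetSum_coeff, coeff_C_mul_X_pow]
  rw [Finset.sum_ite_eq]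
  split_ifs with h
  · rfl
  · rw [extZ_ge]; simpa using h

theorem natDegree_sp {n : ℕ} (x : Fin n → ℂ) : (sp x).natDegree ≤ n - 1 := by
  rw [natDegree_le_iff_coeff_eq_zero]
  intro i hi
  rw [coeff_sp, extZ_ge]; omega

theorem sp_ne_zero {n : ℕ} (x : Fin n → ℂ) (hx : x ≠ 0) : sp x ≠ 0 := by
  intro h
  apply hx
  funext i
  have := coeff_sp x i
  rw [h, coeff_zero, extZ, dif_pos ⟨by omega, by omega⟩] at this
  simpa using this.symm

/-- The conjugate-reflected polynomial. -/
noncomputable def sqr {n : ℕ} (x : Fin n → ℂ) : ℂ[X] :=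
  reflect (n - 1) ((sp x).map (starRingEnd ℂ))

theorem coeff_sq {n : ℕ} (hn : 1 ≤ n) (x : Fin n → ℂ) (j : ℕ) :
    (sqr x).coeff j = starRingEnd ℂ (extZ x ((n : ℤ) - 1 - j)) := by
  rw [sqr, coeff_reflect, coeff_map, coeff_sp]
  by_cases h : j ≤ n - 1
  · rw [revAt_le h]; congr 2; omega
  · rw [revAt_eq_self_of_lt (by omega), extZ_ge _ (by omega), extZ_neg _ (by omega)]

theorem coeff_low {n : ℕ} (hn : 1 ≤ n) (x : Fin n → ℂ) (m : ℕ) (hm : m < n) :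
    (sp x * sqr x).coeff (n - 1 - m) = autocorr x m := by
  rw [coeff_mul, Finset.Nat.sum_antidiagonal_eq_sum_range_succ_mk, autocorr,
    show n - m = (n - 1 - m).succ by omega]
  refine Finset.sum_congr rfl fun i hi => ?_
  rw [Finset.mem_range] at hi
  simp only [coeff_sp, coeff_sq hn]
  congr 3
  omega

theorem coeff_high {n : ℕ} (hn : 1 ≤ n) (x : Fin n → ℂ) (m : ℕ) :
    (sp x * sqr x).coeff (n - 1 + m) = starRingEnd ℂ (autocorr x m) := by
  rw [coeff_mul, Finset.Nat.sum_antidiagonal_eq_sum_range_succ_mk, autocorr,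
    show (n - 1 + m).succ = m + n by omega, Finset.sum_range_add, Finset.sum_eq_zero, zero_add,
    map_sum]
  · symm
    rw [← Finset.sum_subset (Finset.range_subset_range.2 (Nat.sub_le n m))]
    · refine Finset.sum_congr rfl fun i hi => ?_
      rw [Finset.mem_range] at hi
      simp only [coeff_sp, coeff_sq hn, map_mul, Complex.conj_conj]
      rw [mul_comm]
      congr 3
      · push_cast; ring
      · omega
    · intro i hi hi'
      rw [Finset.mem_range] at hi hi'
      simp only [coeff_sp]
      rw [extZ_ge _ (by omega), zero_mul]
  · intro i hi
    rw [Finset.mem_range] at hi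
    simp only [coeff_sq hn]
    rw [extZ_neg _ (by omega), map_zero, mul_zero]

theorem autocorr_ge {n : ℕ} (x : Fin n → ℂ) (m : ℕ) (h : n ≤ m) : autocorr x m = 0 := by
  rw [autocorr, Nat.sub_eq_zero_of_le h]; simp

theorem prod_eq {n : ℕ} (hn : 1 ≤ n) (x y : Fin n → ℂ)
    (h : ∀ m : Fin n, autocorr x (m : ℕ) = autocorr y m) : sp x * sqr x = sp y * sqr y := by
  ext k
  by_cases hk : k ≤ n - 1
  · rw [show k = n - 1 - (n - 1 - k) by omega, coeff_low hn _ _ (by omega),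
      coeff_low hn _ _ (by omega)]
    exact h ⟨n - 1 - k, by omega⟩
  · rw [show k = n - 1 + (k - (n - 1)) by omega, coeff_high hn, coeff_high hn]
    congr 1
    by_cases h' : k - (n - 1) < n
    · exact h ⟨_, h'⟩
    · rw [autocorr_ge _ _ (by omega), autocorr_ge _ _ (by omega)]

theorem nzr_prod {n : ℕ} (x : Fin n → ℂ) (hx : x ≠ 0) :
    nzr (sp x * sqr x) = nzr (sp x) + (nzr (sp x)).map sg := by
  have h1 := sp_ne_zero x hx
  have h2 : sqr x ≠ 0 := by
    rw [sqr, Ne, reflect_eq_zero_iff, Polynomial.map_eq_zero]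
    exact h1
  rw [nzr_mul (mul_ne_zero h1 h2)]
  congr 1
  exact nzr_star _ _ h1 (natDegree_sp x)

theorem autocorr_zero {n : ℕ} (x : Fin n → ℂ) :
    autocorr x 0 = ∑' j : ℤ, ((‖extZ x j‖ ^ 2 : ℝ) : ℂ) := by
  rw [tsum_eq_sum (s := (Finset.range n).map Nat.castEmbedding)]
  · rw [Finset.sum_map, autocorr]
    refine Finset.sum_congr (by simp) fun i _ => ?_
    simp [Complex.mul_conj, Complex.normSq_eq_norm_sq]
  · intro j hj
    have : j < 0 ∨ (n : ℤ) ≤ j := by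
      by_contra hc
      push Not at hc
      apply hj
      rw [Finset.mem_map]
      refine ⟨j.toNat, Finset.mem_range.2 (by omega), ?_⟩
      simp [hc.1]
    rcases this with h | h
    · simp [extZ_neg x h]
    · simp [extZ_ge x h]

theorem eq_zero_of_autocorr {n : ℕ} (x : Fin n → ℂ) (h : autocorr x 0 = 0) : x = 0 := by
  have h' : ∑ j ∈ Finset.range n, ‖extZ x (j : ℤ)‖ ^ 2 = 0 := by
    have : autocorr x 0 = ((∑ j ∈ Finset.range n, ‖extZ x (j : ℤ)‖ ^ 2 : ℝ) : ℂ) := by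
      rw [autocorr]
      push_cast
      refine Finset.sum_congr (by simp) fun i _ => ?_
      simp [Complex.mul_conj, Complex.normSq_eq_norm_sq]
    rw [this] at h
    exact_mod_cast h
  rw [Finset.sum_eq_zero_iff_of_nonneg (fun _ _ => by positivity)] at h'
  funext i
  have := h' i (Finset.mem_range.2 i.2)
  rw [extZ, dif_pos ⟨by omega, by omega⟩] at this
  simpa using this

theorem equiv_of_nzr {n : ℕ} (x y : Fin n → ℂ) (hx : x ≠ 0)
    (h0 : autocorr x 0 = autocorr y 0) (h : nzr (sp x) = nzr (sp y)) : equivSig x y := by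
  have hx0 : autocorr x 0 ≠ 0 := fun hh => hx (eq_zero_of_autocorr x hh)
  obtain ⟨k, hk⟩ := decomp (sp x)
  obtain ⟨l, hl⟩ := decomp (sp y)
  have hc : (sp x).leadingCoeff ≠ 0 := leadingCoeff_ne_zero.2 (sp_ne_zero x hx)
  rw [← h] at hl
  generalize ((nzr (sp x)).map (fun s => X - C s)).prod = M at hk hl
  generalize (sp x).leadingCoeff = c at hk hc
  generalize (sp y).leadingCoeff = d at hl
  have gen : ∀ (z : Fin n → ℂ) (c : ℂ) (k : ℕ), sp z = C c * X ^ k * M → ∀ j : ℤ,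
      extZ z j = c * (if 0 ≤ j - k then M.coeff (j - k).toNat else 0) := by
    intro z c k hz j
    by_cases hj : 0 ≤ j
    · lift j to ℕ using hj
      rw [← coeff_sp, hz, mul_assoc, coeff_C_mul, coeff_X_pow_mul']
      by_cases hkj : k ≤ j
      · rw [if_pos hkj, if_pos (by omega)]
        congr 2; omega
      · rw [if_neg hkj, if_neg (by omega)]
    · rw [extZ_neg _ (by omega), if_neg (by omega), mul_zero]
  have gx := gen x c k hk
  have gy := gen y d l hl
  have main : ∀ j : ℤ, extZ y j = (d / c) * extZ x (j - ((l : ℤ) - k)) := by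
    intro j
    rw [gx, gy, show j - ((l : ℤ) - k) - k = j - l by ring]
    field_simp
  refine ⟨d / c, (l : ℤ) - k, ?_, Or.inl main⟩
  have e : autocorr y 0 = ((‖d / c‖ ^ 2 : ℝ) : ℂ) * autocorr x 0 := by
    rw [autocorr_zero y, autocorr_zero x,
      ← (Equiv.subRight ((l : ℤ) - k)).tsum_eq (fun j => ((‖extZ x j‖ ^ 2 : ℝ) : ℂ)),
      ← tsum_mul_left]
    refine tsum_congr fun j => ?_
    rw [main j, norm_mul, mul_pow, Complex.ofReal_mul]
    rfl
  rw [← h0] at e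
  have e1 : ((‖d / c‖ ^ 2 : ℝ) : ℂ) = 1 := (mul_eq_right₀ hx0).1 e.symm
  have e2 : ‖d / c‖ ^ 2 = 1 := by exact_mod_cast e1
  exact (pow_eq_one_iff_of_nonneg (norm_nonneg _) two_ne_zero).1 e2

/-- If `a ∈ ℂⁿ` is the autocorrelation of some signal `x₀ ∈ ℂⁿ`, then there is a set `S` of
at most `2ⁿ` signals such that every signal with autocorrelation `a` is equivalent (up to
time-shift, conjugate-flip and global phase) to a member of `S`. -/
theorem autocorrelation_at_most_two_pow_solutions
    (n : ℕ) (hn : 1 ≤ n) (a : Fin n → ℂ) (x₀ : Fin n → ℂ)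
    (ha : ∀ m : Fin n, autocorr x₀ (m : ℕ) = a m) :
    ∃ S : Finset (Fin n → ℂ), S.card ≤ 2 ^ n ∧
      ∀ x : Fin n → ℂ, (∀ m : Fin n, autocorr x (m : ℕ) = a m) →
        ∃ y ∈ S, equivSig x y := by
  classical
  by_cases hx₀ : x₀ = 0
  · refine ⟨{x₀}, by simpa using Nat.one_le_two_pow, fun x hx => ⟨x₀, by simp, ?_⟩⟩
    have : x = x₀ := by
      rw [hx₀]
      apply eq_zero_of_autocorr
      have h1 := hx ⟨0, hn⟩
      rw [← ha] at h1
      simp only at h1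
      rw [h1, hx₀]
      simp [autocorr, extZ]
    exact ⟨1, 0, by simp, Or.inl fun j => by simp [this]⟩
  let f : Multiset ℂ → (Fin n → ℂ) := fun M =>
    if h : ∃ y : Fin n → ℂ, (∀ m : Fin n, autocorr y (m : ℕ) = a m) ∧ nzr (sp y) = M
    then h.choose else 0
  refine ⟨(cands (nzr (sp x₀)).toList).image f, ?_, ?_⟩
  · refine Finset.card_image_le.trans ((card_cands _).trans (Nat.pow_le_pow_right (by norm_num) ?_))
    rw [Multiset.length_toList]
    have h1 : (nzr (sp x₀)).card ≤ (sp x₀).roots.card :=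
      Multiset.card_le_card (Multiset.filter_le _ _)
    have h2 := card_roots' (sp x₀)
    have h3 := natDegree_sp x₀
    omega
  · intro x hx
    have hxn : x ≠ 0 := by
      intro h
      apply hx₀
      apply eq_zero_of_autocorr
      have h1 := ha ⟨0, hn⟩
      rw [← hx] at h1
      simp only at h1
      rw [h1, h]
      simp [autocorr, extZ]
    refine ⟨f (nzr (sp x)), Finset.mem_image_of_mem _ (mem_cands _ _ ?_), ?_⟩
    · rw [Multiset.coe_toList, ← nzr_prod x hxn, ← nzr_prod x₀ hx₀,
        prod_eq hn x x₀ fun m => by rw [hx, ha]]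
    · have hex : ∃ y : Fin n → ℂ, (∀ m : Fin n, autocorr y (m : ℕ) = a m) ∧
          nzr (sp y) = nzr (sp x) := ⟨x, hx, rfl⟩
      have hf : f (nzr (sp x)) = hex.choose := dif_pos hex
      rw [hf]
      have h1 := hex.choose_spec.1 ⟨0, hn⟩
      rw [← hx] at h1
      exact equiv_of_nzr x _ hxn h1.symm hex.choose_spec.2.symm
end

section
/- Let n ≥ 4, let k satisfy 3 ≤ k ≤ n−1, and let S ⊆ {0,…,n−1} with |S| = k be a support set that is aperiodic, i.e., S is not an arithmetic progression {a, a+d, a+2d, …, a+(k−1)d}. For c ∈ ℂ^S, let x(c) ∈ ℂⁿ be the signal with x(c)_i = c_i for i ∈ S and x(c)_i = 0 otherwise. Then the set of c ∈ (ℂ\{0})^S for which there exists a signal x′ ∈ ℂⁿ with at most k nonzero entries whose autocorrelation equals that of x(c) and which is not equivalent to x(c), has Lebesgue measure zero in ℂ^S ≅ ℂᵏ. -/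
open MeasureTheory

/-- The signal of length `n` with values `c` on the support `S` and `0` elsewhere. -/
noncomputable def sigOn {n : ℕ} (S : Finset ℕ) (c : ↥S → ℂ) : Fin n → ℂ :=
  fun i => if h : (i : ℕ) ∈ S then c ⟨(i : ℕ), h⟩ else 0



lemma aps_null (n : ℕ) : ∀ p : MvPolynomial (Fin n) ℂ, p ≠ 0 →
    volume {x : Fin n → ℝ | MvPolynomial.eval (fun i => (x i : ℂ)) p = 0} = 0 := by
  induction n with
  | zero =>
    intro p hp
    have : {x : Fin 0 → ℝ | MvPolynomial.eval (fun i => (x i : ℂ)) p = 0} = ∅ := by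
      ext x
      simp only [Set.mem_ofPred_eq, Set.mem_empty_iff_false, iff_false]
      intro h
      apply hp
      apply MvPolynomial.funext
      intro y
      rw [map_zero, ← h]
      congr 2
      exact Subsingleton.elim _ _
    rw [this, measure_empty]
  | succ n ih =>
    intro p hp
    have hcont : Continuous fun x : Fin (n+1) → ℝ => MvPolynomial.eval (fun i => (x i : ℂ)) p := by
      have := MvPolynomial.continuous_eval p
      fun_prop
    have hmeas : MeasurableSet {x : Fin (n+1) → ℝ | MvPolynomial.eval (fun i => (x i : ℂ)) p = 0} :=
      (isClosed_eq hcont continuous_const).measurableSet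
    have hmp := (volume_preserving_piFinSuccAbove (fun _ : Fin (n + 1) => ℝ) 0).symm
    rw [← hmp.measure_preimage hmeas.nullMeasurableSet, Measure.volume_eq_prod,
      Measure.measure_prod_null (hmp.measurable hmeas)]
    set P := MvPolynomial.finSuccEquiv ℂ n p with hP
    have hP0 : P ≠ 0 := by
      rw [hP]; simpa using hp
    have hfin : {x : ℝ | Polynomial.eval (MvPolynomial.C (x : ℂ)) P = 0}.Finite := by
      have h1 := Polynomial.finite_setOfPred_isRoot hP0
      refine (h1.preimage (f := fun x : ℝ => (MvPolynomial.C (x : ℂ) : MvPolynomial (Fin n) ℂ)) ?_)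
      intro x _ y _ hxy
      exact_mod_cast MvPolynomial.C_injective _ _ hxy
    have hae : ∀ᵐ x : ℝ, x ∉ {x : ℝ | Polynomial.eval (MvPolynomial.C (x : ℂ)) P = 0} :=
      hfin.countable.ae_notMem _
    filter_upwards [hae] with x hx
    refine Eq.trans (congrArg _ ?_) (ih _ hx)
    ext y
    simp only [Set.mem_preimage, Set.mem_ofPred_eq]
    have hcons : (fun i => (((MeasurableEquiv.piFinSuccAbove (fun _ : Fin (n+1) => ℝ) 0).symm
        (x, y) i : ℝ) : ℂ)) = (Fin.cons (x : ℂ) (fun i => (y i : ℂ)) : Fin (n+1) → ℂ) := by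
      ext i
      refine Fin.cases ?_ (fun i => ?_) i <;>
        simp [MeasurableEquiv.piFinSuccAbove, Fin.insertNthEquiv]
    rw [hcons, MvPolynomial.eval_eq_eval_mv_eval', Polynomial.eval_map]
    have h0 := Polynomial.hom_eval₂ P (RingHom.id _)
      (MvPolynomial.eval (fun i => (y i : ℂ))) (MvPolynomial.C (x : ℂ))
    rw [MvPolynomial.eval_C, RingHom.comp_id] at h0
    rw [← h0]
    rfl

lemma aps_generic {ι : Type*} [Fintype ι] (K : Type*) [Field K] [Countable K] [Algebra K ℂ] :
    volume {c : ι → ℂ | ¬ AlgebraicIndependent K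
      (Sum.elim c (fun i => (starRingEnd ℂ) (c i)))} = 0 := by
  classical
  have hcount : Countable (MvPolynomial (ι ⊕ ι) K) := by
    rw [← Cardinal.mk_le_aleph0_iff]
    refine (MvPolynomial.cardinalMk_le_max_lift (σ := ι ⊕ ι) (R := K)).trans ?_
    simp
  have hsub : {c : ι → ℂ | ¬ AlgebraicIndependent K
      (Sum.elim c (fun i => (starRingEnd ℂ) (c i)))} ⊆
      ⋃ p : {p : MvPolynomial (ι ⊕ ι) K // p ≠ 0},
        {c | MvPolynomial.aeval (Sum.elim c (fun i => (starRingEnd ℂ) (c i))) p.1 = 0} := by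
    intro c hc
    simp only [Set.mem_ofPred_eq, algebraicIndependent_iff] at hc
    push Not at hc
    obtain ⟨p, hp, hp0⟩ := hc
    exact Set.mem_iUnion.2 ⟨⟨p, hp0⟩, hp⟩
  refine measure_mono_null hsub (measure_iUnion_null ?_)
  rintro ⟨p, hp0⟩
  let e := Fintype.equivFin (ι ⊕ ι)
  let L : (Fin (Fintype.card (ι ⊕ ι)) → ℝ) ≃ₗ[ℝ] (ι → ℂ) :=
    { toFun := fun w i => (w (e (Sum.inl i)) : ℂ) + w (e (Sum.inr i)) * Complex.I
      invFun := fun c j => Sum.elim (fun i => (c i).re) (fun i => (c i).im) (e.symm j)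
      map_add' := by intro x y; ext i; simp; ring
      map_smul' := by intro r x; ext i; simp; ring
      left_inv := by
        intro w; ext j
        obtain ⟨s, rfl⟩ := e.surjective j
        rcases s with s | s <;> simp
      right_inv := by intro c; ext i; simp }
  let Lc := L.toContinuousLinearEquiv
  have hHaar : (Measure.map Lc volume).IsAddHaarMeasure := Lc.isAddHaarMeasure_map volume
  have hac : (volume : Measure (ι → ℂ)) ≪ Measure.map Lc volume :=
    Measure.absolutelyContinuous_isAddHaarMeasure _ _
  apply hac
  have hmeas : MeasurableSet {c : ι → ℂ |
      MvPolynomial.aeval (Sum.elim c (fun i => (starRingEnd ℂ) (c i))) p = 0} := by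
    have hcont : Continuous fun c : ι → ℂ =>
        MvPolynomial.aeval (Sum.elim c (fun i => (starRingEnd ℂ) (c i))) p := by
      have h1 : ∀ c : ι → ℂ, MvPolynomial.aeval (Sum.elim c (fun i => (starRingEnd ℂ) (c i))) p =
        MvPolynomial.eval (Sum.elim c (fun i => (starRingEnd ℂ) (c i)))
          (MvPolynomial.map (algebraMap K ℂ) p) := by
        intro c
        rw [MvPolynomial.eval_map]; rfl
      simp_rw [h1]
      refine (MvPolynomial.continuous_eval _).comp (continuous_pi ?_)
      rintro (i | i)
      · exact continuous_apply i
      · exact Complex.continuous_conj.comp (continuous_apply i)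
    exact (isClosed_eq hcont continuous_const).measurableSet
  rw [Measure.map_apply Lc.continuous.measurable hmeas]
  let θ : ι ⊕ ι → MvPolynomial (Fin (Fintype.card (ι ⊕ ι))) ℂ :=
    Sum.elim (fun i => MvPolynomial.X (e (Sum.inl i)) + MvPolynomial.C Complex.I * MvPolynomial.X (e (Sum.inr i)))
      (fun i => MvPolynomial.X (e (Sum.inl i)) - MvPolynomial.C Complex.I * MvPolynomial.X (e (Sum.inr i)))
  let q := MvPolynomial.aeval θ p
  have hq : ∀ z : Fin (Fintype.card (ι ⊕ ι)) → ℂ, MvPolynomial.eval z q =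
      MvPolynomial.aeval (fun s => MvPolynomial.eval z (θ s)) p := by
    intro z
    simp only [q, MvPolynomial.aeval_def]
    rw [← MvPolynomial.coe_eval₂Hom, ← MvPolynomial.coe_eval₂Hom,
      MvPolynomial.map_eval₂Hom (algebraMap K (MvPolynomial _ ℂ)) θ (MvPolynomial.eval z)]
    congr 2
    ext r
    exact MvPolynomial.eval_C _
  have hq0 : q ≠ 0 := by
    intro h
    apply hp0
    have : MvPolynomial.map (algebraMap K ℂ) p = 0 := by
      apply MvPolynomial.funext
      intro w
      rw [map_zero, MvPolynomial.eval_map]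
      let z : Fin (Fintype.card (ι ⊕ ι)) → ℂ := fun j =>
        Sum.elim (fun i => (w (Sum.inl i) + w (Sum.inr i)) / 2)
          (fun i => (w (Sum.inl i) - w (Sum.inr i)) / (2 * Complex.I)) (e.symm j)
      have h1 := hq z
      rw [h, map_zero] at h1
      have h2 : (fun s => MvPolynomial.eval z (θ s)) = w := by
        ext s
        rcases s with i | i
        · simp only [θ, z, Sum.elim_inl, map_add, map_mul, MvPolynomial.eval_X, MvPolynomial.eval_C,
            Equiv.symm_apply_apply, Sum.elim_inr]
          field_simp [Complex.I_ne_zero]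
          ring
        · simp only [θ, z, Sum.elim_inl, map_sub, map_mul, MvPolynomial.eval_X, MvPolynomial.eval_C,
            Equiv.symm_apply_apply, Sum.elim_inr]
          field_simp [Complex.I_ne_zero]
          ring
      rw [h2] at h1
      exact h1.symm
    exact MvPolynomial.map_injective _ (algebraMap K ℂ).injective (by rw [this, map_zero])
  refine Eq.trans (congrArg _ ?_) (aps_null _ q hq0)
  ext x
  simp only [Set.mem_preimage, Set.mem_ofPred_eq, hq]
  have : (Sum.elim (Lc x) (fun i => (starRingEnd ℂ) (Lc x i))) =
      fun s => MvPolynomial.eval (fun i => (x i : ℂ)) (θ s) := by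
    ext s
    rcases s with i | i
    · simp [θ, Lc, L, mul_comm]
    · simp [θ, Lc, L, mul_comm]; ring
  rw [this]


lemma aps_linDisj_int {K F E ι τ : Type*} [Field K] [IsAlgClosed K] [Field F] [Field E]
    [Algebra K F] [Algebra K E] [Algebra F E] [IsScalarTower K F E]
    (d : ι → E) (hd : AlgebraicIndependent F d) [Fintype τ]
    (f : τ → F) (hf : LinearIndependent K f) (g : τ → E)
    (hg : ∀ t, (MvPolynomial.aeval d : MvPolynomial ι K →ₐ[K] E).toRingHom.IsIntegralElem (g t))
    (h : ∑ t, f t • g t = 0) (t : τ) : g t = 0 := by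
  classical
  by_contra hgt
  let _ : Algebra (MvPolynomial ι K) E :=
    (MvPolynomial.aeval d : MvPolynomial ι K →ₐ[K] E).toRingHom.toAlgebra
  let _ : Algebra (MvPolynomial ι F) E :=
    (MvPolynomial.aeval d : MvPolynomial ι F →ₐ[F] E).toRingHom.toAlgebra
  have algK : ∀ r : MvPolynomial ι K, algebraMap (MvPolynomial ι K) E r = MvPolynomial.aeval d r :=
    fun r => rfl
  have algF : ∀ r : MvPolynomial ι F, algebraMap (MvPolynomial ι F) E r = MvPolynomial.aeval d r :=
    fun r => rfl
  have algKF : ∀ r : MvPolynomial ι K, algebraMap (MvPolynomial ι F) E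
      (MvPolynomial.map (algebraMap K F) r) = algebraMap (MvPolynomial ι K) E r := by
    intro r
    rw [algK, algF, MvPolynomial.aeval_map_algebraMap]
  have injF : Function.Injective (algebraMap (MvPolynomial ι F) E) := hd
  have injK : Function.Injective (algebraMap (MvPolynomial ι K) E) := by
    intro x y hxy
    rw [← algKF, ← algKF] at hxy
    exact MvPolynomial.map_injective _ (algebraMap K F).injective (injF hxy)
  have hgi : ∀ t, IsIntegral (MvPolynomial ι K) (g t) := hg
  let T0 := integralClosure (MvPolynomial ι K) E
  let T := integralClosure (MvPolynomial ι F) E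
  have hT : ∀ x : E, x ∈ T0 → x ∈ T := by
    intro x hx
    obtain ⟨p, hp, hpx⟩ := (hx : IsIntegral (MvPolynomial ι K) x)
    refine ⟨p.map (MvPolynomial.map (algebraMap K F)), hp.map _, ?_⟩
    rw [Polynomial.eval₂_map]
    refine Eq.trans ?_ hpx
    congr 1
    exact RingHom.ext algKF
  let j : T0 →+* T := (T0.toSubring.subtype).codRestrict T.toSubring (fun x => hT _ x.2)
  have hj : ∀ x : T0, ((j x : T) : E) = x := fun x => rfl
  -- nonzero multiple
  let G : τ → T0 := fun t => ⟨g t, hgi t⟩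
  have hG0 : G t ≠ 0 := fun h0 => hgt (congrArg Subtype.val h0)
  have hinjT0 : Function.Injective (algebraMap (MvPolynomial ι K) T0) := by
    intro x y hxy
    exact injK (congrArg Subtype.val hxy)
  have hGalg : IsAlgebraic (MvPolynomial ι K) (G t) := by
    obtain ⟨p, hp, hpx⟩ := hgi t
    refine ⟨p, hp.ne_zero, ?_⟩
    apply Subtype.ext
    have : ((Polynomial.aeval (G t) p : T0) : E) = Polynomial.aeval (g t) p := by
      exact (Polynomial.aeval_algHom_apply T0.val (G t) p).symm
    rw [this]
    exact hpx
  obtain ⟨r, hr, q, hq⟩ := hGalg.exists_nonzero_dvd (mem_nonZeroDivisors_of_ne_zero hG0)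
  obtain ⟨d0, hd0⟩ : ∃ d0 : ι → K, MvPolynomial.eval d0 r ≠ 0 := by
    by_contra hc
    push Not at hc
    have _ : Infinite K := IsAlgClosed.instInfinite
    exact hr (MvPolynomial.funext (fun x => by rw [hc x, map_zero]))
  let ev : MvPolynomial ι F →+* F := MvPolynomial.eval (fun i => algebraMap K F (d0 i))
  have hevs : Function.Surjective ev := fun x => ⟨MvPolynomial.C x, by simp [ev]⟩
  have hmax : (RingHom.ker ev).IsMaximal := RingHom.ker_isMaximal_of_surjective ev hevs
  obtain ⟨M, hM, hMc⟩ := Ideal.exists_ideal_over_maximal_of_isIntegral (S := T) (RingHom.ker ev) (by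
    have : RingHom.ker (algebraMap (MvPolynomial ι F) T) = ⊥ := by
      rw [← RingHom.injective_iff_ker_eq_bot]
      intro x y hxy
      exact injF (congrArg Subtype.val hxy)
    rw [this]; exact bot_le)
  let _ : Field (T ⧸ M) := Ideal.Quotient.field M
  let φ : T →+* T ⧸ M := Ideal.Quotient.mk M
  let ψ : F →+* T ⧸ M := (φ.comp (algebraMap (MvPolynomial ι F) T)).comp MvPolynomial.C
  have key1 : ∀ r : MvPolynomial ι F, φ (algebraMap (MvPolynomial ι F) T r) = ψ (ev r) := by
    intro r
    have : r - MvPolynomial.C (ev r) ∈ RingHom.ker ev := by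
      rw [RingHom.mem_ker]; simp [ev]
    rw [← hMc, Ideal.mem_comap, map_sub] at this
    exact (Ideal.Quotient.eq).2 this
  have key : ∀ r : MvPolynomial ι K, φ (j (algebraMap (MvPolynomial ι K) T0 r)) =
      ψ (algebraMap K F (MvPolynomial.eval d0 r)) := by
    intro r
    have h1 : j (algebraMap (MvPolynomial ι K) T0 r) =
        algebraMap (MvPolynomial ι F) T (MvPolynomial.map (algebraMap K F) r) := by
      apply Subtype.ext
      exact (algKF r).symm
    rw [h1, key1]
    congr 1
    simp only [ev, MvPolynomial.eval_map]
    exact (MvPolynomial.eval₂_comp (algebraMap K F) d0 r).symm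
  let _ : Algebra K (T ⧸ M) := (ψ.comp (algebraMap K F)).toAlgebra
  have inK : ∀ x : T0, ∃ k : K, φ (j x) = ψ (algebraMap K F k) := by
    intro x
    obtain ⟨p, hp, hpx⟩ := x.2
    have hintg : IsIntegral K (φ (j x)) := by
      refine ⟨p.map (MvPolynomial.eval d0), hp.map _, ?_⟩
      have hpx' : Polynomial.eval₂ (algebraMap (MvPolynomial ι K) T0) x p = 0 := by
        apply Subtype.ext
        have := Polynomial.hom_eval₂ p (algebraMap (MvPolynomial ι K) T0) T0.toSubring.subtype x
        exact this.trans hpx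
      have h2 := Polynomial.hom_eval₂ p (algebraMap (MvPolynomial ι K) T0) (φ.comp j) x
      rw [hpx', map_zero] at h2
      rw [Polynomial.eval₂_map]
      refine Eq.trans ?_ h2.symm
      congr 1
      exact RingHom.ext fun r => (key r).symm
    obtain ⟨k, hk⟩ := minpoly.mem_range_of_degree_eq_one K _
      (IsAlgClosed.degree_eq_one_of_irreducible K (minpoly.irreducible hintg))
    exact ⟨k, hk.symm⟩
  choose k hk using fun s => inK (G s)
  have hsum : ∑ s, algebraMap (MvPolynomial ι F) T (MvPolynomial.C (f s)) * j (G s) = 0 := by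
    apply Subtype.ext
    refine Eq.trans ?_ h
    have : ∀ s, (((algebraMap (MvPolynomial ι F) T (MvPolynomial.C (f s)) * j (G s) : T)) : E)
        = f s • g s := by
      intro s
      rw [Algebra.smul_def]
      have : ((algebraMap (MvPolynomial ι F) T (MvPolynomial.C (f s)) : T) : E) =
        algebraMap F E (f s) := by
        change algebraMap (MvPolynomial ι F) E _ = _
        rw [algF]; simp
      rw [← this]; rfl
    rw [← Finset.sum_congr rfl (fun s _ => this s)]
    exact map_sum T.val _ _
  have h3 := congrArg φ hsum
  rw [map_sum, map_zero] at h3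
  have h4 : ψ (∑ s, k s • f s) = 0 := by
    rw [map_sum, ← h3]
    refine Finset.sum_congr rfl fun s _ => ?_
    rw [map_mul, hk, Algebra.smul_def, map_mul, mul_comm]
    rfl
  have h5 : ∑ s, k s • f s = 0 := by
    rw [← map_zero ψ] at h4
    exact ψ.injective h4
  have h6 : k t = 0 := (Fintype.linearIndependent_iff.1 hf) k h5 t
  have h7 := congrArg (fun x => φ (j x)) hq
  simp only [map_mul] at h7
  rw [key, hk, h6, map_zero, map_zero, zero_mul] at h7
  rw [← map_zero ψ] at h7
  have h8 := ψ.injective h7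
  rw [← map_zero (algebraMap K F)] at h8
  exact hd0 ((algebraMap K F).injective h8)

lemma aps_linDisj {K F E ι τ : Type*} [Field K] [IsAlgClosed K] [Field F] [Field E]
    [Algebra K F] [Algebra K E] [Algebra F E] [IsScalarTower K F E]
    (d : ι → E) (hd : AlgebraicIndependent F d) [Fintype τ]
    (f : τ → F) (hf : LinearIndependent K f) (g : τ → E)
    (hg : ∀ t, IsAlgebraic (Algebra.adjoin K (Set.range d)) (g t))
    (h : ∑ t, f t • g t = 0) (t : τ) : g t = 0 := by
  classical
  have hdK : AlgebraicIndependent K d := hd.restrictScalars (algebraMap K F).injective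
  choose y hy hyi using fun t => (hg t).exists_integral_multiple
  let Y : Algebra.adjoin K (Set.range d) := ∏ t, y t
  have hY : Y ≠ 0 := Finset.prod_ne_zero_iff.2 fun t _ => hy t
  have hYi : ∀ t, IsIntegral (Algebra.adjoin K (Set.range d)) (Y • g t) := by
    intro t
    have : Y • g t = (∏ s ∈ Finset.univ.erase t, y s) • (y t • g t) := by
      rw [smul_smul, Finset.prod_erase_mul _ _ (Finset.mem_univ t)]
    rw [this]
    exact (hyi t).smul _
  have h0 := aps_linDisj_int (K := K) d hd f hf (fun t => Y • g t) (by
      intro t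
      obtain ⟨p, hp, hpx⟩ := hYi t
      refine ⟨p.map (hdK.aevalEquiv.symm : _ →+* MvPolynomial _ K), hp.map _, ?_⟩
      rw [Polynomial.eval₂_map]
      convert hpx using 2
      ext1 r
      have := hdK.algebraMap_aevalEquiv (hdK.aevalEquiv.symm r)
      rw [AlgEquiv.apply_symm_apply] at this
      exact this.symm) (by
      have : ∑ t, f t • Y • g t = Y • ∑ t, f t • g t := by
        rw [Finset.smul_sum]
        refine Finset.sum_congr rfl fun t _ => ?_
        simp only [Algebra.smul_def]
        ring
      rw [this, h, smul_zero]) t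
  exact (smul_eq_zero.1 h0).resolve_left hY

lemma aps_trans {K E ι τ : Type} [Field K] [Field E] [Algebra K E] [Fintype ι] [Fintype τ]
    (c : ι → E) (hc : AlgebraicIndependent K c) (y : τ → E)
    (h : ∀ s, c s ∈ Algebra.adjoin K (Set.range y)) (hcard : Fintype.card τ ≤ Fintype.card ι) :
    AlgebraicIndependent K y ∧ Fintype.card τ = Fintype.card ι := by
  set T := Algebra.adjoin K (Set.range y) with hT
  let c' : ι → T := fun s => ⟨c s, h s⟩
  let y' : τ → T := fun t => ⟨y t, Algebra.subset_adjoin ⟨t, rfl⟩⟩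
  have hc' : AlgebraicIndependent K c' := by
    refine AlgebraicIndependent.of_comp T.val ?_
    exact hc
  have htop : Algebra.adjoin K (Set.range y') = ⊤ := by
    have h1 : Subtype.val '' (Set.range y') = Set.range y := by
      rw [← Set.range_comp]; rfl
    apply Subalgebra.map_injective (f := T.val) Subtype.val_injective
    rw [AlgHom.map_adjoin, Algebra.map_top, Subalgebra.range_val]
    exact congrArg (Algebra.adjoin K) h1
  have halg : Algebra.IsAlgebraic (Algebra.adjoin K (Set.range y')) T := by
    constructor
    intro x
    have hx : x ∈ Algebra.adjoin K (Set.range y') := by rw [htop]; trivial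
    exact isAlgebraic_algebraMap (⟨x, hx⟩ : Algebra.adjoin K (Set.range y'))
  have hle := hc'.lift_cardinalMk_le_trdeg
  have hb : IsTranscendenceBasis K y' := by
    apply Algebra.IsAlgebraic.isTranscendenceBasis_of_lift_le_trdeg_of_finite
    simp only [Cardinal.mk_fintype, Cardinal.lift_id] at hle ⊢
    exact le_trans (Nat.cast_le.2 hcard) hle
  constructor
  · exact hb.1.map' (f := T.val) Subtype.val_injective
  · refine le_antisymm hcard ?_
    have h2 := hb.lift_cardinalMk_eq_trdeg
    simp only [Cardinal.mk_fintype, Cardinal.lift_id] at hle h2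
    rw [← h2] at hle
    exact_mod_cast hle

lemma aps_mono {K E σ ρ : Type*} [Field K] [Field E] [Algebra K E]
    (y : σ → E) (hy : AlgebraicIndependent K y) (f : ρ → (σ →₀ ℕ)) (hf : Function.Injective f) :
    LinearIndependent K (fun p => MvPolynomial.aeval y (MvPolynomial.monomial (f p) (1 : K))) := by
  have h1 : LinearIndependent K (fun p : ρ => MvPolynomial.monomial (f p) (1 : K)) := by
    have := (MvPolynomial.basisMonomials σ K).linearIndependent.comp f hf
    simpa [Function.comp_def] using this
  exact h1.map' (MvPolynomial.aeval y).toLinearMap (LinearMap.ker_eq_bot.2 hy)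

open scoped IntermediateField.algebraAdjoinAdjoin in
lemma aps_prod {K E ι κ I J : Type*} [Field K] [IsAlgClosed K] [Field E] [Algebra K E]
    [Finite I] [Finite J]
    (c : ι → E) (d : κ → E) (hcd : AlgebraicIndependent K (Sum.elim d c))
    (a : I → E) (ha : LinearIndependent K a)
    (ha' : ∀ i, IsAlgebraic (Algebra.adjoin K (Set.range c)) (a i))
    (b : J → E) (hb : LinearIndependent K b)
    (hb' : ∀ i, IsAlgebraic (Algebra.adjoin K (Set.range d)) (b i)) :
    LinearIndependent K (fun p : I × J => a p.1 * b p.2) := by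
  classical
  let _ := Fintype.ofFinite I
  let _ := Fintype.ofFinite J
  obtain ⟨-, h1⟩ := AlgebraicIndependent.sumElim_iff.1 hcd
  have : Algebra.IsAlgebraic (Algebra.adjoin K (Set.range c)) (IntermediateField.adjoin K (Set.range c)) :=
    IsLocalization.isAlgebraic _ (nonZeroDivisors (Algebra.adjoin K (Set.range c)))
  have h2 := h1.extendScalars (IntermediateField.adjoin K (Set.range c))
  have h3 := h2.extendScalars (algebraicClosure (IntermediateField.adjoin K (Set.range c)) E)
  rw [Fintype.linearIndependent_iff]
  intro g hg
  have hmem : ∀ i, a i ∈ algebraicClosure (IntermediateField.adjoin K (Set.range c)) E := by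
    intro i
    rw [mem_algebraicClosure_iff]
    exact (ha' i).extendScalars (FaithfulSMul.algebraMap_injective _ _)
  let a' : I → algebraicClosure (IntermediateField.adjoin K (Set.range c)) E := fun i => ⟨a i, hmem i⟩
  have hli : LinearIndependent K a' := by
    refine LinearIndependent.of_comp ((algebraicClosure (IntermediateField.adjoin K (Set.range c)) E).val.restrictScalars K).toLinearMap ?_
    exact ha
  have htow : IsScalarTower K (algebraicClosure (IntermediateField.adjoin K (Set.range c)) E) E :=
    IsScalarTower.of_algebraMap_eq (fun x => rfl)
  have key := aps_linDisj d h3 a' hli (fun i => ∑ j, g (i, j) • b j) ?_ ?_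
  · rintro ⟨i, j⟩
    exact Fintype.linearIndependent_iff.1 hb _ (key i) j
  · intro i
    refine Subalgebra.sum_mem (Subalgebra.algebraicClosure (Algebra.adjoin K (Set.range d)) E) ?_
    intro j _
    rw [← algebraMap_smul (Algebra.adjoin K (Set.range d)) (g (i, j)) (b j)]
    exact (hb' j).smul _
  · rw [← hg, Fintype.sum_prod_type]
    refine Finset.sum_congr rfl fun i _ => ?_
    rw [Finset.smul_sum]
    refine Finset.sum_congr rfl fun j _ => ?_
    change a i * (g (i,j) • b j) = _
    rw [mul_smul_comm]

open scoped Pointwise in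
lemma aps_rank (I J : Finset ℕ) (hIJ : (I + J).card ≤ I.card + J.card - 1)
    (i : Fin I.card) (j : Fin J.card) :
    ((I + J).filter (· < I.orderEmbOfFin rfl i + J.orderEmbOfFin rfl j)).card = (i : ℕ) + j := by
  classical
  set α := I.orderEmbOfFin rfl
  set β := J.orderEmbOfFin rfl
  have hα : ∀ i, α i ∈ I := fun i => I.orderEmbOfFin_mem rfl i
  have hβ : ∀ i, β i ∈ J := fun i => J.orderEmbOfFin_mem rfl i
  have h1 := cauchy_davenport_add_of_linearOrder_isCancelAdd
    (s := (Finset.Iic i).map α.toEmbedding) (t := (Finset.Iic j).map β.toEmbedding)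
    (by simp) (by simp)
  have h2 := cauchy_davenport_add_of_linearOrder_isCancelAdd
    (s := (Finset.Ici i).map α.toEmbedding) (t := (Finset.Ici j).map β.toEmbedding)
    (by simp) (by simp)
  simp only [Finset.card_map, Fin.card_Iic, Fin.card_Ici] at h1 h2
  have h3 : (Finset.Iic i).map α.toEmbedding + (Finset.Iic j).map β.toEmbedding ⊆
      insert (α i + β j) ((I + J).filter (· < α i + β j)) := by
    intro x hx
    obtain ⟨y, hy, z, hz, rfl⟩ := Finset.mem_add.1 hx
    obtain ⟨y, hy', rfl⟩ := Finset.mem_map.1 hy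
    obtain ⟨z, hz', rfl⟩ := Finset.mem_map.1 hz
    have e1 : α y ≤ α i := α.monotone (Finset.mem_Iic.1 hy')
    have e2 : β z ≤ β j := β.monotone (Finset.mem_Iic.1 hz')
    have := Finset.add_mem_add (hα y) (hβ z)
    simp only [Finset.mem_insert, Finset.mem_filter, RelEmbedding.coe_toEmbedding]
    rcases (add_le_add e1 e2).eq_or_lt with h | h
    · exact Or.inl h
    · exact Or.inr ⟨this, h⟩
  have h4 : (Finset.Ici i).map α.toEmbedding + (Finset.Ici j).map β.toEmbedding ⊆
      ((I + J).filter (¬ · < α i + β j)) := by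
    intro x hx
    obtain ⟨y, hy, z, hz, rfl⟩ := Finset.mem_add.1 hx
    obtain ⟨y, hy', rfl⟩ := Finset.mem_map.1 hy
    obtain ⟨z, hz', rfl⟩ := Finset.mem_map.1 hz
    have e1 : α i ≤ α y := α.monotone (Finset.mem_Ici.1 hy')
    have e2 : β j ≤ β z := β.monotone (Finset.mem_Ici.1 hz')
    have := Finset.add_mem_add (hα y) (hβ z)
    simp only [Finset.mem_filter, RelEmbedding.coe_toEmbedding]
    exact ⟨this, not_lt.2 (add_le_add e1 e2)⟩
  have h5 := Finset.card_le_card h3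
  have h6 := Finset.card_le_card h4
  rw [Finset.card_insert_of_notMem (by simp)] at h5
  have h7 := Finset.card_filter_add_card_filter_not (s := I + J) (· < α i + β j)
  have := i.2
  have := j.2
  omega

open scoped Pointwise in
lemma aps_freiman (I J : Finset ℕ) (hI : 2 ≤ I.card) (hJ : 2 ≤ J.card)
    (hIJ : (I + J).card ≤ I.card + J.card - 1) :
    ∃ a d : ℕ, I + J = Finset.image (fun i => a + i * d) (Finset.range (I.card + J.card - 1)) := by
  classical
  have hr := aps_rank I J hIJ
  set α := I.orderEmbOfFin rfl with hαdef
  set β := J.orderEmbOfFin rfl with hβdef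
  have hα : ∀ i, α i ∈ I := fun i => I.orderEmbOfFin_mem rfl i
  have hβ : ∀ i, β i ∈ J := fun i => J.orderEmbOfFin_mem rfl i
  have key : ∀ (i i' : Fin I.card) (j j' : Fin J.card), (i : ℕ) + j = i' + j' →
      α i + β j = α i' + β j' := by
    have aux : ∀ (i i' : Fin I.card) (j j' : Fin J.card), (i : ℕ) + j = i' + j' →
      ¬ α i + β j < α i' + β j' := by
      intro i i' j j' h hlt
      have h1 := hr i j
      have h2 := hr i' j'
      have : ((I + J).filter (· < α i + β j)) ⊂ ((I + J).filter (· < α i' + β j')) := by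
        rw [Finset.ssubset_iff]
        refine ⟨α i + β j, by simp, ?_⟩
        intro x hx
        rcases Finset.mem_insert.1 hx with rfl | hx
        · exact Finset.mem_filter.2 ⟨Finset.add_mem_add (hα i) (hβ j), hlt⟩
        · have := Finset.mem_filter.1 hx
          exact Finset.mem_filter.2 ⟨this.1, this.2.trans hlt⟩
      have := Finset.card_lt_card this
      omega
    intro i i' j j' h
    exact le_antisymm (not_lt.1 (aux _ _ _ _ h.symm)) (not_lt.1 (aux _ _ _ _ h))
  let i0 : Fin I.card := ⟨0, by omega⟩
  let i1 : Fin I.card := ⟨1, by omega⟩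
  let j0 : Fin J.card := ⟨0, by omega⟩
  let j1 : Fin J.card := ⟨1, by omega⟩
  have hd0 : β j0 < β j1 := β.strictMono (by simp [j0, j1])
  obtain ⟨d, hd⟩ := Nat.exists_eq_add_of_lt hd0
  have hαd : ∀ (m : ℕ) (hm : m < I.card), α ⟨m, hm⟩ = α i0 + m * (d + 1) := by
    intro m
    induction m with
    | zero => intro hm; simp [i0]
    | succ m ih =>
      intro hm
      have h1 := key ⟨m + 1, hm⟩ ⟨m, by omega⟩ j0 j1 (by simp [j0, j1])
      have h2 := ih (by omega)
      have : (m + 1) * (d + 1) = m * (d + 1) + (d + 1) := by ring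
      omega
  have hd' : α i1 = α i0 + (d + 1) := by
    have := hαd 1 (by omega)
    simpa using this
  have hβd : ∀ (m : ℕ) (hm : m < J.card), β ⟨m, hm⟩ = β j0 + m * (d + 1) := by
    intro m
    induction m with
    | zero => intro hm; simp [j0]
    | succ m ih =>
      intro hm
      have h1 := key i0 i1 ⟨m + 1, hm⟩ ⟨m, by omega⟩ (by simp [i0, i1]; omega)
      have h2 := ih (by omega)
      have : (m + 1) * (d + 1) = m * (d + 1) + (d + 1) := by ring
      omega
  refine ⟨α i0 + β j0, d + 1, ?_⟩
  ext x
  constructor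
  · intro hx
    obtain ⟨y, hy, z, hz, rfl⟩ := Finset.mem_add.1 hx
    have hy' : y ∈ Set.range α := by rw [hαdef, Finset.range_orderEmbOfFin]; exact hy
    have hz' : z ∈ Set.range β := by rw [hβdef, Finset.range_orderEmbOfFin]; exact hz
    obtain ⟨i, rfl⟩ := hy'
    obtain ⟨j, rfl⟩ := hz'
    refine Finset.mem_image.2 ⟨i + j, ?_, ?_⟩
    · have := i.2
      have := j.2
      simp; omega
    · have h1 := hαd i i.2
      have h2 := hβd j j.2
      simp only [Fin.eta] at h1 h2
      rw [h1, h2]; ring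
  · intro hx
    obtain ⟨t, ht, rfl⟩ := Finset.mem_image.1 hx
    rw [Finset.mem_range] at ht
    have hi : min t (I.card - 1) < I.card := by omega
    have hj : t - min t (I.card - 1) < J.card := by omega
    have h1 := hαd _ hi
    have h2 := hβd _ hj
    have h3 := Finset.add_mem_add (hα ⟨_, hi⟩) (hβ ⟨_, hj⟩)
    rw [h1, h2] at h3
    convert h3 using 1
    have : t = min t (I.card - 1) + (t - min t (I.card - 1)) := by omega
    generalize min t (I.card - 1) = u at *
    generalize t - u = v at *
    subst this
    ring

/-- Indices at which a sequence leaves the span of its previous terms. -/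
def apsGreedy (K : Type*) {E : Type*} [Field K] [CommRing E] [Algebra K E] (a : ℕ → E) : Set ℕ :=
  {m | a m ∉ Submodule.span K (a '' Set.Iio m)}

section
variable {K E : Type*} [Field K] [CommRing E] [Algebra K E] (a b : ℕ → E)

lemma apsGreedy_span (l : ℕ) :
    a l ∈ Submodule.span K (a '' {i | i ∈ apsGreedy K a ∧ i ≤ l}) := by
  induction l using Nat.strong_induction_on with
  | _ l ih =>
    by_cases hl : l ∈ apsGreedy K a
    · exact Submodule.subset_span ⟨l, ⟨hl, le_rfl⟩, rfl⟩
    · have h1 : a l ∈ Submodule.span K (a '' Set.Iio l) := not_not.1 hl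
      refine (Submodule.span_le.2 ?_) h1
      rintro _ ⟨i, hi, rfl⟩
      have hi' : i < l := hi
      refine Submodule.span_mono ?_ (ih i hi')
      apply Set.image_mono
      rintro x ⟨hx, hxi⟩
      exact ⟨hx, hxi.trans hi'.le⟩

lemma apsGreedy_linearIndependent :
    LinearIndependent K (fun i : apsGreedy K a => a i) := by
  classical
  rw [linearIndependent_iff']
  intro s g hg
  by_contra! hne
  obtain ⟨i0, hi0, hgi0⟩ := hne
  obtain ⟨m, hm, hmax⟩ := Finset.exists_max_image (s.filter (fun i => g i ≠ 0))
    (fun i => (i : ℕ)) ⟨i0, Finset.mem_filter.2 ⟨hi0, hgi0⟩⟩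
  obtain ⟨hms, hgm⟩ := Finset.mem_filter.1 hm
  apply m.2
  rw [← Finset.add_sum_erase _ _ hms] at hg
  have h1 : g m • a m ∈ Submodule.span K (a '' Set.Iio (m : ℕ)) := by
    rw [eq_neg_of_add_eq_zero_left hg]
    refine Submodule.neg_mem _ (Submodule.sum_mem _ fun i hi => ?_)
    by_cases hgi : g i = 0
    · rw [hgi, zero_smul]; exact Submodule.zero_mem _
    · refine Submodule.smul_mem _ _ (Submodule.subset_span ⟨i, ?_, rfl⟩)
      have h2 := hmax i (Finset.mem_filter.2 ⟨Finset.mem_of_mem_erase hi, hgi⟩)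
      exact lt_of_le_of_ne h2 (fun h => Finset.ne_of_mem_erase hi (Subtype.ext h))
  exact (Submodule.smul_mem_iff _ hgm).1 h1

lemma apsGreedy_conv
    (h : LinearIndependent K (fun p : apsGreedy K a × apsGreedy K b => a p.1 * b p.2))
    {i j : ℕ} (hi : i ∈ apsGreedy K a) (hj : j ∈ apsGreedy K b) :
    ∑ p ∈ Finset.HasAntidiagonal.antidiagonal (i + j), a p.1 * b p.2 ≠ 0 := by
  classical
  intro h0
  rw [← Finset.add_sum_erase _ _ (Finset.HasAntidiagonal.mem_antidiagonal.2 rfl : (i, j) ∈ _)] at h0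
  have hn := h.notMem_span_image (s := {(⟨i, hi⟩, ⟨j, hj⟩)}ᶜ) (x := (⟨i, hi⟩, ⟨j, hj⟩)) (by simp)
  apply hn
  simp only
  rw [eq_neg_of_add_eq_zero_left h0]
  refine Submodule.neg_mem _ (Submodule.sum_mem _ fun p hp => ?_)
  obtain ⟨hpne, hpm⟩ := Finset.mem_erase.1 hp
  rw [Finset.HasAntidiagonal.mem_antidiagonal] at hpm
  have h1 := Submodule.mul_mem_mul (apsGreedy_span (K := K) a p.1) (apsGreedy_span (K := K) b p.2)
  rw [Submodule.span_mul_span] at h1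
  refine Submodule.span_mono ?_ h1
  rintro _ ⟨_, ⟨u, ⟨hu, hup⟩, rfl⟩, _, ⟨v, ⟨hv, hvp⟩, rfl⟩, rfl⟩
  refine ⟨(⟨u, hu⟩, ⟨v, hv⟩), ?_, rfl⟩
  simp only [Set.mem_compl_iff, Set.mem_singleton_iff, Prod.mk.injEq, Subtype.mk.injEq, not_and]
  rintro rfl rfl
  apply hpne
  ext <;> simp <;> omega
end

open Polynomial

/-- Conjugate-reversal of a polynomial. -/
noncomputable def apsTil (f : ℂ[X]) : ℂ[X] := (f.map (starRingEnd ℂ)).reverse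

lemma apsTil_mul (f g : ℂ[X]) : apsTil (f * g) = apsTil f * apsTil g := by
  rw [apsTil, Polynomial.map_mul, reverse_mul_of_domain]; rfl

lemma apsTil_C (u : ℂ) : apsTil (C u) = C ((starRingEnd ℂ) u) := by
  simp [apsTil]

lemma apsTil_natDegree {f : ℂ[X]} (hf : f.coeff 0 ≠ 0) : (apsTil f).natDegree = f.natDegree := by
  rw [apsTil, reverse_natDegree, natDegree_map, natTrailingDegree_eq_zero.2, Nat.sub_zero]
  right; simpa using hf

lemma apsTil_coeff (f : ℂ[X]) {m : ℕ} (hm : m ≤ f.natDegree) :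
    (apsTil f).coeff m = (starRingEnd ℂ) (f.coeff (f.natDegree - m)) := by
  rw [apsTil, coeff_reverse, natDegree_map, revAt_le hm, coeff_map]

lemma apsTil_coeff_zero (f : ℂ[X]) : (apsTil f).coeff 0 = (starRingEnd ℂ) f.leadingCoeff := by
  rw [apsTil_coeff f (Nat.zero_le _)]; rfl

lemma apsTil_til {f : ℂ[X]} (hf : f.coeff 0 ≠ 0) : apsTil (apsTil f) = f := by
  have hne : f ≠ 0 := by rintro rfl; simp at hf
  have h0 : (apsTil f).coeff 0 ≠ 0 := by
    rw [apsTil_coeff_zero]; simpa using hne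
  ext m
  by_cases hm : m ≤ f.natDegree
  · rw [apsTil_coeff _ (by rwa [apsTil_natDegree hf]), apsTil_natDegree hf,
      apsTil_coeff _ (Nat.sub_le _ _), Nat.sub_sub_self hm]
    simp
  · rw [coeff_eq_zero_of_natDegree_lt (n := m) (p := f) (by omega), coeff_eq_zero_of_natDegree_lt]
    rw [apsTil_natDegree h0, apsTil_natDegree hf]; omega

lemma aps_factor {f g : ℂ[X]} (hf : f.coeff 0 ≠ 0) (hg : g.coeff 0 ≠ 0)
    (h : f * apsTil f = g * apsTil g) :
    ∃ (A B : ℂ[X]) (u : ℂ), f = A * B ∧ g = C u * (A * apsTil B) ∧ ‖u‖ = 1 ∧ A.coeff 0 = 1 := by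
  have hf0 : f ≠ 0 := by rintro rfl; simp at hf
  have hg0 : g ≠ 0 := by rintro rfl; simp at hg
  obtain ⟨D, E, E', hD0, hcop, hfE, hgE⟩ : ∃ D E E' : ℂ[X], D ≠ 0 ∧ IsCoprime E E' ∧
      f = D * E ∧ g = D * E' := by
    have hd : EuclideanDomain.gcd f g ≠ 0 := by
      intro h; exact hf0 (EuclideanDomain.gcd_eq_zero_iff.1 h).1
    obtain ⟨E, hE⟩ := EuclideanDomain.gcd_dvd_left f g
    obtain ⟨E', hE'⟩ := EuclideanDomain.gcd_dvd_right f g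
    refine ⟨_, E, E', hd, ?_, hE, hE'⟩
    have := EuclideanDomain.gcd_eq_gcd_ab f g
    refine ⟨EuclideanDomain.gcdA f g, EuclideanDomain.gcdB f g, ?_⟩
    apply mul_left_cancel₀ hd
    linear_combination (-EuclideanDomain.gcdA f g) * hE - EuclideanDomain.gcdB f g * hE' - this
  have hDc : D.coeff 0 ≠ 0 := by
    intro h0; apply hf; rw [hfE, mul_coeff_zero, h0, zero_mul]
  have hEc : E.coeff 0 ≠ 0 := by
    intro h0; apply hf; rw [hfE, mul_coeff_zero, h0, mul_zero]
  have hEpc : E'.coeff 0 ≠ 0 := by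
    intro h0; apply hg; rw [hgE, mul_coeff_zero, h0, mul_zero]
  have hE0 : E ≠ 0 := by rintro rfl; simp at hEc
  have hEp0 : E' ≠ 0 := by rintro rfl; simp at hEpc
  have htD : apsTil D ≠ 0 := by
    intro h0; have := apsTil_til hDc; rw [h0] at this; rw [← this] at hD0; simp [apsTil] at hD0
  have htE : apsTil E ≠ 0 := by
    intro h0; have := apsTil_til hEc; rw [h0] at this; rw [← this] at hE0; simp [apsTil] at hE0
  have h2 : E * apsTil E = E' * apsTil E' := by
    have : (D * apsTil D) * (E * apsTil E) = (D * apsTil D) * (E' * apsTil E') := by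
      rw [hfE, hgE, apsTil_mul, apsTil_mul] at h
      linear_combination h
    exact mul_left_cancel₀ (mul_ne_zero hD0 htD) this
  have h3 : E' ∣ apsTil E := hcop.symm.dvd_of_dvd_mul_left (h2 ▸ Dvd.intro _ rfl)
  have h4 : E ∣ apsTil E' := hcop.dvd_of_dvd_mul_left (h2 ▸ Dvd.intro _ rfl)
  have htE' : apsTil E' ≠ 0 := by
    intro h0; rw [h0, mul_zero] at h2; exact mul_ne_zero hE0 htE h2
  have hdeg : E.natDegree = E'.natDegree := by
    have d3 := natDegree_le_of_dvd h3 htE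
    have d4 := natDegree_le_of_dvd h4 htE'
    rw [apsTil_natDegree hEc] at d3
    rw [apsTil_natDegree hEpc] at d4
    omega
  obtain ⟨Q, hQ⟩ := h3
  have hQ0 : Q ≠ 0 := by rintro rfl; exact htE (by simpa using hQ)
  have hQd : Q.natDegree = 0 := by
    have := congrArg natDegree hQ
    rw [apsTil_natDegree hEc, natDegree_mul hEp0 hQ0] at this
    omega
  obtain ⟨v, hv⟩ : ∃ v, Q = C v := ⟨_, eq_C_of_natDegree_eq_zero hQd⟩
  have hv0 : v ≠ 0 := by rintro rfl; simp at hv; exact hQ0 hv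
  have hE' : E' = C v⁻¹ * apsTil E := by
    rw [hQ, hv, mul_comm E', ← mul_assoc, ← C_mul, inv_mul_cancel₀ hv0, C_1, one_mul]
  have hnorm : ‖v⁻¹‖ = 1 := by
    have h5 : E * apsTil E = C (v⁻¹ * (starRingEnd ℂ) v⁻¹) * (E * apsTil E) := by
      conv_lhs => rw [h2]
      conv_lhs => rw [hE', apsTil_mul, apsTil_C, apsTil_til hEc]
      rw [C_mul]; ring
    have h6 : C (v⁻¹ * (starRingEnd ℂ) v⁻¹) = (1 : ℂ[X]) := by
      apply mul_right_cancel₀ (mul_ne_zero hE0 htE)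
      rw [one_mul]; exact h5.symm
    rw [← C_1] at h6
    have h7 := C_injective h6
    rw [Complex.mul_conj] at h7
    have h8 : Complex.normSq v⁻¹ = 1 := by exact_mod_cast h7
    rw [Complex.normSq_eq_norm_sq] at h8
    nlinarith [norm_nonneg v⁻¹]
  set δ := D.coeff 0 with hδ
  refine ⟨C δ⁻¹ * D, C δ * E, v⁻¹ * (δ / (starRingEnd ℂ) δ), ?_, ?_, ?_, ?_⟩
  · rw [hfE]
    have : C δ⁻¹ * C δ = (1 : ℂ[X]) := by rw [← C_mul, inv_mul_cancel₀ hDc, C_1]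
    linear_combination (-(D * E)) * this
  · rw [hgE, hE', apsTil_mul, apsTil_C]
    have hδ' : (starRingEnd ℂ) δ ≠ 0 := by simpa using hDc
    have : C (v⁻¹ * (δ / (starRingEnd ℂ) δ)) * C δ⁻¹ * C ((starRingEnd ℂ) δ) = (C v⁻¹ : ℂ[X]) := by
      rw [← C_mul, ← C_mul]; congr 1; field_simp
    linear_combination (-(D * apsTil E)) * this
  · have hδ' : ‖δ‖ ≠ 0 := by simpa using hDc
    rw [norm_mul, norm_div, RCLike.norm_conj, div_self hδ', hnorm, one_mul]
  · rw [mul_coeff_zero, coeff_C_zero, inv_mul_cancel₀ hDc]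

lemma aps_coeff_alg {K : Type} [Field K] [Algebra K ℂ] (R : Subalgebra K ℂ) {f A : ℂ[X]}
    (hf0 : f ≠ 0) (hf : ∀ l, f.coeff l ∈ R) (hA : A ∣ f) (m : ℕ) (hm : A.coeff m ≠ 0)
    (hmR : IsAlgebraic R (A.coeff m)) (l : ℕ) : IsAlgebraic R (A.coeff l) := by
  have hA0 : A ≠ 0 := by rintro rfl; simp at hm
  have hsplit := (IsAlgClosed.splits A).eq_prod_roots
  have hroot : ∀ r ∈ A.roots, IsAlgebraic R r := by
    intro r hr
    have h1 : f.IsRoot r := (isRoot_of_mem_roots hr).dvd hA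
    have hl : f ∈ Polynomial.lifts (algebraMap R ℂ) := by
      rw [Polynomial.lifts_iff_coeff_lifts]
      intro l
      exact ⟨⟨_, hf l⟩, rfl⟩
    obtain ⟨q, hq⟩ := (Polynomial.mem_lifts _).1 hl
    refine ⟨q, ?_, ?_⟩
    · rintro rfl; simp at hq; exact hf0 hq.symm
    · rw [← Polynomial.eval_map_algebraMap, hq]; exact h1
  set M := (A.roots.map fun r => X - C r).prod with hM
  have hMl : ∀ l, IsAlgebraic R (M.coeff l) := by
    have hl : M ∈ Polynomial.lifts (Subalgebra.algebraicClosure R ℂ).val.toRingHom := by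
      refine Subsemiring.multiset_prod_mem _ _ ?_
      intro p hp
      obtain ⟨r, hr, rfl⟩ := Multiset.mem_map.1 hp
      rw [Polynomial.mem_lifts]
      refine ⟨X - C ⟨r, hroot r hr⟩, ?_⟩
      simp
    intro l
    obtain ⟨x, hx⟩ := (Polynomial.lifts_iff_coeff_lifts _).1 hl l
    rw [← hx]
    exact x.2
  have hc : ∀ l, A.coeff l = A.leadingCoeff * M.coeff l := by
    intro l
    conv_lhs => rw [hsplit]
    rw [coeff_C_mul]
  have hMm : M.coeff m ≠ 0 := by
    intro h0; apply hm; rw [hc, h0, mul_zero]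
  have hlead : A.leadingCoeff = A.coeff m * (M.coeff m)⁻¹ := by
    rw [hc m]; field_simp
  rw [hc l, hlead]
  exact (hmR.mul (hMl m).inv).mul (hMl l)

lemma aps_const {K : Type} [Field K] [IsAlgClosed K] [Algebra K ℂ] {ι : Type} [Fintype ι]
    (c : ι → ℂ) (hc : LinearIndependent K c) (e : ι → ℕ) {A : ℂ[X]}
    (hA0 : A.coeff 0 ≠ 0) (hf0 : (∑ s, C (c s) * X ^ (e s)).coeff 0 ≠ 0)
    (hA : A ∣ ∑ s, C (c s) * X ^ (e s))
    (hI : ∀ i ∈ apsGreedy K A.coeff, i = 0) : A.natDegree = 0 := by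
  have h1 : ∀ l, ∃ r : K, r • A.coeff 0 = A.coeff l := by
    intro l
    rw [← Submodule.mem_span_singleton]
    refine Submodule.span_mono ?_ (apsGreedy_span (K := K) A.coeff l)
    rintro _ ⟨i, ⟨hi, -⟩, rfl⟩
    rw [hI i hi]; rfl
  have hl : C (A.coeff 0)⁻¹ * A ∈ Polynomial.lifts (algebraMap K ℂ) := by
    rw [Polynomial.lifts_iff_coeff_lifts]
    intro l
    obtain ⟨r, hr⟩ := h1 l
    refine ⟨r, ?_⟩
    rw [coeff_C_mul, ← hr, Algebra.smul_def]
    field_simp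
  obtain ⟨q, hq⟩ := (Polynomial.mem_lifts _).1 hl
  by_contra hd
  have hqd : q.natDegree = A.natDegree := by
    rw [← natDegree_map (algebraMap K ℂ), hq, natDegree_C_mul (inv_ne_zero hA0)]
  obtain ⟨r, hr⟩ := IsAlgClosed.exists_root q (by
    intro h; rw [← natDegree_eq_zero_iff_degree_le_zero.2 (le_of_eq h)] at hd; exact hd (hqd.symm))
  have hAr : A.eval (algebraMap K ℂ r) = 0 := by
    have h2 : (q.map (algebraMap K ℂ)).eval (algebraMap K ℂ r) = 0 := by
      rw [eval_map_algebraMap, aeval_algebraMap_apply]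
      have : aeval r q = 0 := hr
      rw [this, map_zero]
    rw [hq, eval_mul, eval_C] at h2
    exact (mul_eq_zero.1 h2).resolve_left (inv_ne_zero hA0)
  have hfr := eval_eq_zero_of_dvd_of_eval_eq_zero hA hAr
  simp only [eval_finsetSum, eval_mul, eval_C, eval_pow, eval_X] at hfr
  have h3 := Fintype.linearIndependent_iff.1 hc (fun s => r ^ (e s)) (by
    rw [← hfr]
    refine Finset.sum_congr rfl fun s _ => ?_
    rw [Algebra.smul_def, map_pow, mul_comm])
  apply hf0
  simp only [finsetSum_coeff, coeff_C_mul, coeff_X_pow]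
  refine Finset.sum_eq_zero fun s _ => ?_
  rw [if_neg, mul_zero]
  intro h
  have := h3 s
  rw [← h] at this
  simp at this

lemma apsGreedy_le {K : Type} [Field K] [Algebra K ℂ] (A : ℂ[X]) {i : ℕ}
    (hi : i ∈ apsGreedy K A.coeff) : i ≤ A.natDegree ∧ A.coeff i ≠ 0 := by
  have h : A.coeff i ≠ 0 := by
    intro h0; apply hi; rw [h0]; exact Submodule.zero_mem _
  exact ⟨le_natDegree_of_ne_zero h, h⟩

lemma apsGreedy_finite {K : Type} [Field K] [Algebra K ℂ] (A : ℂ[X]) :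
    (apsGreedy K A.coeff).Finite :=
  (Set.finite_Iic A.natDegree).subset fun _ hi => (apsGreedy_le A hi).1

lemma apsGreedy_zero {K : Type} [Field K] [Algebra K ℂ] {A : ℂ[X]} (h : A.coeff 0 ≠ 0) :
    0 ∈ apsGreedy K A.coeff := by
  intro h0
  simp at h0
  exact h h0

open scoped Pointwise in
lemma apsGreedy_supp {K : Type} [Field K] [Algebra K ℂ] (A B : ℂ[X])
    (hA : A.coeff 0 ≠ 0) (hB : B.coeff 0 ≠ 0)
    (h : LinearIndependent K
      (fun p : apsGreedy K A.coeff × apsGreedy K B.coeff => A.coeff p.1 * B.coeff p.2)) :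
    (apsGreedy_finite (K := K) A).toFinset.card + (apsGreedy_finite (K := K) B).toFinset.card - 1
      ≤ (A * B).support.card ∧ ∀ i ∈ apsGreedy K A.coeff, ∀ j ∈ apsGreedy K B.coeff,
        (A * B).coeff (i + j) ≠ 0 := by
  classical
  have h2 : ∀ i ∈ apsGreedy K A.coeff, ∀ j ∈ apsGreedy K B.coeff,
        (A * B).coeff (i + j) ≠ 0 := by
    intro i hi j hj
    rw [coeff_mul]
    exact apsGreedy_conv A.coeff B.coeff h hi hj
  refine ⟨?_, h2⟩
  set I := (apsGreedy_finite (K := K) A).toFinset with hI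
  set J := (apsGreedy_finite (K := K) B).toFinset with hJ
  have hI0 : I.Nonempty := ⟨0, by simpa [hI] using apsGreedy_zero hA⟩
  have hJ0 : J.Nonempty := ⟨0, by simpa [hJ] using apsGreedy_zero hB⟩
  refine (cauchy_davenport_add_of_linearOrder_isCancelAdd hI0 hJ0).trans
    (Finset.card_le_card ?_)
  intro l hl
  obtain ⟨i, hi, j, hj, rfl⟩ := Finset.mem_add.1 hl
  rw [mem_support_iff]
  exact h2 i (by simpa [hI] using hi) j (by simpa [hJ] using hj)

/-- Conjugation does not increase the number of independent coefficients. -/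
lemma apsGreedy_til {K : Type} [Field K] [Algebra K ℂ]
    (hσ : ∀ r : K, ∃ r' : K, algebraMap K ℂ r' = (starRingEnd ℂ) (algebraMap K ℂ r)) (B : ℂ[X]) :
    (apsGreedy_finite (K := K) B).toFinset.card ≤
      (apsGreedy_finite (K := K) (apsTil B)).toFinset.card := by
  classical
  choose σ hσ using hσ
  have h1 := (apsGreedy_linearIndependent (K := K) B.coeff).map_of_injective_injective σ
    (starRingEnd ℂ : ℂ →+* ℂ).toAddMonoidHom
    (by
      intro r hr
      have := hσ r
      rw [hr, map_zero] at this
      have h2 : algebraMap K ℂ r = 0 := by simpa using this.symm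
      simpa using h2)
    (by intro m hm; simpa using hm)
    (by
      intro r m
      simp only [Algebra.smul_def]
      simp [hσ])
  let _ : Fintype (apsGreedy K B.coeff) := (apsGreedy_finite B).fintype
  have hw : ((apsTil B).coeff '' (apsGreedy K (apsTil B).coeff)).Finite :=
    (apsGreedy_finite (apsTil B)).image _
  let _ := hw.fintype
  have h2 := linearIndependent_le_span' _ h1 ((apsTil B).coeff '' (apsGreedy K (apsTil B).coeff)) (by
    rintro _ ⟨⟨j, hj⟩, rfl⟩
    have hjd := (apsGreedy_le B hj).1
    have h3 : (starRingEnd ℂ) (B.coeff j) = (apsTil B).coeff (B.natDegree - j) := by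
      rw [apsTil_coeff _ (Nat.sub_le _ _), Nat.sub_sub_self hjd]
    have h4 := apsGreedy_span (K := K) (apsTil B).coeff (B.natDegree - j)
    rw [← h3] at h4
    refine Submodule.span_mono (Set.image_mono ?_) h4
    rintro i ⟨hi, -⟩
    exact hi)
  rw [Cardinal.mk_fintype, Nat.cast_le] at h2
  rw [← Set.ncard_eq_toFinset_card _ (apsGreedy_finite B),
    ← Set.ncard_eq_toFinset_card _ (apsGreedy_finite (apsTil B))]
  refine le_trans ?_ (Set.ncard_image_le (f := (apsTil B).coeff) (apsGreedy_finite (apsTil B)))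
  rwa [← Nat.card_eq_fintype_card, ← Nat.card_eq_fintype_card] at h2

open scoped Pointwise in
lemma aps_core {K : Type} [Field K] [IsAlgClosed K] [Algebra K ℂ]
    (hσ : ∀ r : K, ∃ r' : K, algebraMap K ℂ r' = (starRingEnd ℂ) (algebraMap K ℂ r))
    {ι : Type} [Fintype ι] (c : ι → ℂ)
    (hgen : AlgebraicIndependent K (Sum.elim c (fun i => (starRingEnd ℂ) (c i))))
    (e : ι → ℕ) (he : Function.Injective e) {A B : ℂ[X]}
    (hAB : A * B = ∑ s, C (c s) * X ^ (e s)) (hA0 : A.coeff 0 = 1) (hB0 : B.coeff 0 ≠ 0)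
    (hsup : (A * apsTil B).support.card ≤ Fintype.card ι)
    (hap : ¬ ∃ a d : ℕ, Finset.image e Finset.univ =
      Finset.image (fun i => a + i * d) (Finset.range (Fintype.card ι))) :
    A.natDegree = 0 ∨ B.natDegree = 0 := by
  classical
  have hA0' : A.coeff 0 ≠ 0 := by rw [hA0]; exact one_ne_zero
  set f := ∑ s, C (c s) * X ^ (e s) with hf
  have hfcoeff : ∀ l, f.coeff l = ∑ s, if l = e s then c s else 0 := by
    intro l
    simp [hf, finsetSum_coeff, coeff_C_mul, coeff_X_pow]
  have hfs : ∀ s, f.coeff (e s) = c s := by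
    intro s
    rw [hfcoeff, Finset.sum_eq_single s]
    · simp
    · intro t _ hts; rw [if_neg]; intro h; exact hts (he h.symm)
    · simp
  have hfc0 : f.coeff 0 ≠ 0 := by
    rw [← hAB, mul_coeff_zero, hA0, one_mul]; exact hB0
  have hf0 : f ≠ 0 := by intro h; rw [h] at hfc0; simp at hfc0
  have hfsupp : f.support ⊆ Finset.image e Finset.univ := by
    intro l hl
    rw [mem_support_iff, hfcoeff] at hl
    obtain ⟨s, _, hs⟩ := Finset.exists_ne_zero_of_sum_ne_zero hl
    rw [Finset.mem_image]
    refine ⟨s, Finset.mem_univ _, ?_⟩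
    by_contra hne
    exact hs (if_neg fun h => hne h.symm)
  have hgenc : AlgebraicIndependent K c := by
    have := hgen.comp Sum.inl Sum.inl_injective
    simpa using this
  have hgen' : AlgebraicIndependent K (Sum.elim (fun i => (starRingEnd ℂ) (c i)) c) := by
    have := hgen.comp Sum.swap (Equiv.sumComm ι ι).injective
    convert this using 1
    ext s; rcases s with s | s <;> rfl
  set R := Algebra.adjoin K (Set.range c) with hR
  set R' := Algebra.adjoin K (Set.range fun i => (starRingEnd ℂ) (c i)) with hR'
  have hfR : ∀ l, f.coeff l ∈ R := by
    intro l
    rw [hfcoeff]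
    refine Subalgebra.sum_mem _ fun s _ => ?_
    split_ifs
    · exact Algebra.subset_adjoin ⟨s, rfl⟩
    · exact Subalgebra.zero_mem _
  have hfR' : ∀ l, (starRingEnd ℂ) (f.coeff l) ∈ R' := by
    intro l
    rw [hfcoeff, map_sum]
    refine Subalgebra.sum_mem _ fun s _ => ?_
    split_ifs
    · exact Algebra.subset_adjoin ⟨s, rfl⟩
    · rw [map_zero]; exact Subalgebra.zero_mem _
  have hAalg : ∀ l, IsAlgebraic R (A.coeff l) :=
    aps_coeff_alg R hf0 hfR (hAB ▸ Dvd.intro _ rfl) 0 hA0' (by rw [hA0]; exact isAlgebraic_one)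
  have htf0 : apsTil f ≠ 0 := by
    intro h; have := apsTil_til hfc0; rw [h] at this; rw [← this] at hf0; simp [apsTil] at hf0
  have hBalg : ∀ l, IsAlgebraic R' ((apsTil B).coeff l) := by
    have h1 : (apsTil B).coeff B.natDegree = (starRingEnd ℂ) (f.coeff 0) := by
      rw [apsTil_coeff _ le_rfl, Nat.sub_self, ← hAB, mul_coeff_zero, hA0, one_mul]
    refine aps_coeff_alg R' htf0 ?_ ?_ B.natDegree ?_ ?_
    · intro l
      by_cases hl : l ≤ f.natDegree
      · rw [apsTil_coeff _ hl]; exact hfR' _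
      · rw [coeff_eq_zero_of_natDegree_lt]
        · exact Subalgebra.zero_mem _
        · rw [apsTil_natDegree hfc0]; omega
    · rw [← hAB, apsTil_mul]; exact Dvd.intro_left _ rfl
    · rw [h1]; simpa using hfc0
    · rw [h1]; exact isAlgebraic_algebraMap (⟨_, hfR' 0⟩ : R')
  let _ : Fintype (apsGreedy K A.coeff) := (apsGreedy_finite A).fintype
  let _ : Fintype (apsGreedy K B.coeff) := (apsGreedy_finite B).fintype
  have hfin3 : Finite (apsGreedy K (apsTil B).coeff) := (apsGreedy_finite (apsTil B)).to_subtype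
  have hli1 := aps_prod c (fun i => (starRingEnd ℂ) (c i)) hgen'
    (fun i : apsGreedy K A.coeff => A.coeff i) (apsGreedy_linearIndependent _) (fun i => hAalg i)
    (fun i : apsGreedy K (apsTil B).coeff => (apsTil B).coeff i) (apsGreedy_linearIndependent _)
    (fun i => hBalg i)
  have htB0 : (apsTil B).coeff 0 ≠ 0 := by
    rw [apsTil_coeff_zero]
    have : B ≠ 0 := by rintro rfl; simp at hB0
    simpa using this
  have hcard1 := (apsGreedy_supp A (apsTil B) hA0' htB0 hli1).1
  have hcard2 := apsGreedy_til hσ B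
  let τ := {i : apsGreedy K A.coeff // (i : ℕ) ≠ 0} ⊕ apsGreedy K B.coeff
  let y : τ → ℂ := Sum.elim (fun i => A.coeff (i.1 : ℕ)) (fun j => B.coeff (j : ℕ))
  have hIpos : 0 < (apsGreedy_finite (K := K) A).toFinset.card :=
    Finset.card_pos.2 ⟨0, by simpa using apsGreedy_zero hA0'⟩
  have hτcard : Fintype.card τ + 1 = (apsGreedy_finite (K := K) A).toFinset.card
      + (apsGreedy_finite (K := K) B).toFinset.card := by
    have h1 : Fintype.card (apsGreedy K B.coeff) = (apsGreedy_finite (K := K) B).toFinset.card := by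
      rw [← Set.ncard_eq_toFinset_card _ (apsGreedy_finite B), ← Nat.card_eq_fintype_card]; rfl
    have h2 : Fintype.card (apsGreedy K A.coeff) = (apsGreedy_finite (K := K) A).toFinset.card := by
      rw [← Set.ncard_eq_toFinset_card _ (apsGreedy_finite A), ← Nat.card_eq_fintype_card]; rfl
    have h3 : Fintype.card {i : apsGreedy K A.coeff // (i : ℕ) ≠ 0} =
        Fintype.card (apsGreedy K A.coeff) - 1 := by
      have := Set.card_ne_eq (⟨0, apsGreedy_zero hA0'⟩ : apsGreedy K A.coeff)
      rw [← this]
      refine Fintype.card_congr (Equiv.subtypeEquivRight fun i => ?_)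
      simp [Subtype.ext_iff]
    rw [Fintype.card_sum, h3, h1, h2]
    omega
  have hadjA : ∀ l, A.coeff l ∈ Algebra.adjoin K (Set.range y) := by
    intro l
    have h1 := apsGreedy_span (K := K) A.coeff l
    refine (Submodule.span_le (p := Subalgebra.toSubmodule (Algebra.adjoin K (Set.range y)))).2 ?_ h1
    rintro _ ⟨i, ⟨hi, -⟩, rfl⟩
    by_cases h0 : i = 0
    · rw [h0, hA0]; exact Subalgebra.one_mem _
    · exact Algebra.subset_adjoin ⟨Sum.inl ⟨⟨i, hi⟩, h0⟩, rfl⟩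
  have hadjB : ∀ l, B.coeff l ∈ Algebra.adjoin K (Set.range y) := by
    intro l
    have h1 := apsGreedy_span (K := K) B.coeff l
    refine (Submodule.span_le (p := Subalgebra.toSubmodule (Algebra.adjoin K (Set.range y)))).2 ?_ h1
    rintro _ ⟨i, ⟨hi, -⟩, rfl⟩
    exact Algebra.subset_adjoin ⟨Sum.inr ⟨i, hi⟩, rfl⟩
  obtain ⟨hyind, hyc⟩ := aps_trans c hgenc y (by
    intro s
    rw [← hfs s, ← hAB, coeff_mul]
    exact Subalgebra.sum_mem _ fun p _ => Subalgebra.mul_mem _ (hadjA _) (hadjB _)) (by omega)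
  let φ : apsGreedy K A.coeff × apsGreedy K B.coeff → (τ →₀ ℕ) := fun p =>
    (if h : (p.1 : ℕ) ≠ 0 then Finsupp.single (Sum.inl ⟨p.1, h⟩) 1 else 0)
      + Finsupp.single (Sum.inr p.2) 1
  have hφ : Function.Injective φ := by
    rintro ⟨i, j⟩ ⟨i', j'⟩ h
    have hj : j = j' := by
      have h1 := DFunLike.congr_fun h (Sum.inr j)
      simp only [φ] at h1
      by_contra hne
      split_ifs at h1 <;> simp [Ne.symm hne] at h1
    subst hj
    have h2 := add_right_cancel h
    ext
    · simp only at h2 ⊢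
      split_ifs at h2 with h3 h4 h4
      · have := Finsupp.single_left_injective one_ne_zero h2
        simp at this
        simp [this]
      · simp at h2
      · have := h2.symm; simp at this
      · push Not at h3 h4
        rw [h3, h4]
    · rfl
  have hli2 : LinearIndependent K
      (fun p : apsGreedy K A.coeff × apsGreedy K B.coeff => A.coeff p.1 * B.coeff p.2) := by
    have hmono := aps_mono y hyind φ hφ
    suffices hfun : (fun p : apsGreedy K A.coeff × apsGreedy K B.coeff =>
        A.coeff p.1 * B.coeff p.2) =
        fun p => MvPolynomial.aeval y (MvPolynomial.monomial (φ p) (1 : K)) by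
      rw [hfun]; exact hmono
    ext ⟨i, j⟩
    simp only [φ]
    split_ifs with h
    · simp [MvPolynomial.aeval_monomial, Finsupp.prod_add_index', pow_add, y]
    · push Not at h
      simp [MvPolynomial.aeval_monomial, y, h, hA0]
  obtain ⟨hcard3, hsum⟩ := apsGreedy_supp A B hA0' hB0 hli2
  set I := (apsGreedy_finite (K := K) A).toFinset with hI
  set J := (apsGreedy_finite (K := K) B).toFinset with hJ
  have hsub : I + J ⊆ Finset.image e Finset.univ := by
    intro l hl
    obtain ⟨i, hi, j, hj, rfl⟩ := Finset.mem_add.1 hl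
    apply hfsupp
    rw [mem_support_iff, ← hAB]
    exact hsum i (by simpa [hI] using hi) j (by simpa [hJ] using hj)
  have hcardS : (Finset.image e Finset.univ).card = Fintype.card ι := by
    rw [Finset.card_image_of_injective _ he]; rfl
  have hJpos : 0 < J.card := Finset.card_pos.2 ⟨0, by simpa [hJ] using apsGreedy_zero hB0⟩
  have hcd : I.card + J.card - 1 ≤ (I + J).card :=
    cauchy_davenport_add_of_linearOrder_isCancelAdd (Finset.card_pos.1 hIpos) (Finset.card_pos.1 hJpos)
  have heq : I + J = Finset.image e Finset.univ := by
    apply Finset.eq_of_subset_of_card_le hsub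
    rw [hcardS]; omega
  have hlin : LinearIndependent K c := hgenc.linearIndependent
  by_cases hI2 : 2 ≤ I.card
  · by_cases hJ2 : 2 ≤ J.card
    · exfalso
      apply hap
      have hle : (I + J).card ≤ I.card + J.card - 1 := by rw [heq, hcardS]; omega
      obtain ⟨a, d, had⟩ := aps_freiman I J hI2 hJ2 hle
      refine ⟨a, d, ?_⟩
      rw [← heq, had]
      congr 2
      omega
    · right
      refine aps_const c hlin e hB0 hfc0 (Dvd.intro_left _ hAB) ?_
      intro i hi
      have h1 : J.card ≤ 1 := by omega
      exact Finset.card_le_one.1 h1 i (by simpa [hJ] using hi) 0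
        (by simpa [hJ] using apsGreedy_zero hB0)
  · left
    refine aps_const c hlin e hA0' hfc0 (Dvd.intro _ hAB) ?_
    intro i hi
    have h1 : I.card ≤ 1 := by omega
    exact Finset.card_le_one.1 h1 i (by simpa [hI] using hi) 0
      (by simpa [hI] using apsGreedy_zero hA0')

/-- Integer-indexed coefficients of a polynomial. -/
noncomputable def apsZ (p : ℂ[X]) (j : ℤ) : ℂ := if 0 ≤ j then p.coeff j.toNat else 0

lemma apsZ_X_pow_mul (p : ℂ[X]) (a : ℕ) (j : ℤ) : apsZ (X ^ a * p) j = apsZ p (j - a) := by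
  unfold apsZ
  by_cases h : 0 ≤ j
  · rw [if_pos h, coeff_X_pow_mul']
    by_cases h2 : 0 ≤ j - a
    · rw [if_pos h2, if_pos (by omega)]
      congr 1; omega
    · rw [if_neg h2, if_neg (by omega)]
  · rw [if_neg h, if_neg (by omega)]

lemma apsZ_C_mul (p : ℂ[X]) (u : ℂ) (j : ℤ) : apsZ (C u * p) j = u * apsZ p j := by
  unfold apsZ
  split_ifs
  · rw [coeff_C_mul]
  · simp

lemma apsZ_til (p : ℂ[X]) (j : ℤ) :
    apsZ (apsTil p) j = (starRingEnd ℂ) (apsZ p (p.natDegree - j)) := by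
  unfold apsZ
  by_cases h : 0 ≤ j
  · rw [if_pos h]
    by_cases h2 : j.toNat ≤ p.natDegree
    · rw [apsTil_coeff _ h2, if_pos (by omega)]
      congr 2; omega
    · rw [if_neg (by omega), map_zero]
      apply coeff_eq_zero_of_natDegree_lt
      refine lt_of_le_of_lt ?_ (not_le.1 h2)
      rw [apsTil]
      exact (reverse_natDegree_le _).trans natDegree_map_le
  · rw [if_neg h, if_pos (by omega), coeff_eq_zero_of_natDegree_lt (by omega), map_zero]

/-- The generating polynomial of a signal. -/
noncomputable def apsPoly {n : ℕ} (x : Fin n → ℂ) : ℂ[X] := ∑ j : Fin n, C (x j) * X ^ (j : ℕ)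

lemma apsPoly_coeff {n : ℕ} (x : Fin n → ℂ) (m : ℕ) : (apsPoly x).coeff m = extZ x m := by
  simp only [apsPoly, finsetSum_coeff, coeff_C_mul, coeff_X_pow, extZ]
  by_cases h : m < n
  · rw [dif_pos (by omega), Finset.sum_eq_single ⟨m, h⟩]
    · simp
    · intro j _ hj
      rw [if_neg, mul_zero]
      rintro rfl; exact hj rfl
    · simp
  · rw [dif_neg (by omega)]
    refine Finset.sum_eq_zero fun j _ => ?_
    rw [if_neg, mul_zero]
    have := j.2; omega

lemma apsPoly_natDegree {n : ℕ} (x : Fin n → ℂ) : (apsPoly x).natDegree ≤ n - 1 := by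
  rw [natDegree_le_iff_coeff_eq_zero]
  intro m hm
  rw [apsPoly_coeff, extZ, dif_neg (by omega)]

lemma apsZ_poly {n : ℕ} (x : Fin n → ℂ) (j : ℤ) : apsZ (apsPoly x) j = extZ x j := by
  unfold apsZ
  split_ifs with h
  · rw [apsPoly_coeff, Int.toNat_of_nonneg h]
  · rw [extZ, dif_neg (by omega)]

lemma aps_autocorr {n : ℕ} (x : Fin n → ℂ) (m : ℕ) (hm : m < n) :
    (apsPoly x * reflect (n - 1) ((apsPoly x).map (starRingEnd ℂ))).coeff (n - 1 - m) =
      autocorr x m := by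
  rw [coeff_mul, Finset.Nat.sum_antidiagonal_eq_sum_range_succ_mk, autocorr]
  have : (n - 1 - m).succ = n - m := by omega
  rw [this]
  refine Finset.sum_congr rfl fun j hj => ?_
  rw [Finset.mem_range] at hj
  simp only [coeff_reflect, coeff_map]
  rw [revAt_le (by omega), apsPoly_coeff, apsPoly_coeff]
  congr 3
  omega

lemma aps_symm (N : ℕ) (P Q : ℂ[X]) (hP : P.natDegree ≤ N) (hQ : Q.natDegree ≤ N)
    (h : ∀ m ≤ N, (P * reflect N (P.map (starRingEnd ℂ))).coeff (N - m) =
      (Q * reflect N (Q.map (starRingEnd ℂ))).coeff (N - m)) :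
    P * reflect N (P.map (starRingEnd ℂ)) = Q * reflect N (Q.map (starRingEnd ℂ)) := by
  have hsym : ∀ P : ℂ[X], P.natDegree ≤ N → ∀ m ≤ N + N,
      (P * reflect N (P.map (starRingEnd ℂ))).coeff m =
      (starRingEnd ℂ) ((P * reflect N (P.map (starRingEnd ℂ))).coeff (N + N - m)) := by
    intro P hP m hm
    have hd : (P.map (starRingEnd ℂ)).natDegree ≤ N := natDegree_map_le.trans hP
    have hd2 : (reflect N P).natDegree ≤ N := by
      rw [natDegree_le_iff_coeff_eq_zero]
      intro l hl
      rw [coeff_reflect, revAt_eq_self_of_lt hl, coeff_eq_zero_of_natDegree_lt (by omega)]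
    have h1 : reflect (N + N) ((P * reflect N (P.map (starRingEnd ℂ))).map (starRingEnd ℂ)) =
        P * reflect N (P.map (starRingEnd ℂ)) := by
      have h2 : (P * reflect N (P.map (starRingEnd ℂ))).map (starRingEnd ℂ) =
          P.map (starRingEnd ℂ) * reflect N P := by
        rw [Polynomial.map_mul]
        congr 1
        ext l; simp [coeff_reflect]
      rw [h2, reflect_mul _ _ hd hd2, mul_comm]
      congr 1
      ext l; simp
    conv_lhs => rw [← h1]
    rw [coeff_reflect, revAt_le hm, coeff_map]
  have hlow : ∀ m ≤ N, (P * reflect N (P.map (starRingEnd ℂ))).coeff m =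
      (Q * reflect N (Q.map (starRingEnd ℂ))).coeff m := by
    intro m hm
    have := h (N - m) (Nat.sub_le _ _)
    rwa [Nat.sub_sub_self hm] at this
  have hbig : ∀ P : ℂ[X], P.natDegree ≤ N → ∀ m, N + N < m →
      (P * reflect N (P.map (starRingEnd ℂ))).coeff m = 0 := by
    intro P hP m hm
    apply coeff_eq_zero_of_natDegree_lt
    refine lt_of_le_of_lt natDegree_mul_le ?_
    have hd2 : (reflect N (P.map (starRingEnd ℂ))).natDegree ≤ N := by
      rw [natDegree_le_iff_coeff_eq_zero]
      intro l hl
      rw [coeff_reflect, revAt_eq_self_of_lt hl, coeff_map,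
        coeff_eq_zero_of_natDegree_lt (by omega), map_zero]
    omega
  ext m
  by_cases h1 : m ≤ N
  · exact hlow m h1
  · by_cases h2 : m ≤ N + N
    · rw [hsym P hP m h2, hsym Q hQ m h2, hlow _ (by omega)]
    · rw [hbig P hP m (by omega), hbig Q hQ m (by omega)]

lemma aps_refl_mul (N a : ℕ) (q : ℂ[X]) (hq : a + q.natDegree ≤ N) :
    (X ^ a * q) * reflect N ((X ^ a * q).map (starRingEnd ℂ)) =
      X ^ (N - q.natDegree) * (q * apsTil q) := by
  have hd : (q.map (starRingEnd ℂ)).natDegree = q.natDegree := natDegree_map _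
  have h1 : reflect N ((X ^ a * q).map (starRingEnd ℂ)) =
      apsTil q * X ^ (N - a - q.natDegree) := by
    have hN : N = a + (q.natDegree + (N - a - q.natDegree)) := by omega
    conv_lhs => rw [hN, Polynomial.map_mul, Polynomial.map_pow, map_X]
    rw [reflect_mul _ _ (natDegree_X_pow_le a) (by omega)]
    conv_lhs => rw [← mul_one (q.map (starRingEnd ℂ))]
    rw [reflect_mul _ _ hd.le (by simp)]
    have h2 : reflect a (X ^ a : ℂ[X]) = 1 := by
      rw [reflect_monomial, revAt_le le_rfl, Nat.sub_self, pow_zero]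
    have h3 : ∀ l, reflect l (1 : ℂ[X]) = X ^ l := by
      intro l; rw [← C_1, reflect_C, C_1, one_mul]
    rw [h2, h3, one_mul, apsTil, reverse, hd]
  rw [h1]
  have h4 : N - q.natDegree = a + (N - a - q.natDegree) := by omega
  rw [h4, pow_add]; ring

lemma aps_cancel {p q : ℕ} {F G : ℂ[X]} (hF : F.coeff 0 ≠ 0) (hG : G.coeff 0 ≠ 0)
    (h : X ^ p * F = X ^ q * G) : F = G := by
  have hpq : p = q := by
    have h1 := congrArg (fun f => f.coeff p) h
    have h2 := congrArg (fun f => f.coeff q) h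
    simp only [coeff_X_pow_mul'] at h1 h2
    by_contra hne
    rcases lt_or_gt_of_ne hne with hlt | hlt
    · rw [if_pos le_rfl, if_neg (by omega), Nat.sub_self] at h1
      exact hF h1
    · rw [if_neg (by omega), if_pos le_rfl, Nat.sub_self] at h2
      exact hG h2.symm
  subst hpq
  exact mul_left_cancel₀ (pow_ne_zero _ X_ne_zero) h

lemma aps_mul_til_coeff {f : ℂ[X]} (hf : f.coeff 0 ≠ 0) : (f * apsTil f).coeff 0 ≠ 0 := by
  have hne : f ≠ 0 := by rintro rfl; simp at hf
  rw [mul_coeff_zero, apsTil_coeff_zero]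
  exact mul_ne_zero hf (by simpa using hne)

/-- If `S ⊆ {0,…,n−1}` with `|S| = k`, `3 ≤ k ≤ n−1`, is an aperiodic support (not an
arithmetic progression), then for (Lebesgue-) almost all nonvanishing value assignments
`c ∈ (ℂ\{0})^S`, every signal with at most `k` nonzero entries and the same autocorrelation
as `x(c)` is equivalent to `x(c)` up to time-shift, conjugate-flip and global phase. -/
theorem aperiodic_support_almost_always_unique
    (n k : ℕ) (hn : 4 ≤ n) (hk3 : 3 ≤ k) (hkn : k ≤ n - 1)
    (S : Finset ℕ) (hScard : S.card = k) (hSn : ∀ i ∈ S, i < n)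
    (haper : ¬ ∃ a d : ℕ, S = Finset.image (fun i => a + i * d) (Finset.range k)) :
    volume {c : ↥S → ℂ |
      (∀ i, c i ≠ 0) ∧
      ∃ x' : Fin n → ℂ, {i : Fin n | x' i ≠ 0}.ncard ≤ k ∧
        (∀ m : Fin n, autocorr x' (m : ℕ) = autocorr (sigOn (n := n) S c) (m : ℕ)) ∧
        ¬ equivSig x' (sigOn (n := n) S c)} = 0 := by
  classical
  have hKalg : IsAlgClosed (algebraicClosure ℚ ℂ) := (algebraicClosure.isAlgClosure ℚ ℂ).isAlgClosed
  have hKcount : Countable (algebraicClosure ℚ ℂ) :=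
    (Algebraic.countable ℚ ℂ).mono (fun x hx => (mem_algebraicClosure_iff.1 hx))
  have hσ : ∀ r : algebraicClosure ℚ ℂ, ∃ r' : algebraicClosure ℚ ℂ,
      algebraMap (algebraicClosure ℚ ℂ) ℂ r' =
        (starRingEnd ℂ) (algebraMap (algebraicClosure ℚ ℂ) ℂ r) := by
    intro r
    have h1 : IsAlgebraic ℚ (r : ℂ) := mem_algebraicClosure_iff.1 r.2
    have h2 : IsAlgebraic ℚ ((starRingEnd ℂ) (r : ℂ)) :=
      h1.algHom ((Complex.conjAe.toAlgHom).restrictScalars ℚ)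
    exact ⟨⟨_, mem_algebraicClosure_iff.2 h2⟩, rfl⟩
  refine measure_mono_null ?_ (aps_generic (ι := ↥S) (algebraicClosure ℚ ℂ))
  rintro c ⟨hc0, x', hxpk, hauto, hneq⟩
  by_contra hgen
  replace hgen : AlgebraicIndependent (algebraicClosure ℚ ℂ)
    (Sum.elim c (fun i => (starRingEnd ℂ) (c i))) := not_not.1 hgen
  apply hneq
  have hSne : S.Nonempty := Finset.card_pos.1 (by omega)
  set a := S.min' hSne with ha
  have haS : a ∈ S := S.min'_mem hSne
  have hamin : ∀ s ∈ S, a ≤ s := fun s hs => S.min'_le s hs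
  let e : ↥S → ℕ := fun s => (s : ℕ) - a
  have he : Function.Injective e := by
    intro s t h
    have h1 := hamin s s.2
    have h2 := hamin t t.2
    apply Subtype.ext
    simp only [e] at h
    omega
  set P0 : ℂ[X] := ∑ s, C (c s) * X ^ (e s) with hP0
  set x := sigOn (n := n) S c with hx
  have hPx : apsPoly x = X ^ a * P0 := by
    have h1 : apsPoly x = ∑ s : ↥S, C (c s) * X ^ (s : ℕ) := by
      ext l
      rw [apsPoly_coeff, finsetSum_coeff]
      simp only [coeff_C_mul, coeff_X_pow, extZ, hx, sigOn]
      by_cases hl : l ∈ S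
      · have := hSn l hl
        rw [dif_pos (by omega), Finset.sum_eq_single ⟨l, hl⟩]
        · simp [hl]
        · intro j _ hj
          rw [if_neg, mul_zero]
          intro h; exact hj (Subtype.ext h.symm)
        · simp
      · rw [Finset.sum_eq_zero]
        · simp [hl]
        · intro j _
          rw [if_neg, mul_zero]
          rintro rfl; exact hl j.2
    rw [h1, hP0, Finset.mul_sum]
    refine Finset.sum_congr rfl fun s _ => ?_
    have h2 : (s : ℕ) = a + e s := by
      have := hamin s s.2
      simp only [e]; omega
    conv_lhs => rw [h2, pow_add]
    ring
  have hP00 : P0.coeff 0 ≠ 0 := by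
    have h1 : (apsPoly x).coeff a = P0.coeff 0 := by
      rw [hPx, coeff_X_pow_mul', if_pos le_rfl, Nat.sub_self]
    rw [← h1, apsPoly_coeff, extZ, dif_pos (by have := hSn a haS; omega)]
    simp only [hx, sigOn]
    rw [dif_pos (by simpa using haS)]
    exact hc0 _
  have hP0ne : P0 ≠ 0 := by intro h; rw [h] at hP00; simp at hP00
  have hprod := aps_symm (n - 1) (apsPoly x') (apsPoly x) (apsPoly_natDegree _)
    (apsPoly_natDegree _) (by
      intro m hm
      rw [aps_autocorr _ _ (by omega), aps_autocorr _ _ (by omega)]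
      exact hauto ⟨m, by omega⟩)
  have hdegx : a + P0.natDegree ≤ n - 1 := by
    have := apsPoly_natDegree x
    rwa [hPx, natDegree_mul (pow_ne_zero _ X_ne_zero) hP0ne, natDegree_X_pow] at this
  have hprodx := aps_refl_mul (n - 1) a P0 hdegx
  rw [← hPx] at hprodx
  have hPpne : apsPoly x' ≠ 0 := by
    intro h
    rw [h, zero_mul, hprodx] at hprod
    have := mul_eq_zero.1 hprod.symm
    rcases this with h | h
    · exact pow_ne_zero _ X_ne_zero h
    · apply aps_mul_til_coeff hP00; rw [h]; simp
  obtain ⟨a', P0', hPx', hPp00⟩ : ∃ (a' : ℕ) (P0' : ℂ[X]), apsPoly x' = X ^ a' * P0' ∧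
      P0'.coeff 0 ≠ 0 := by
    obtain ⟨q, hq, hq2⟩ := exists_eq_pow_rootMultiplicity_mul_and_not_dvd (apsPoly x') hPpne 0
    rw [C_0, sub_zero] at hq hq2
    exact ⟨_, q, hq, fun h => hq2 (X_dvd_iff.2 h)⟩
  have hPp0ne : P0' ≠ 0 := by intro h; rw [h] at hPp00; simp at hPp00
  have hdegx' : a' + P0'.natDegree ≤ n - 1 := by
    have := apsPoly_natDegree x'
    rwa [hPx', natDegree_mul (pow_ne_zero _ X_ne_zero) hPp0ne, natDegree_X_pow] at this
  have hprodx' := aps_refl_mul (n - 1) a' P0' hdegx'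
  rw [← hPx'] at hprodx'
  rw [hprodx, hprodx'] at hprod
  have hfac := (aps_cancel (aps_mul_til_coeff hPp00) (aps_mul_til_coeff hP00) hprod).symm
  obtain ⟨A, B, u, hAB, hAB', hu, hA0⟩ := aps_factor hP00 hPp00 hfac
  have hu0 : u ≠ 0 := by intro h; rw [h] at hu; simp at hu
  have hB0 : B.coeff 0 ≠ 0 := by
    intro h; apply hP00; rw [hAB, mul_coeff_zero, h, mul_zero]
  have hsupp : (A * apsTil B).support.card ≤ Fintype.card ↥S := by
    have h1 : (A * apsTil B).support ⊆ P0'.support := by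
      intro l hl
      rw [mem_support_iff] at hl ⊢
      rw [hAB', coeff_C_mul]
      exact mul_ne_zero hu0 hl
    rw [Fintype.card_coe, hScard]
    refine (Finset.card_le_card h1).trans (le_trans ?_ hxpk)
    rw [Set.ncard_eq_toFinset_card']
    rw [← Finset.card_image_of_injective P0'.support (add_left_injective a'),
      ← Finset.card_image_of_injective _ (Fin.val_injective (n := n))]
    apply Finset.card_le_card
    intro l hl
    obtain ⟨i, hi, rfl⟩ := Finset.mem_image.1 hl
    have h2 : (apsPoly x').coeff (i + a') ≠ 0 := by
      rw [hPx', coeff_X_pow_mul]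
      exact mem_support_iff.1 hi
    rw [apsPoly_coeff, extZ] at h2
    split_ifs at h2 with h3
    · refine Finset.mem_image.2 ⟨⟨i + a', by omega⟩, ?_, rfl⟩
      rw [Set.mem_toFinset]
      exact h2
    · exact absurd rfl h2
  have hap : ¬ ∃ a d : ℕ, Finset.image e Finset.univ =
      Finset.image (fun i => a + i * d) (Finset.range (Fintype.card ↥S)) := by
    rintro ⟨a1, d, h⟩
    apply haper
    refine ⟨a + a1, d, ?_⟩
    have h1 : S = Finset.image (fun l => a + l) (Finset.image e Finset.univ) := by
      ext l
      simp only [Finset.mem_image, Finset.mem_univ, true_and, exists_exists_eq_and, e]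
      constructor
      · intro hl
        exact ⟨⟨l, hl⟩, by have := hamin l hl; simp only; omega⟩
      · rintro ⟨s, rfl⟩
        have := hamin s s.2
        rw [Nat.add_sub_cancel' this]
        exact s.2
    rw [h1, h, Finset.image_image, Fintype.card_coe, hScard]
    congr 1
    ext i
    simp only [Function.comp]
    ring
  have hZx : ∀ j, extZ x j = apsZ P0 (j - a) := by
    intro j; rw [← apsZ_poly, hPx, apsZ_X_pow_mul]
  have hZx' : ∀ j, extZ x' j = apsZ P0' (j - a') := by
    intro j; rw [← apsZ_poly, hPx', apsZ_X_pow_mul]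
  rcases aps_core hσ c hgen e he hAB.symm hA0 hB0 hsupp hap with hA | hB
  · have hA1 : A = 1 := by rw [eq_C_of_natDegree_eq_zero hA, hA0, C_1]
    rw [hA1, one_mul] at hAB hAB'
    refine ⟨u, P0.natDegree + a + a', hu, Or.inr fun j => ?_⟩
    rw [hZx, hZx', hAB', ← hAB, apsZ_C_mul, apsZ_til, map_mul, Complex.conj_conj, ← mul_assoc,
      Complex.mul_conj, Complex.normSq_eq_norm_sq, hu]
    rw [show (P0.natDegree : ℤ) - (P0.natDegree + a + a' - j - a') = j - a by ring]
    simp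
  · obtain ⟨β, hβ⟩ : ∃ β, B = C β := ⟨_, eq_C_of_natDegree_eq_zero hB⟩
    have hβ0 : β ≠ 0 := by rintro rfl; rw [hβ] at hB0; simp at hB0
    have hβ0' : ‖β‖ ≠ 0 := by simpa using hβ0
    have hP' : P0' = C (u * ((starRingEnd ℂ) β / β)) * P0 := by
      rw [hAB', hAB, hβ, apsTil_C]
      have : C (u * ((starRingEnd ℂ) β / β)) * C β = C u * (C ((starRingEnd ℂ) β) : ℂ[X]) := by
        rw [← C_mul, ← C_mul]; congr 1; field_simp
      linear_combination (-A) * this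
    set w := u * ((starRingEnd ℂ) β / β) with hw
    have hwn : ‖w‖ = 1 := by
      rw [hw, norm_mul, norm_div, RCLike.norm_conj, div_self hβ0', hu, one_mul]
    refine ⟨(starRingEnd ℂ) w, a - a', by rw [RCLike.norm_conj, hwn], Or.inl fun j => ?_⟩
    rw [hZx, hZx', hP', apsZ_C_mul, ← mul_assoc, mul_comm ((starRingEnd ℂ) w),
      Complex.mul_conj, Complex.normSq_eq_norm_sq, hwn]
    rw [show j - ((a : ℤ) - a') - a' = j - a by ring]
    simp
end

section
/- Let n ≥ 4, let k satisfy 3 ≤ k ≤ n−1, and let S ⊆ {0,…,n−1} with |S| = k (no aperiodicity assumption). For c ∈ ℂ^S, let x(c) ∈ ℂⁿ be the signal with x(c)_i = c_i for i ∈ S and x(c)_i = 0 otherwise. Then the set of c ∈ (ℂ\{0})^S for which there exists a signal x′ ∈ ℂⁿ with at most k nonzero entries whose autocorrelation equals that of x(c) and whose support {i : x′_i ≠ 0} is equal neither to {i + m : i ∈ S} for some m ∈ ℤ nor to {m − i : i ∈ S} for some m ∈ ℤ, has Lebesgue measure zero in ℂ^S ≅ ℂᵏ. (In words: for almost all value assignments,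 every sparsest solution with the same autocorrelation has support equal to a shift or a shifted reflection of S.) -/
open MeasureTheory

/-- A finite support `S ⊆ ℕ`, viewed inside `ℤ`. -/
def suppZ (S : Finset ℕ) : Set ℤ := {z : ℤ | ∃ i ∈ S, (i : ℤ) = z}

section Helpers1
open Polynomial
open scoped Pointwise

/-- relative algebraic closure of `ℚ(G)` inside `ℂ`. -/
noncomputable def clF (G : Set ℂ) : Subfield ℂ :=
  (algebraicClosure (IntermediateField.adjoin ℚ G) ℂ).toSubfield

lemma mem_clF {G : Set ℂ} {x : ℂ} :
    x ∈ clF G ↔ IsAlgebraic (IntermediateField.adjoin ℚ G) x := by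
  unfold clF
  exact mem_algebraicClosure_iff

lemma subset_clF {G : Set ℂ} {x : ℂ} (hx : x ∈ G) : x ∈ clF G :=
  mem_clF.2 <| isAlgebraic_algebraMap
    (⟨x, IntermediateField.subset_adjoin ℚ G hx⟩ : IntermediateField.adjoin ℚ G)

lemma clF_alg {G : Set ℂ} {x : ℂ} (p : ℂ[X]) (hp : p ≠ 0) (hc : ∀ i, p.coeff i ∈ clF G)
    (hx : p.eval x = 0) : x ∈ clF G := by
  have hl : p ∈ Polynomial.lifts (algebraMap (algebraicClosure (IntermediateField.adjoin ℚ G) ℂ) ℂ) := by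
    rw [Polynomial.lifts_iff_coeff_lifts]
    intro i
    exact ⟨⟨p.coeff i, hc i⟩, rfl⟩
  obtain ⟨q, hq⟩ := hl
  have : IsAlgebraic (algebraicClosure (IntermediateField.adjoin ℚ G) ℂ) x := by
    refine ⟨q, ?_, ?_⟩
    · rintro rfl
      simp at hq; exact hp hq.symm
    · rw [Polynomial.aeval_def, ← Polynomial.eval_map]
      have : q.map (algebraMap (algebraicClosure (IntermediateField.adjoin ℚ G) ℂ) ℂ) = p := hq
      rw [this, hx]
  exact mem_clF.2 (this.restrictScalars _)

lemma clF_le {G H : Set ℂ} (h : ∀ x ∈ G, x ∈ clF H) {x : ℂ} (hx : x ∈ clF G) : x ∈ clF H := by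
  have hle : ∀ y ∈ IntermediateField.adjoin ℚ G, y ∈ clF H := by
    intro y hy
    have h1 : IntermediateField.adjoin ℚ G ≤
        (algebraicClosure (IntermediateField.adjoin ℚ H) ℂ).restrictScalars ℚ :=
      IntermediateField.adjoin_le_iff.2 h
    exact h1 hy
  obtain ⟨p, hp, hpx⟩ := mem_clF.1 hx
  refine clF_alg (p.map (algebraMap _ ℂ)) ?_ ?_ ?_
  · exact (Polynomial.map_ne_zero_iff (algebraMap (IntermediateField.adjoin ℚ G) ℂ).injective).2 hp
  · intro i; rw [coeff_map]; exact hle _ (p.coeff i).2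
  · rw [Polynomial.eval_map]; exact hpx

lemma clF_card {ι : Type} [Fintype ι] {x : ι → ℂ} (hx : AlgebraicIndependent ℚ x)
    (G : Finset ℂ) (h : ∀ i, x i ∈ clF (G : Set ℂ)) : Fintype.card ι ≤ G.card := by
  have h1 : (AlgebraicIndependent.matroid ℚ ℂ).Indep (Set.range x) := by
    rw [AlgebraicIndependent.matroid_indep_iff]
    exact AlgebraicIndependent.to_subtype_range hx
  have h2 : Set.range x ⊆ (AlgebraicIndependent.matroid ℚ ℂ).closure (G : Set ℂ) := by
    rw [AlgebraicIndependent.matroid_closure_eq]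
    rintro _ ⟨i, rfl⟩
    have := mem_clF.1 (h i)
    have h3 : IsAlgebraic (Algebra.adjoin ℚ (G : Set ℂ)) (x i) := by
      exact (IntermediateField.isAlgebraic_adjoin_iff.1 this)
    exact h3
  have h4 := (AlgebraicIndependent.matroid ℚ ℂ).eRk_mono h2
  rw [h1.eRk_eq_encard, Matroid.eRk_closure_eq] at h4
  have h5 := h4.trans (Matroid.eRk_le_encard _ _)
  have hinj : Function.Injective x := hx.injective
  rw [← Set.image_univ, hinj.encard_image, Set.encard_univ, Set.encard_coe_eq_coe_finsetCard] at h5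
  simpa using h5

lemma clF_factor {G : Set ℂ} (f g : ℂ[X]) (hf : f ≠ 0) (hfc : ∀ i, f.coeff i ∈ clF G)
    (hg : g.Monic) (hd : g ∣ f) (i : ℕ) : g.coeff i ∈ clF G := by
  have hroots : ∀ a ∈ g.roots, a ∈ clF G := by
    intro a ha
    refine clF_alg f hf hfc ?_
    obtain ⟨q, rfl⟩ := hd
    simp [(mem_roots'.1 ha).2.eq_zero]
  have hs : g.Splits := IsAlgClosed.splits g
  have := hs.mem_lift_of_roots_mem_range hg (clF G).subtype (by
    intro a ha
    exact ⟨⟨a, hroots a ha⟩, rfl⟩)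
  rw [Polynomial.lifts_iff_coeff_lifts] at this
  obtain ⟨y, hy⟩ := this i
  rw [← hy]; exact y.2

lemma prod_support {G : Set ℂ} {α : ℂ} (hα : α ∉ clF G) (a q : ℂ[X])
    (ha : ∀ i, (a.scaleRoots α⁻¹).coeff i ∈ clF G) (hq : ∀ i, q.coeff i ∈ clF G)
    {i j : ℕ} (hi : a.coeff i ≠ 0) (hj : q.coeff j ≠ 0) : (a * q).coeff (i + j) ≠ 0 := by
  intro h0
  have hα0 : α ≠ 0 := by rintro rfl; exact hα (clF G).zero_mem
  rw [coeff_mul] at h0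
  let b := a.scaleRoots α⁻¹
  have hb : ∀ i, a.coeff i = b.coeff i * α ^ (a.natDegree - i) := by
    intro i
    simp only [b, coeff_scaleRoots]
    rw [mul_assoc, ← mul_pow, inv_mul_cancel₀ hα0]; simp
  let p : ℂ[X] := ∑ x ∈ Finset.HasAntidiagonal.antidiagonal (i + j),
    monomial (a.natDegree - x.1) (b.coeff x.1 * q.coeff x.2)
  refine hα (clF_alg p ?_ ?_ ?_)
  · intro hp
    have := congrArg (fun f => f.coeff (a.natDegree - i)) hp
    simp only [p, finsetSum_coeff, coeff_monomial, coeff_zero] at this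
    rw [Finset.sum_eq_single (i, j)] at this
    · simp at this
      rcases this with h | h
      · apply hi; rw [hb, h, zero_mul]
      · exact hj h
    · rintro ⟨x, y⟩ hxy hne
      rw [Finset.HasAntidiagonal.mem_antidiagonal] at hxy
      split_ifs with h
      · by_cases hx : a.coeff x = 0
        · have : b.coeff x = 0 := by
            simp only [b, coeff_scaleRoots, hx, zero_mul]
          simp [this]
        · have h1 := le_natDegree_of_ne_zero hx
          have h2 := le_natDegree_of_ne_zero hi
          exfalso; apply hne
          have : x = i := by omega
          subst this
          simp; omega
      · rfl
    · intro h; simp at h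
  · intro t
    simp only [p, finsetSum_coeff, coeff_monomial]
    refine sum_mem fun x _ => ?_
    split_ifs
    · exact mul_mem (ha _) (hq _)
    · exact zero_mem _
  · simp only [p, eval_finsetSum, eval_monomial]
    rw [← h0]
    refine Finset.sum_congr rfl fun x _ => ?_
    rw [hb x.1]; ring

lemma gap_eq (U V : Finset ℕ) (hc : (U + V).card ≤ U.card + V.card - 1)
    {u u' v v' : ℕ} (hu : u ∈ U) (hu' : u' ∈ U) (hv : v ∈ V) (hv' : v' ∈ V)
    (huu : u < u') (hvv : v < v') (hU : ∀ x ∈ U, x ≤ u ∨ u' ≤ x) (hV : ∀ x ∈ V, x ≤ v ∨ v' ≤ x) :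
    u' + v = u + v' := by
  by_contra hne
  set U1 := U.filter (· ≤ u)
  set U2 := U.filter (fun x => ¬ x ≤ u)
  set V1 := V.filter (· ≤ v)
  set V2 := V.filter (fun x => ¬ x ≤ v)
  have hUc : U1.card + U2.card = U.card := Finset.card_filter_add_card_filter_not _
  have hVc : V1.card + V2.card = V.card := Finset.card_filter_add_card_filter_not _
  have hU1 : U1.Nonempty := ⟨u, by simp [U1, hu]⟩
  have hV1 : V1.Nonempty := ⟨v, by simp [V1, hv]⟩
  have hU2 : U2.Nonempty := ⟨u', by simp [U2, hu', huu]⟩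
  have hV2 : V2.Nonempty := ⟨v', by simp [V2, hv', hvv]⟩
  have c1 := cauchy_davenport_add_of_linearOrder_isCancelAdd hU1 hV1
  have c2 := cauchy_davenport_add_of_linearOrder_isCancelAdd hU2 hV2
  have hsub : (U1 + V1) ∪ ({u' + v, u + v'} ∪ (U2 + V2)) ⊆ U + V := by
    intro x hx
    simp only [Finset.mem_union, Finset.mem_insert, Finset.mem_singleton] at hx
    rcases hx with hx | (rfl | rfl) | hx
    · exact Finset.add_subset_add (Finset.filter_subset _ _) (Finset.filter_subset _ _) hx
    · exact Finset.add_mem_add hu' hv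
    · exact Finset.add_mem_add hu hv'
    · exact Finset.add_subset_add (Finset.filter_subset _ _) (Finset.filter_subset _ _) hx
  have b1 : ∀ x ∈ U1 + V1, x ≤ u + v := by
    intro x hx
    obtain ⟨a, ha, b, hb, rfl⟩ := Finset.mem_add.1 hx
    simp [U1] at ha; simp [V1] at hb; omega
  have b2 : ∀ x ∈ U2 + V2, u' + v' ≤ x := by
    intro x hx
    obtain ⟨a, ha, b, hb, rfl⟩ := Finset.mem_add.1 hx
    simp [U2] at ha; simp [V2] at hb
    have := hU a ha.1
    have := hV b hb.1
    omega
  have hcard := Finset.card_le_card hsub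
  rw [Finset.card_union_of_disjoint, Finset.card_union_of_disjoint, Finset.card_pair hne] at hcard
  · have := hU1.card_pos; have := hU2.card_pos; have := hV1.card_pos; have := hV2.card_pos
    omega
  · rw [Finset.disjoint_left]
    intro x hx hx2
    have := b2 x hx2
    simp at hx; omega
  · rw [Finset.disjoint_left]
    intro x hx hx2
    have := b1 x hx
    simp only [Finset.mem_union, Finset.mem_insert, Finset.mem_singleton] at hx2
    rcases hx2 with (h | h) | h
    · omega
    · omega
    · have := b2 x h; omega

lemma ap_sym (U V : Finset ℕ) (hc : (U + V).card ≤ U.card + V.card - 1)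
    (hU0 : 0 ∈ U) (hV0 : 0 ∈ V) {w : ℕ} (hw : w ∈ U) (hw0 : w ≠ 0)
    {M : ℕ} (hM : M ∈ V) (hMmax : ∀ v ∈ V, v ≤ M) : ∀ v ∈ V, M - v ∈ V := by
  -- the first gap of `U`
  have hne : (U.filter (0 < ·)).Nonempty := ⟨w, by simp [hw]; omega⟩
  obtain ⟨d, hd⟩ : ∃ d, d = (U.filter (0 < ·)).min' hne := ⟨_, rfl⟩
  have hdm : d ∈ U.filter (0 < ·) := hd ▸ Finset.min'_mem _ _
  simp at hdm
  have hstep : ∀ v ∈ V, v ≠ 0 → d ≤ v ∧ v - d ∈ V := by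
    intro v hv hv0
    have hne2 : (V.filter (· < v)).Nonempty := ⟨0, by simp [hV0]; omega⟩
    obtain ⟨p, hp⟩ : ∃ p, p = (V.filter (· < v)).max' hne2 := ⟨_, rfl⟩
    have hpm : p ∈ V.filter (· < v) := hp ▸ Finset.max'_mem _ _
    simp at hpm
    have := gap_eq U V hc hU0 hdm.1 hpm.1 hv hdm.2 hpm.2 (by
      intro x hx
      by_cases h : x = 0
      · left; omega
      · right; rw [hd]; apply Finset.min'_le; simp [hx]; omega) (by
      intro x hx
      by_cases h : x < v
      · left; rw [hp]; apply Finset.le_max'; simp [hx, h]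
      · right; omega)
    refine ⟨by omega, ?_⟩
    have h2 : v - d = p := by omega
    rw [h2]; exact hpm.1
  have hdiv : ∀ v, v ∈ V → d ∣ v := by
    intro v
    induction v using Nat.strong_induction_on with
    | _ v ih =>
      intro hv
      by_cases h0 : v = 0
      · simp [h0]
      · obtain ⟨h1, h2⟩ := hstep v hv h0
        have h3 := ih (v - d) (by omega) h2
        have : v = (v - d) + d := by omega
        rw [this]; exact dvd_add h3 dvd_rfl
  have hdown : ∀ j, ∀ v ∈ V, d * j ≤ v → v - d * j ∈ V := by
    intro j
    induction j with
    | zero => intro v hv _; simpa using hv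
    | succ j ih =>
      intro v hv hle
      rw [mul_add, mul_one] at hle ⊢
      have h1 := ih v hv (by omega)
      obtain ⟨h2, h3⟩ := hstep _ h1 (by omega)
      rwa [Nat.sub_sub] at h3
  intro v hv
  obtain ⟨j, rfl⟩ := hdiv v hv
  exact hdown j M hM (hMmax _ hv)

/-- conjugate reversal -/
noncomputable def crev (f : ℂ[X]) : ℂ[X] := (f.map (starRingEnd ℂ)).reverse

lemma crev_mul (f g : ℂ[X]) : crev (f * g) = crev f * crev g := by
  simp [crev, reverse_mul_of_domain]

lemma crev_X_pow_mul (n : ℕ) (f : ℂ[X]) : crev (X ^ n * f) = crev f := by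
  rw [crev, Polynomial.map_mul, Polynomial.map_pow, map_X, reverse_X_pow_mul, crev]

lemma crev_X_pow (n : ℕ) : crev (X ^ n) = 1 := by
  have h := crev_X_pow_mul n 1
  rw [mul_one] at h
  rw [h, crev, Polynomial.map_one, ← C_1, reverse_C]

lemma crev_ne_zero {f : ℂ[X]} (hf : f ≠ 0) : crev f ≠ 0 := by
  rw [crev, Ne, reverse_eq_zero, Polynomial.map_eq_zero]; exact hf

lemma crev_coeff_zero {f : ℂ[X]} (hf : f ≠ 0) : (crev f).coeff 0 ≠ 0 := by
  rw [crev, coeff_zero_reverse]; simpa using hf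

lemma natDegree_crev {f : ℂ[X]} (hf : f.coeff 0 ≠ 0) : (crev f).natDegree = f.natDegree := by
  have : (f.map (starRingEnd ℂ)).natTrailingDegree = 0 := by
    rw [natTrailingDegree_eq_zero]; right; simpa using hf
  rw [crev, reverse_natDegree, this, natDegree_map]; simp

lemma crev_coeff (f : ℂ[X]) {i : ℕ} (hi : i ≤ f.natDegree) :
    (crev f).coeff i = starRingEnd ℂ (f.coeff (f.natDegree - i)) := by
  rw [crev, coeff_reverse, natDegree_map, revAt_le hi, coeff_map]

lemma crev_coeff_gt (f : ℂ[X]) {i : ℕ} (hi : f.natDegree < i) :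
    (crev f).coeff i = 0 := by
  rw [crev, coeff_reverse, natDegree_map, revAt_eq_self_of_lt hi, coeff_map,
    coeff_eq_zero_of_natDegree_lt hi]; simp

lemma strip (f : ℂ[X]) (hf : f ≠ 0) : ∃ v g, f = X ^ v * g ∧ g.coeff 0 ≠ 0 := by
  obtain ⟨g, hg, hd⟩ := exists_eq_pow_rootMultiplicity_mul_and_not_dvd f hf 0
  refine ⟨_, g, by simpa using hg, ?_⟩
  rw [map_zero, sub_zero, X_dvd_iff] at hd
  exact hd

lemma X_pow_strip {i j : ℕ} {f g : ℂ[X]} (hf : f.coeff 0 ≠ 0) (hg : g.coeff 0 ≠ 0)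
    (h : X ^ i * f = X ^ j * g) : f = g := by
  have hij : i = j := by
    by_contra hne
    rcases Nat.lt_or_gt_of_ne hne with h1 | h1
    · have := congrArg (fun p => p.coeff i) h
      simp only [coeff_X_pow_mul'] at this
      simp [not_le.2 h1, hf] at this
    · have := congrArg (fun p => p.coeff j) h
      simp only [coeff_X_pow_mul'] at this
      simp [not_le.2 h1] at this
      exact hg this.symm
  subst hij
  exact mul_left_cancel₀ (pow_ne_zero _ X_ne_zero) h

lemma factor_flip (P Q : ℂ[X]) (hP : P ≠ 0) (hQ : Q ≠ 0) (i j : ℕ)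
    (h : X ^ i * (P * crev P) = X ^ j * (Q * crev Q)) :
    ∃ (A B : ℂ[X]) (v v' : ℕ) (u : ℂ), A.Monic ∧ A.coeff 0 ≠ 0 ∧ B.coeff 0 ≠ 0 ∧ u ≠ 0 ∧
      P = X ^ v * (A * B) ∧ Q = C u * (X ^ v' * (A * crev B)) := by
  classical
  obtain ⟨D, B1, C1, hPD, hQD, hcop⟩ : ∃ D B1 C1 : ℂ[X], P = D * B1 ∧ Q = D * C1 ∧ IsCoprime B1 C1 := by
    have hg : gcd P Q ≠ 0 := fun h => hP ((gcd_eq_zero_iff _ _).1 h).1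
    obtain ⟨B1, hB⟩ := gcd_dvd_left P Q
    obtain ⟨C1, hC⟩ := gcd_dvd_right P Q
    refine ⟨gcd P Q, B1, C1, hB, hC, ?_⟩
    obtain ⟨x, y, hxy⟩ := exists_gcd_eq_mul_add_mul P Q
    refine ⟨x, y, ?_⟩
    apply mul_left_cancel₀ hg
    calc gcd P Q * (x * B1 + y * C1) = (gcd P Q * B1) * x + (gcd P Q * C1) * y := by ring
      _ = P * x + Q * y := by rw [← hB, ← hC]
      _ = gcd P Q * 1 := by rw [← hxy, mul_one]
  have hD0 : D ≠ 0 := by rintro rfl; simp at hPD; exact hP hPD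
  have hB10 : B1 ≠ 0 := by rintro rfl; simp at hPD; exact hP hPD
  have hC10 : C1 ≠ 0 := by rintro rfl; simp at hQD; exact hQ hQD
  obtain ⟨vD, A0, hA, hA0⟩ := strip D hD0
  obtain ⟨vB, B0, hB, hB0⟩ := strip B1 hB10
  obtain ⟨vC, C0, hC, hC0⟩ := strip C1 hC10
  have hA0' : A0 ≠ 0 := by rintro rfl; simp at hA0
  have hB0' : B0 ≠ 0 := by rintro rfl; simp at hB0
  have hC0' : C0 ≠ 0 := by rintro rfl; simp at hC0
  have hcop' : IsCoprime B0 C0 := by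
    rw [hB, hC] at hcop
    exact (hcop.of_mul_left_right).of_mul_right_right
  have hBC : B0 * crev B0 = C0 * crev C0 := by
    rw [hPD, hQD, hA, hB, hC] at h
    simp only [crev_mul, crev_X_pow] at h
    have h2 : X ^ (i + vB) * (B0 * crev B0) = X ^ (j + vC) * (C0 * crev C0) := by
      apply mul_left_cancel₀ (a := X ^ vD * A0 * crev A0)
      · exact mul_ne_zero (mul_ne_zero (pow_ne_zero _ X_ne_zero) hA0') (crev_ne_zero hA0')
      · linear_combination h
    refine X_pow_strip ?_ ?_ h2
    · rw [mul_coeff_zero]; exact mul_ne_zero hB0 (crev_coeff_zero hB0')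
    · rw [mul_coeff_zero]; exact mul_ne_zero hC0 (crev_coeff_zero hC0')
  have hdvd : C0 ∣ crev B0 := hcop'.symm.dvd_of_dvd_mul_left ⟨crev C0, hBC⟩
  obtain ⟨E, hE⟩ := hdvd
  have hE0 : E ≠ 0 := by rintro rfl; rw [mul_zero] at hE; exact crev_ne_zero hB0' hE
  have hdeg : E.natDegree = 0 := by
    have h1 := congrArg natDegree hBC
    rw [natDegree_mul hB0' (crev_ne_zero hB0'), natDegree_mul hC0' (crev_ne_zero hC0'),
      natDegree_crev hB0, natDegree_crev hC0] at h1
    have h2 := congrArg natDegree hE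
    rw [natDegree_mul hC0' hE0, natDegree_crev hB0] at h2
    omega
  obtain ⟨e, rfl⟩ : ∃ e, E = C e := ⟨_, eq_C_of_natDegree_eq_zero hdeg⟩
  have he : e ≠ 0 := by rintro rfl; simp at hE0
  set l := A0.leadingCoeff with hl
  have hl0 : l ≠ 0 := leadingCoeff_ne_zero.2 hA0'
  have hcC : crev (C l * B0) = C (starRingEnd ℂ l) * crev B0 := by
    rw [crev_mul]; congr 1; simp [crev]
  have hs0 : starRingEnd ℂ l ≠ 0 := by simpa using hl0
  refine ⟨C l⁻¹ * A0, C l * B0, vD + vB, vD + vC, l * (starRingEnd ℂ l)⁻¹ * e⁻¹, ?_, ?_, ?_, ?_, ?_, ?_⟩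
  · rw [mul_comm]; exact monic_mul_leadingCoeff_inv hA0'
  · simp [hl0, hA0]
  · simp [hl0, hB0]
  · simp [hl0, he]
  · rw [hPD, hA, hB]
    have : (C l⁻¹ * C l : ℂ[X]) = 1 := by rw [← C_mul, inv_mul_cancel₀ hl0, C_1]
    linear_combination (-(X ^ (vD + vB) * A0 * B0)) * this
  · rw [hQD, hA, hC, hcC, hE]
    have e1 : (C (l * (starRingEnd ℂ l)⁻¹ * e⁻¹) * (C l⁻¹ * C (starRingEnd ℂ l) * C e) : ℂ[X]) = 1 := by
      rw [← C_mul, ← C_mul, ← C_mul, ← C_1]; congr 1; field_simp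
    linear_combination (-(X ^ (vD + vC) * A0 * C0)) * e1

lemma mv_null : ∀ (n : ℕ) (p : MvPolynomial (Fin n) ℂ), p ≠ 0 →
    volume {x : Fin n → ℝ | MvPolynomial.eval (fun i => (x i : ℂ)) p = 0} = 0 := by
  intro n
  induction n with
  | zero =>
    intro p hp
    have : {x : Fin 0 → ℝ | MvPolynomial.eval (fun i => (x i : ℂ)) p = 0} = ∅ := by
      ext x
      simp only [Set.mem_ofPred_eq, Set.mem_empty_iff_false, iff_false]
      intro h
      apply hp
      rw [MvPolynomial.eq_C_of_isEmpty p] at h ⊢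
      simp at h
      simp [h]
    rw [this]; simp
  | succ n ih =>
    intro p hp
    have hmeas : MeasurableSet {x : Fin (n+1) → ℝ | MvPolynomial.eval (fun i => (x i : ℂ)) p = 0} := by
      apply IsClosed.measurableSet
      apply isClosed_eq _ continuous_const
      exact (MvPolynomial.continuous_eval p).comp (by fun_prop)
    have hmp := (volume_preserving_piFinSuccAbove (fun _ : Fin (n+1) => ℝ) 0).symm
    rw [← hmp.measure_preimage hmeas.nullMeasurableSet, Measure.volume_eq_prod,
      Measure.measure_prod_null (hmp.measurable hmeas)]
    set q := MvPolynomial.finSuccEquiv ℂ n p with hq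
    have hq0 : q ≠ 0 := by simpa [hq] using hp
    have hfin : {t : ℝ | q.eval (MvPolynomial.C (t : ℂ)) = 0}.Finite := by
      have h1 : {r | q.IsRoot r}.Finite := Polynomial.finite_setOfPred_isRoot hq0
      refine (h1.preimage (f := fun t : ℝ => (MvPolynomial.C (t : ℂ) : MvPolynomial (Fin n) ℂ)) ?_).subset ?_
      · intro a _ b _ hab
        simpa using hab
      · intro t ht; exact ht
    have hae : ∀ᵐ t : ℝ, q.eval (MvPolynomial.C (t : ℂ)) ≠ 0 := by
      rw [ae_iff]; simp only [not_not, ne_eq]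
      exact hfin.measure_zero _
    filter_upwards [hae] with t ht
    refine Eq.trans ?_ (ih _ ht)
    congr 1
    ext y
    simp only [Set.mem_preimage, Set.mem_ofPred_eq]
    have : (fun i => (((MeasurableEquiv.piFinSuccAbove (fun _ : Fin (n+1) => ℝ) 0).symm (t, y)) i : ℂ))
       = Fin.cons (t : ℂ) (fun i => (y i : ℂ)) := by
      ext i
      refine Fin.cases ?_ (fun i => ?_) i
      · simp [MeasurableEquiv.piFinSuccAbove]
      · simp [MeasurableEquiv.piFinSuccAbove]
    have h2 := Polynomial.eval₂_at_apply (p := q) (MvPolynomial.eval (fun i => (y i : ℂ)))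
      (MvPolynomial.C (t : ℂ))
    rw [MvPolynomial.eval_C] at h2
    rw [this, MvPolynomial.eval_eq_eval_mv_eval', Polynomial.eval_map, ← hq, h2]

lemma ae_algIndep (S : Type) [Fintype S] :
    ∀ᵐ c : S → ℂ, AlgebraicIndependent ℚ (Sum.elim c (fun s => starRingEnd ℂ (c s))) := by
  classical
  have key : ∀ p : MvPolynomial (S ⊕ S) ℚ, p ≠ 0 →
      ∀ᵐ c : S → ℂ, MvPolynomial.aeval (Sum.elim c (fun s => starRingEnd ℂ (c s))) p ≠ 0 := by
    intro p hp
    let e : S ⊕ S ≃ Fin (Fintype.card (S ⊕ S)) := Fintype.equivFin _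
    let m := Fintype.card (S ⊕ S)
    let L : (S → ℂ) ≃ₗ[ℝ] (Fin m → ℝ) :=
      { toFun := fun c i => Sum.elim (fun s => (c s).re) (fun s => (c s).im) (e.symm i)
        invFun := fun x s => ⟨x (e (Sum.inl s)), x (e (Sum.inr s))⟩
        map_add' := by
          intro a b; ext i
          rcases h : e.symm i with s | s <;> simp [h]
        map_smul' := by
          intro r b; ext i
          rcases h : e.symm i with s | s <;> simp [h]
        left_inv := by
          intro c; ext s; simp
        right_inv := by
          intro x; ext i
          obtain ⟨j, rfl⟩ := e.surjective i
          rcases j with s | s <;> simp }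
    -- substitution
    let f : S ⊕ S → MvPolynomial (Fin m) ℂ := Sum.elim
      (fun s => MvPolynomial.X (e (Sum.inl s)) + MvPolynomial.C Complex.I * MvPolynomial.X (e (Sum.inr s)))
      (fun s => MvPolynomial.X (e (Sum.inl s)) - MvPolynomial.C Complex.I * MvPolynomial.X (e (Sum.inr s)))
    let g : S ⊕ S → MvPolynomial (S ⊕ S) ℂ := Sum.elim
      (fun s => MvPolynomial.C (1/2) * (MvPolynomial.X (Sum.inl s) + MvPolynomial.X (Sum.inr s)))
      (fun s => MvPolynomial.C (-Complex.I/2) * (MvPolynomial.X (Sum.inl s) - MvPolynomial.X (Sum.inr s)))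
    let p' : MvPolynomial (S ⊕ S) ℂ := MvPolynomial.map (algebraMap ℚ ℂ) p
    have hp' : p' ≠ 0 := by
      intro h
      apply hp
      apply MvPolynomial.map_injective (algebraMap ℚ ℂ) (algebraMap ℚ ℂ).injective
      simpa [p'] using h
    let P : MvPolynomial (Fin m) ℂ := MvPolynomial.bind₁ f p'
    have hII : (MvPolynomial.C Complex.I : MvPolynomial (S ⊕ S) ℂ) * MvPolynomial.C (-Complex.I/2)
        = MvPolynomial.C (1/2) := by
      rw [← MvPolynomial.C_mul]; congr 1
      have := Complex.I_mul_I
      linear_combination (-1/2) * this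
    have h12 : (MvPolynomial.C (1/2) : MvPolynomial (S ⊕ S) ℂ) + MvPolynomial.C (1/2) = 1 := by
      rw [← MvPolynomial.C_add, ← MvPolynomial.C_1]; congr 1; norm_num
    have hP : P ≠ 0 := by
      intro h
      have h2 : MvPolynomial.bind₁ (fun i => g (e.symm i)) P = p' := by
        simp only [P]
        rw [MvPolynomial.bind₁_bind₁]
        have : (fun i => MvPolynomial.bind₁ (fun i => g (e.symm i)) (f i)) = MvPolynomial.X := by
          funext i
          rcases i with s | s
          · simp only [f, g, Sum.elim_inl, map_add, map_mul, MvPolynomial.bind₁_X_right,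
              Equiv.symm_apply_apply, Sum.elim_inr, MvPolynomial.bind₁_C_right]
            linear_combination (MvPolynomial.X (Sum.inl s) - MvPolynomial.X (Sum.inr s)) * hII
              + (MvPolynomial.X (Sum.inl s)) * h12
          · simp only [f, g, Sum.elim_inl, map_sub, map_mul, MvPolynomial.bind₁_X_right,
              Equiv.symm_apply_apply, Sum.elim_inr, MvPolynomial.bind₁_C_right]
            linear_combination (-(MvPolynomial.X (Sum.inl s) - MvPolynomial.X (Sum.inr s))) * hII
              + (MvPolynomial.X (Sum.inr s)) * h12
        rw [this]
        simp
      rw [h, map_zero] at h2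
      exact hp' h2.symm
    have hnull := mv_null m P hP
    have hL : Measure.map L.toContinuousLinearEquiv (volume : Measure (S → ℂ)) ≪ volume := by
      have : (Measure.map L.toContinuousLinearEquiv (volume : Measure (S → ℂ))).IsAddHaarMeasure :=
        L.toContinuousLinearEquiv.isAddHaarMeasure_map _
      exact Measure.absolutelyContinuous_isAddHaarMeasure _ _
    have h3 := hL hnull
    replace h3 := Measure.preimage_null_of_map_null
      L.toContinuousLinearEquiv.continuous.measurable.aemeasurable h3
    rw [ae_iff]
    refine measure_mono_null ?_ h3
    intro c hc
    simp only [ne_eq, not_not, Set.mem_ofPred_eq] at hc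
    simp only [Set.mem_preimage, Set.mem_ofPred_eq]
    rw [← hc]
    simp only [P, p']
    rw [← MvPolynomial.coe_aeval_eq_eval]
    change MvPolynomial.aeval _ (MvPolynomial.bind₁ f _) = _
    rw [MvPolynomial.aeval_bind₁, MvPolynomial.aeval_map_algebraMap]
    congr 2
    funext i
    rcases i with s | s
    · simp only [f, Sum.elim_inl, map_add, map_mul, MvPolynomial.aeval_X, MvPolynomial.algHom_C]
      apply Complex.ext <;> simp [L]
    · simp only [f, Sum.elim_inr, map_sub, map_mul, MvPolynomial.aeval_X, MvPolynomial.algHom_C]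
      apply Complex.ext <;> simp [L]
  have hall : ∀ᵐ c : S → ℂ, ∀ p : MvPolynomial (S ⊕ S) ℚ, p ≠ 0 →
      MvPolynomial.aeval (Sum.elim c (fun s => starRingEnd ℂ (c s))) p ≠ 0 := by
    have : Countable (MvPolynomial (S ⊕ S) ℚ) := by
      rw [← Cardinal.mk_le_aleph0_iff]
      refine MvPolynomial.cardinalMk_le_max.trans ?_
      simp
    rw [ae_all_iff]
    intro p
    by_cases hp : p = 0
    · simp [hp]
    · filter_upwards [key p hp] with c hc _ using hc
  filter_upwards [hall] with c hc
  rw [algebraicIndependent_iff]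
  intro p hp
  by_contra h
  exact hc p h hp

lemma clF_mul_coeff {G : Set ℂ} {f g : ℂ[X]} (hf : ∀ i, f.coeff i ∈ clF G)
    (hg : ∀ i, g.coeff i ∈ clF G) (i : ℕ) : (f * g).coeff i ∈ clF G := by
  rw [coeff_mul]
  exact sum_mem fun x _ => mul_mem (hf _) (hg _)

lemma core_a {S : Finset ℕ} {c : ↥S → ℂ} (hc : AlgebraicIndependent ℚ c) (P A B : ℂ[X])
    (hA : A.Monic) (hPc : ∀ s : ↥S, P.coeff s = c s) (v : ℕ) (h : P = X ^ v * (A * B)) :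
    S.card + 1 ≤ A.support.card + B.support.card := by
  classical
  set G : Finset ℂ := (A.support.erase A.natDegree).image A.coeff ∪ B.support.image B.coeff with hG
  have hAG : ∀ i, A.coeff i ∈ clF (G : Set ℂ) := by
    intro i
    by_cases hi : i = A.natDegree
    · subst hi; rw [hA.coeff_natDegree]; exact one_mem _
    by_cases h0 : A.coeff i = 0
    · rw [h0]; exact zero_mem _
    apply subset_clF
    rw [hG]; push_cast
    left
    exact ⟨i, by simp [hi, h0], rfl⟩
  have hBG : ∀ i, B.coeff i ∈ clF (G : Set ℂ) := by
    intro i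
    by_cases h0 : B.coeff i = 0
    · rw [h0]; exact zero_mem _
    apply subset_clF
    rw [hG]; push_cast
    right
    exact ⟨i, by simp [h0], rfl⟩
  have hX : ∀ i, (X ^ v : ℂ[X]).coeff i ∈ clF (G : Set ℂ) := by
    intro i
    rw [coeff_X_pow]
    split_ifs
    · exact one_mem _
    · exact zero_mem _
  have h1 := clF_card hc G (fun s => by
    rw [← hPc s, h]
    exact clF_mul_coeff hX (clF_mul_coeff hAG hBG) _)
  have h2 : G.card ≤ (A.support.erase A.natDegree).card + B.support.card :=
    (Finset.card_union_le _ _).trans (add_le_add Finset.card_image_le Finset.card_image_le)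
  have hm : A.natDegree ∈ A.support := natDegree_mem_support_of_nonzero hA.ne_zero
  rw [Finset.card_erase_of_mem hm] at h2
  have := Finset.card_pos.2 ⟨_, hm⟩
  simp at h1
  omega

lemma core_b {S : Finset ℕ} {c : ↥S → ℂ} (hS : 2 ≤ S.card)
    (hc : AlgebraicIndependent ℚ (Sum.elim c (fun s => starRingEnd ℂ (c s)))) (P : ℂ[X])
    (hPc : ∀ s : ↥S, P.coeff s = c s) (hP0 : ∀ i ∉ S, P.coeff i = 0)
    (hP : P ≠ 0) {α : ℂ} (hα : α ≠ 0) (hr : P.eval α = 0) :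
    ∃ G : Set ℂ, α ∉ clF G ∧
      (∀ i, ((C P.leadingCoeff⁻¹ * P).scaleRoots α⁻¹).coeff i ∈ clF G) ∧
      (∀ s, starRingEnd ℂ (c s) ∈ clF G) := by
  classical
  have hl : P.leadingCoeff ≠ 0 := leadingCoeff_ne_zero.2 hP
  set N := P.natDegree with hN
  have hNS : N ∈ S := by
    by_contra h
    exact hl (hP0 _ h)
  obtain ⟨s0, hs0⟩ : (S.erase N).Nonempty := by
    rw [← Finset.card_pos, Finset.card_erase_of_mem hNS]; omega
  set M := (C P.leadingCoeff⁻¹ * P).scaleRoots α⁻¹ with hM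
  have hdeg : (C P.leadingCoeff⁻¹ * P).natDegree = N := natDegree_C_mul (inv_ne_zero hl)
  have hMc : ∀ i, M.coeff i = P.leadingCoeff⁻¹ * P.coeff i * α⁻¹ ^ (N - i) := by
    intro i
    rw [hM, coeff_scaleRoots, hdeg, coeff_C_mul]
  have hM1 : M.eval 1 = 0 := by
    have := scaleRoots_eval₂_mul (p := C P.leadingCoeff⁻¹ * P) (RingHom.id ℂ) (r := α) (s := α⁻¹)
    simp only [RingHom.id_apply, inv_mul_cancel₀ hα] at this
    change eval 1 _ = _ at this
    rw [← hM] at this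
    rw [this]
    change _ * eval α _ = _
    simp [hr]
  have hMN : M.coeff N = 1 := by
    rw [hMc]; simp
    exact inv_mul_cancel₀ hl
  have hMS : M.support ⊆ S := by
    intro i hi
    by_contra h
    simp [hMc, hP0 i h] at hi
  set G : Finset ℂ := ((S.erase N).erase s0).image M.coeff ∪
    Finset.univ.image (fun s : ↥S => starRingEnd ℂ (c s)) with hG
  have hcG : ∀ s, starRingEnd ℂ (c s) ∈ clF (G : Set ℂ) := by
    intro s
    apply subset_clF
    rw [hG]; push_cast
    right
    exact ⟨s, by simp, rfl⟩
  have hMG' : ∀ i, i ≠ s0 → M.coeff i ∈ clF (G : Set ℂ) := by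
    intro i hi
    by_cases hiN : i = N
    · rw [hiN, hMN]; exact one_mem _
    by_cases hiS : i ∈ S
    · apply subset_clF
      rw [hG]; push_cast
      left
      exact ⟨i, by simp [hi, hiN, hiS], rfl⟩
    · rw [hMc, hP0 i hiS]; simp
  have hMG : ∀ i, M.coeff i ∈ clF (G : Set ℂ) := by
    intro i
    by_cases hi : i = s0
    · subst hi
      have h1 : ∑ j ∈ S, M.coeff j = 0 := by
        rw [← hM1, eval_eq_sum, sum_def]
        simp only [one_pow, mul_one]
        symm
        apply Finset.sum_subset hMS
        intro x _ hx
        simpa using hx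
      rw [← Finset.add_sum_erase S _ (Finset.mem_of_mem_erase hs0)] at h1
      rw [eq_neg_of_add_eq_zero_left h1]
      exact neg_mem (sum_mem fun j hj => hMG' j (Finset.ne_of_mem_erase hj))
    · exact hMG' i hi
  refine ⟨G, ?_, hMG, hcG⟩
  intro hαG
  set H : Finset ℂ := insert P.leadingCoeff G with hH
  have hsub : ∀ x, x ∈ clF (G : Set ℂ) → x ∈ clF (H : Set ℂ) := fun x hx =>
    clF_le (fun y hy => subset_clF (by rw [hH]; push_cast; exact Or.inr hy)) hx
  have hlH : P.leadingCoeff ∈ clF (H : Set ℂ) := subset_clF (by rw [hH]; simp)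
  have h1 := clF_card hc H (by
    rintro (s | s)
    · simp only [Sum.elim_inl]
      have : c s = P.leadingCoeff * M.coeff s * α ^ (N - s) := by
        rw [hMc, hPc, inv_pow]
        field_simp
      rw [this]
      exact mul_mem (mul_mem hlH (hsub _ (hMG _))) (pow_mem (hsub _ hαG) _)
    · exact hsub _ (hcG s))
  have h2 : G.card ≤ ((S.erase N).erase s0).card + S.card := by
    refine (Finset.card_union_le _ _).trans (add_le_add Finset.card_image_le
      (Finset.card_image_le.trans ?_))
    simp
  have h3 : H.card ≤ G.card + 1 := Finset.card_insert_le _ _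
  rw [Finset.card_erase_of_mem hs0, Finset.card_erase_of_mem hNS] at h2
  simp at h1
  omega

lemma supp_shift (v : ℕ) (f : ℂ[X]) (i : ℕ) :
    i ∈ (X ^ v * f).support ↔ ∃ j ∈ f.support, i = v + j := by
  rw [mem_support_iff, coeff_X_pow_mul']
  constructor
  · intro h
    split_ifs at h with h1
    · exact ⟨i - v, by simpa using h, by omega⟩
    · exact absurd rfl h
  · rintro ⟨j, hj, rfl⟩
    simpa using hj

lemma supp_crev (f : ℂ[X]) (i : ℕ) :
    i ∈ (crev f).support ↔ i ≤ f.natDegree ∧ f.natDegree - i ∈ f.support := by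
  by_cases hi : i ≤ f.natDegree
  · simp [crev_coeff f hi, hi]
  · simp [crev_coeff_gt f (not_le.1 hi), hi]

lemma supp_C_mul {u : ℂ} (hu : u ≠ 0) (f : ℂ[X]) : (C u * f).support = f.support := by
  ext i; simp [hu]

lemma supp_mul (f g : ℂ[X]) : (f * g).support ⊆ f.support + g.support := by
  intro t ht
  rw [mem_support_iff, coeff_mul] at ht
  obtain ⟨p, hp, hne⟩ := Finset.exists_ne_zero_of_sum_ne_zero ht
  rw [Finset.mem_add]
  exact ⟨p.1, by simpa using left_ne_zero_of_mul hne, p.2,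
    by simpa using right_ne_zero_of_mul hne, Finset.HasAntidiagonal.mem_antidiagonal.1 hp⟩

lemma core {S : Finset ℕ} {c : ↥S → ℂ} (hS : 2 ≤ S.card)
    (hc : AlgebraicIndependent ℚ (Sum.elim c (fun s => starRingEnd ℂ (c s)))) (P Q : ℂ[X])
    (hPc : ∀ s : ↥S, P.coeff s = c s) (hP0 : ∀ i ∉ S, P.coeff i = 0)
    (hQ : Q ≠ 0) (i j : ℕ) (h : X ^ i * (P * crev P) = X ^ j * (Q * crev Q))
    (hQS : Q.support.card ≤ S.card) :
    (∃ m : ℤ, ∀ z : ℤ, (∃ q ∈ Q.support, (q : ℤ) = z) ↔ ∃ s ∈ S, (s : ℤ) + m = z) ∨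
    (∃ m : ℤ, ∀ z : ℤ, (∃ q ∈ Q.support, (q : ℤ) = z) ↔ ∃ s ∈ S, m - (s : ℤ) = z) := by
  classical
  have hcne : ∀ s, c s ≠ 0 := fun s => hc.ne_zero (Sum.inl s)
  have hPS : P.support = S := by
    ext i
    by_cases hi : i ∈ S
    · simpa [hi] using (hPc ⟨i, hi⟩).trans_ne (hcne _)
    · simp [hi, hP0 i hi]
  have hP : P ≠ 0 := by
    rintro rfl
    rw [← hPS] at hS; simp at hS
  obtain ⟨A, B, v, v', u, hAm, hA0, hB0, hu, hPe, hQe⟩ := factor_flip P Q hP hQ i j h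
  have hB : B ≠ 0 := by rintro rfl; simp at hB0
  have hQs : Q.support = (X ^ v' * (A * crev B)).support := by rw [hQe, supp_C_mul hu]
  by_cases hA1 : A.natDegree = 0
  · right
    have hA : A = 1 := hAm.natDegree_eq_zero.1 hA1
    subst hA
    rw [one_mul] at hPe hQs
    refine ⟨v' + B.natDegree + v, fun z => ?_⟩
    rw [hQs, ← hPS, hPe]
    simp only [supp_shift, supp_crev]
    constructor
    · rintro ⟨q, ⟨j, ⟨hj, hjB⟩, rfl⟩, rfl⟩
      exact ⟨_, ⟨_, hjB, rfl⟩, by push_cast [hj]; ring⟩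
    · rintro ⟨q, ⟨j, hj, rfl⟩, rfl⟩
      have : j ≤ B.natDegree := le_natDegree_of_mem_supp j hj
      refine ⟨_, ⟨B.natDegree - j, ⟨by omega, ?_⟩, rfl⟩, by push_cast [this]; ring⟩
      rwa [Nat.sub_sub_self this]
  left
  refine ⟨v' - v, ?_⟩
  by_cases hB1 : B.natDegree = 0
  · obtain ⟨b, hb⟩ := natDegree_eq_zero.1 hB1
    subst hb
    have hb : b ≠ 0 := by simpa using hB0
    have hcb : crev (C b) = C (starRingEnd ℂ b) := by simp [crev]
    have hcb0 : starRingEnd ℂ b ≠ 0 := by simpa using hb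
    intro z
    rw [hQs, ← hPS, hPe, hcb]
    simp only [supp_shift, mul_comm A, supp_C_mul hb, supp_C_mul hcb0]
    constructor
    · rintro ⟨q, ⟨j, hj, rfl⟩, rfl⟩
      exact ⟨_, ⟨j, hj, rfl⟩, by push_cast; ring⟩
    · rintro ⟨q, ⟨j, hj, rfl⟩, rfl⟩
      exact ⟨_, ⟨j, hj, rfl⟩, by push_cast; ring⟩
  -- main case
  have ha := core_a (hc.comp Sum.inl Sum.inl_injective) P A B hAm hPc v hPe
  obtain ⟨α, hα⟩ := IsAlgClosed.exists_root A (by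
    intro hd; exact hA1 (natDegree_eq_of_degree_eq_some hd))
  have hα0 : α ≠ 0 := by
    rintro rfl
    rw [IsRoot, ← coeff_zero_eq_eval_zero] at hα
    exact hA0 hα
  have hPα : P.eval α = 0 := by
    rw [hPe]; simp [hα.eq_zero]
  obtain ⟨G, hαG, hMG, hcG⟩ := core_b hS hc P hPc hP0 hP hα0 hPα
  have hl : P.leadingCoeff ≠ 0 := leadingCoeff_ne_zero.2 hP
  have hAG : ∀ i, (A.scaleRoots α⁻¹).coeff i ∈ clF G := by
    refine clF_factor _ _ ?_ hMG ((monic_scaleRoots_iff _).2 hAm) ?_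
    · apply scaleRoots_ne_zero
      simp [hP]
    · apply scaleRoots_dvd
      rw [hPe]
      exact Dvd.intro (C (leadingCoeff (X ^ v * (A * B)))⁻¹ * X ^ v * B) (by ring)
  have hcPG : ∀ i, (crev P).coeff i ∈ clF G := by
    intro i
    by_cases hi : i ≤ P.natDegree
    · rw [crev_coeff P hi]
      by_cases hi' : P.natDegree - i ∈ S
      · rw [hPc ⟨_, hi'⟩]; exact hcG _
      · rw [hP0 _ hi']; simp
    · rw [crev_coeff_gt P (not_le.1 hi)]; exact zero_mem _
  have hcB : crev B ≠ 0 := crev_ne_zero hB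
  have hlB : (crev B).leadingCoeff ≠ 0 := leadingCoeff_ne_zero.2 hcB
  set q := C (crev B).leadingCoeff⁻¹ * crev B with hq
  have hqm : q.Monic := by
    rw [hq, Monic, leadingCoeff_mul, leadingCoeff_C, inv_mul_cancel₀ hlB]
  have hqG : ∀ i, q.coeff i ∈ clF G := by
    refine clF_factor _ _ (crev_ne_zero hP) hcPG hqm ?_
    rw [hPe, crev_X_pow_mul, crev_mul, hq]
    refine (Dvd.intro (C (crev B).leadingCoeff) ?_ : _ ∣ crev B).trans (dvd_mul_left _ _)
    rw [mul_right_comm, ← C_mul, inv_mul_cancel₀ hlB, C_1, one_mul]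
  set U := A.support with hU
  set W := B.support with hW
  set V := (crev B).support with hV
  have hsub : U + V ⊆ (A * crev B).support := by
    intro t ht
    obtain ⟨x, hx, y, hy, rfl⟩ := Finset.mem_add.1 ht
    have h1 := prod_support hαG A q hAG hqG (mem_support_iff.1 hx) (j := y) (by
      rw [← mem_support_iff, hq, supp_C_mul (inv_ne_zero hlB)]; exact hy)
    rw [mem_support_iff]
    intro h0
    apply h1
    rw [hq, mul_left_comm, coeff_C_mul, h0, mul_zero]
  have hVW : V.card = W.card := by
    symm
    refine Finset.card_bij' (fun x _ => B.natDegree - x) (fun x _ => B.natDegree - x) ?_ ?_ ?_ ?_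
    · intro a ha
      have := le_natDegree_of_mem_supp a ha
      rw [hV, supp_crev]
      exact ⟨by omega, by rwa [Nat.sub_sub_self this]⟩
    · intro a ha
      exact ((supp_crev _ _).1 ha).2
    · intro a ha
      exact Nat.sub_sub_self (le_natDegree_of_mem_supp a ha)
    · intro a ha
      exact Nat.sub_sub_self ((supp_crev _ _).1 ha).1
  have hshift : ∀ (v : ℕ) (f : ℂ[X]), (X ^ v * f).support = f.support.image (v + ·) := by
    intro v f; ext i
    rw [supp_shift]; simp only [Finset.mem_image, eq_comm]
  have hinj : ∀ v : ℕ, Function.Injective (v + · : ℕ → ℕ) := fun v => add_right_injective v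
  have hQcard : Q.support.card = (A * crev B).support.card := by
    rw [hQs, hshift, Finset.card_image_of_injective _ (hinj _)]
  have hScard : S.card = (A * B).support.card := by
    rw [← hPS, hPe, hshift, Finset.card_image_of_injective _ (hinj _)]
  have hle := Finset.card_le_card hsub
  have hUn : U.Nonempty := ⟨0, by simpa [hU] using hA0⟩
  have hVn : V.Nonempty := ⟨0, by simpa [hV] using crev_coeff_zero hB⟩
  have hcd := cauchy_davenport_add_of_linearOrder_isCancelAdd hUn hVn
  have hUVc : (U + V).card ≤ U.card + V.card - 1 := by omega
  have hBdeg : (crev B).natDegree = B.natDegree := natDegree_crev hB0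
  have hsym := ap_sym U V hUVc (by simpa [hU] using hA0)
    (by simpa [hV] using crev_coeff_zero hB) (w := A.natDegree)
    (natDegree_mem_support_of_nonzero hAm.ne_zero) hA1 (M := B.natDegree)
    (by rw [← hBdeg]; exact natDegree_mem_support_of_nonzero hcB)
    (fun x hx => ((supp_crev _ _).1 hx).1)
  have hVWeq : V = W := by
    apply Finset.eq_of_subset_of_card_le _ hVW.ge
    intro x hx
    have h1 := (supp_crev _ _).1 (hsym x hx)
    have h2 := ((supp_crev _ _).1 hx).1
    rw [Nat.sub_sub_self h2] at h1
    exact h1.2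
  have hAB : (A * B).support = U + W := by
    apply Finset.eq_of_subset_of_card_le (supp_mul A B)
    rw [← hU, ← hW, ← hVWeq]; omega
  have hAC : (A * crev B).support = U + V := by
    symm
    apply Finset.eq_of_subset_of_card_le hsub
    omega
  intro z
  rw [hQs, ← hPS, hPe]
  simp only [supp_shift]
  rw [hAB, hAC, hVWeq]
  constructor
  · rintro ⟨q, ⟨j, hj, rfl⟩, rfl⟩
    exact ⟨_, ⟨j, hj, rfl⟩, by push_cast; ring⟩
  · rintro ⟨q, ⟨j, hj, rfl⟩, rfl⟩
    exact ⟨_, ⟨j, hj, rfl⟩, by push_cast; ring⟩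

end Helpers1

section Helpers2
open Polynomial

noncomputable def pX {n : ℕ} (x : Fin n → ℂ) : ℂ[X] :=
  ∑ i : Fin n, monomial (i : ℕ) (x i)

lemma pX_coeff {n : ℕ} (x : Fin n → ℂ) (j : ℕ) : (pX x).coeff j = extZ x (j : ℤ) := by
  unfold pX extZ
  rw [finsetSum_coeff]
  simp only [coeff_monomial]
  by_cases hj : j < n
  · rw [dif_pos ⟨by omega, by omega⟩, Finset.sum_eq_single (⟨j, hj⟩ : Fin n)]
    · simp
    · intro b _ hb
      rw [if_neg]
      intro h
      exact hb (Fin.ext h)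
    · simp
  · rw [dif_neg (by omega)]
    apply Finset.sum_eq_zero
    intro i _
    rw [if_neg]
    have := i.2
    omega

lemma pX_natDegree {n : ℕ} (x : Fin n → ℂ) : (pX x).natDegree ≤ n - 1 := by
  rw [natDegree_le_iff_coeff_eq_zero]
  intro j hj
  rw [pX_coeff, extZ, dif_neg (by omega)]

noncomputable def rX {n : ℕ} (x : Fin n → ℂ) : ℂ[X] :=
  pX x * reflect (n - 1) ((pX x).map (starRingEnd ℂ))

lemma map_natDegree {n : ℕ} (x : Fin n → ℂ) :
    ((pX x).map (starRingEnd ℂ)).natDegree ≤ n - 1 :=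
  natDegree_map_le.trans (pX_natDegree x)

lemma rX_coeff {n : ℕ} (x : Fin n → ℂ) (m : ℕ) (hm : m < n) :
    (rX x).coeff (n - 1 - m) = autocorr x m := by
  rw [rX, coeff_mul, Finset.Nat.sum_antidiagonal_eq_sum_range_succ_mk, autocorr]
  have : (n - 1 - m).succ = n - m := by omega
  rw [this]
  apply Finset.sum_congr rfl
  intro a ha
  have ha := Finset.mem_range.1 ha
  simp only [coeff_reflect, coeff_map, pX_coeff]
  rw [revAt_le (by omega)]
  congr 3
  omega

lemma rX_sym {n : ℕ} (x : Fin n → ℂ) :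
    reflect ((n - 1) + (n - 1)) ((rX x).map (starRingEnd ℂ)) = rX x := by
  rw [rX, Polynomial.map_mul, reflect_mul _ _ (map_natDegree x), mul_comm]
  · congr 1
    rw [reflect_map, reflect_reflect, map_map]
    ext; simp
  · refine natDegree_map_le.trans (natDegree_reflect_le.trans ?_)
    simpa using map_natDegree x

lemma rX_natDegree {n : ℕ} (x : Fin n → ℂ) : (rX x).natDegree ≤ (n - 1) + (n - 1) := by
  refine natDegree_mul_le.trans (add_le_add (pX_natDegree x) (natDegree_reflect_le.trans ?_))
  simpa using map_natDegree x

lemma rX_ext {n : ℕ} (x y : Fin n → ℂ) (hn : 0 < n)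
    (h : ∀ m : Fin n, autocorr x (m : ℕ) = autocorr y (m : ℕ)) : rX x = rX y := by
  have h1 : ∀ t ≤ n - 1, (rX x).coeff t = (rX y).coeff t := by
    intro t ht
    have e : t = n - 1 - (n - 1 - t) := by omega
    rw [e, rX_coeff x _ (by omega), rX_coeff y _ (by omega)]
    exact h ⟨n - 1 - t, by omega⟩
  ext t
  by_cases ht : t ≤ n - 1
  · exact h1 t ht
  by_cases ht2 : t ≤ (n - 1) + (n - 1)
  · rw [← rX_sym x, ← rX_sym y, coeff_reflect, coeff_reflect, revAt_le ht2, coeff_map, coeff_map,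
      h1 _ (by omega)]
  · rw [coeff_eq_zero_of_natDegree_lt ((rX_natDegree x).trans_lt (not_le.1 ht2)),
      coeff_eq_zero_of_natDegree_lt ((rX_natDegree y).trans_lt (not_le.1 ht2))]

lemma rX_crev {n : ℕ} (x : Fin n → ℂ) : ∃ i, rX x = X ^ i * (pX x * crev (pX x)) := by
  refine ⟨n - 1 - ((pX x).map (starRingEnd ℂ)).natDegree, ?_⟩
  have h := reflect_mul ((pX x).map (starRingEnd ℂ)) 1 (le_refl _)
    (G := n - 1 - ((pX x).map (starRingEnd ℂ)).natDegree) (by simp)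
  rw [Nat.add_sub_cancel' (map_natDegree x), mul_one, reflect_one] at h
  rw [rX, h, crev, reverse]
  ring

end Helpers2

/-- Let `S ⊆ {0,…,n−1}` with `|S| = k`, `3 ≤ k ≤ n−1`.  For (Lebesgue-) almost all
nonvanishing value assignments `c ∈ (ℂ\{0})^S`, every signal with at most `k` nonzero
entries and the same autocorrelation as `x(c)` has support equal to a shift `S + m` or a
shifted reflection `m − S` of `S`. -/
theorem support_recovery_almost_always
    (n k : ℕ) (hn : 4 ≤ n) (hk3 : 3 ≤ k) (hkn : k ≤ n - 1)
    (S : Finset ℕ) (hScard : S.card = k) (hSn : ∀ i ∈ S, i < n) :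
    volume {c : ↥S → ℂ |
      (∀ i, c i ≠ 0) ∧
      ∃ x' : Fin n → ℂ, {i : Fin n | x' i ≠ 0}.ncard ≤ k ∧
        (∀ m : Fin n, autocorr x' (m : ℕ) = autocorr (sigOn (n := n) S c) (m : ℕ)) ∧
        (∀ m : ℤ, {j : ℤ | extZ x' j ≠ 0} ≠ (fun i : ℤ => i + m) '' suppZ S) ∧
        (∀ m : ℤ, {j : ℤ | extZ x' j ≠ 0} ≠ (fun i : ℤ => m - i) '' suppZ S)} = 0 := by
  classical
  refine measure_mono_null ?_ (ae_iff.1 (ae_algIndep ↥S))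
  rintro c ⟨hc0, x', hcard, hauto, h1, h2⟩ hind
  have hext := rX_ext x' (sigOn (n := n) S c) (by omega) hauto
  obtain ⟨j, hj⟩ := rX_crev x'
  obtain ⟨i, hi⟩ := rX_crev (sigOn (n := n) S c)
  have hPc : ∀ s : ↥S, (pX (sigOn (n := n) S c)).coeff s = c s := by
    intro s
    have := hSn s s.2
    rw [pX_coeff, extZ, dif_pos ⟨by omega, by omega⟩]
    simp [sigOn]
  have hP0 : ∀ i ∉ S, (pX (sigOn (n := n) S c)).coeff i = 0 := by
    intro i hi
    rw [pX_coeff, extZ]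
    split_ifs with h
    · simp [sigOn, hi]
    · rfl
  have hP : pX (sigOn (n := n) S c) ≠ 0 := by
    intro h0
    obtain ⟨s, hs⟩ : S.Nonempty := Finset.card_pos.1 (by omega)
    apply hc0 ⟨s, hs⟩
    rw [← hPc, h0]; simp
  rw [hi, hj] at hext
  have hQ : pX x' ≠ 0 := by
    intro h0
    rw [h0, zero_mul, mul_zero] at hext
    have : (Polynomial.X : Polynomial ℂ) ^ i ≠ 0 := pow_ne_zero _ Polynomial.X_ne_zero
    exact mul_ne_zero this (mul_ne_zero hP (crev_ne_zero hP)) hext.symm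
  have hsupp : ((pX x').support : Set ℕ) = (fun i : Fin n => (i : ℕ)) '' {i : Fin n | x' i ≠ 0} := by
    ext q
    simp only [Finset.mem_coe, Polynomial.mem_support_iff, pX_coeff, extZ, Set.mem_image]
    constructor
    · intro h
      split_ifs at h with h'
      · exact ⟨_, h, by simp⟩
      · exact absurd rfl h
    · rintro ⟨a, ha, rfl⟩
      have := a.2
      rw [dif_pos ⟨by omega, by omega⟩]
      simpa using ha
  have hQS : (pX x').support.card ≤ S.card := by
    rw [← Set.ncard_coe_finset, hsupp, Set.ncard_image_of_injective _ Fin.val_injective, hScard]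
    exact hcard
  have hZ : ∀ z : ℤ, (∃ q ∈ (pX x').support, (q : ℤ) = z) ↔ extZ x' z ≠ 0 := by
    intro z
    constructor
    · rintro ⟨q, hq, rfl⟩
      rwa [Polynomial.mem_support_iff, pX_coeff] at hq
    · intro hz
      have h0 : 0 ≤ z := by
        by_contra h
        exact hz (by rw [extZ, dif_neg (by omega)])
      lift z to ℕ using h0
      exact ⟨z, by rwa [Polynomial.mem_support_iff, pX_coeff], rfl⟩
  rcases core (by omega) hind _ _ hPc hP0 hQ i j hext.symm hQS with ⟨m, hm⟩ | ⟨m, hm⟩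
  · apply h1 m
    ext z
    have := (hZ z).symm.trans (hm z)
    simp only [suppZ, Set.mem_image]
    refine this.trans ⟨?_, ?_⟩
    · rintro ⟨s, hs, rfl⟩
      exact ⟨_, ⟨s, hs, rfl⟩, rfl⟩
    · rintro ⟨_, ⟨s, hs, rfl⟩, rfl⟩
      exact ⟨s, hs, rfl⟩
  · apply h2 m
    ext z
    have := (hZ z).symm.trans (hm z)
    simp only [suppZ, Set.mem_image]
    refine this.trans ⟨?_, ?_⟩
    · rintro ⟨s, hs, rfl⟩
      exact ⟨_, ⟨s, hs, rfl⟩, rfl⟩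
    · rintro ⟨_, ⟨s, hs, rfl⟩, rfl⟩
      exact ⟨s, hs, rfl⟩
end

section
/- Let A and B be finite sets of integers with |A| = a ≥ 2 and |B| = b ≥ 2, and suppose the sumset A + B = {α + β : α ∈ A, β ∈ B} satisfies |A + B| = a + b − 1. Then A and B are both arithmetic progressions with the same common difference: writing A = {u₀ < u₁ < ⋯ < u_{a−1}} and B = {v₀ < v₁ < ⋯ < v_{b−1}}, one has u_p − u_{p−1} = v_q − v_{q−1} for all 1 ≤ p ≤ a−1 and 1 ≤ q ≤ b−1. -/
open Pointwise

/-- If `A` and `B` are finite sets of integers with `|A| = a ≥ 2`, `|B| = b ≥ 2` and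
`|A + B| = a + b − 1`, then `A` and `B` are arithmetic progressions with the same common
difference: for strictly monotone enumerations `u` of `A` and `v` of `B`, all the
consecutive differences `u_p − u_{p−1}` and `v_q − v_{q−1}` coincide. -/
theorem sumset_small_implies_AP
    (a b : ℕ) (ha : 2 ≤ a) (hb : 2 ≤ b) (A B : Finset ℤ)
    (hA : A.card = a) (hB : B.card = b) (hsum : (A + B).card = a + b - 1)
    (u : Fin a → ℤ) (v : Fin b → ℤ) (hu : StrictMono u) (hv : StrictMono v)
    (huA : ∀ x : ℤ, x ∈ A ↔ ∃ i, u i = x) (hvB : ∀ x : ℤ, x ∈ B ↔ ∃ i, v i = x)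
    (p q : ℕ) (hp1 : 1 ≤ p) (hp2 : p ≤ a - 1) (hq1 : 1 ≤ q) (hq2 : q ≤ b - 1) :
    u ⟨p, by omega⟩ - u ⟨p - 1, by omega⟩ = v ⟨q, by omega⟩ - v ⟨q - 1, by omega⟩ := by
  obtain ⟨P, rfl⟩ : ∃ P, p = P + 1 := ⟨p - 1, by omega⟩
  obtain ⟨Q, rfl⟩ : ∃ Q, q = Q + 1 := ⟨q - 1, by omega⟩
  simp only [Nat.add_sub_cancel]
  by_contra hne
  have hPa : P + 1 < a := by omega
  have hQb : Q + 1 < b := by omega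
  set i0 : Fin a := ⟨P, by omega⟩ with hi0
  set i1 : Fin a := ⟨P + 1, by omega⟩ with hi1
  set j0 : Fin b := ⟨Q, by omega⟩ with hj0
  set j1 : Fin b := ⟨Q + 1, by omega⟩ with hj1
  have hui : u i0 < u i1 := hu (by simp [hi0, hi1])
  have hvj : v j0 < v j1 := hv (by simp [hj0, hj1])
  have hmem : ∀ i j, u i + v j ∈ A + B := fun i j =>
    Finset.add_mem_add ((huA _).2 ⟨i, rfl⟩) ((hvB _).2 ⟨j, rfl⟩)
  let L := (Finset.Iic i0).image u + (Finset.Iic j0).image v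
  let R := (Finset.Ici i1).image u + (Finset.Ici j1).image v
  let M : Finset ℤ := {u i1 + v j0, u i0 + v j1}
  have hLc : P + Q + 1 ≤ L.card := by
    have h := cauchy_davenport_add_of_linearOrder_isCancelAdd
      (s := (Finset.Iic i0).image u) (t := (Finset.Iic j0).image v) (by simp) (by simp)
    rw [Finset.card_image_of_injective _ hu.injective,
      Finset.card_image_of_injective _ hv.injective, Fin.card_Iic, Fin.card_Iic] at h
    simp only [hi0, hj0] at h
    change _ ≤ L.card at h
    omega
  have hRc : (a - (P + 1)) + (b - (Q + 1)) - 1 ≤ R.card := by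
    have h := cauchy_davenport_add_of_linearOrder_isCancelAdd
      (s := (Finset.Ici i1).image u) (t := (Finset.Ici j1).image v) (by simp) (by simp)
    rw [Finset.card_image_of_injective _ hu.injective,
      Finset.card_image_of_injective _ hv.injective, Fin.card_Ici, Fin.card_Ici] at h
    exact h
  have hMc : M.card = 2 := Finset.card_pair (by omega)
  have hL : ∀ x ∈ L, x ∈ A + B ∧ x ≤ u i0 + v j0 := by
    intro x hx
    simp only [L, Finset.mem_add, Finset.mem_image, Finset.mem_Iic] at hx
    obtain ⟨_, ⟨i, hi, rfl⟩, _, ⟨j, hj, rfl⟩, rfl⟩ := hx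
    exact ⟨hmem i j, add_le_add (hu.monotone hi) (hv.monotone hj)⟩
  have hR : ∀ x ∈ R, x ∈ A + B ∧ u i1 + v j1 ≤ x := by
    intro x hx
    simp only [R, Finset.mem_add, Finset.mem_image, Finset.mem_Ici] at hx
    obtain ⟨_, ⟨i, hi, rfl⟩, _, ⟨j, hj, rfl⟩, rfl⟩ := hx
    exact ⟨hmem i j, add_le_add (hu.monotone hi) (hv.monotone hj)⟩
  have hM : ∀ x ∈ M, x ∈ A + B ∧ u i0 + v j0 < x ∧ x < u i1 + v j1 := by
    intro x hx
    simp only [M, Finset.mem_insert, Finset.mem_singleton] at hx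
    rcases hx with rfl | rfl
    · exact ⟨hmem _ _, by omega, by omega⟩
    · exact ⟨hmem _ _, by omega, by omega⟩
  have hLM : Disjoint L M := Finset.disjoint_left.2 fun x h1 h2 => by
    have := hL x h1
    have := hM x h2
    omega
  have hLMR : Disjoint (L ∪ M) R := Finset.disjoint_left.2 fun x h1 h2 => by
    have h3 := hR x h2
    rcases Finset.mem_union.1 h1 with h | h
    · have := hL x h
      omega
    · have := hM x h
      omega
  have hsub : (L ∪ M) ∪ R ⊆ A + B := by
    intro x hx
    rcases Finset.mem_union.1 hx with h | h
    · rcases Finset.mem_union.1 h with h | h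
      · exact (hL x h).1
      · exact (hM x h).1
    · exact (hR x h).1
  have hc := Finset.card_le_card hsub
  rw [Finset.card_union_of_disjoint hLMR, Finset.card_union_of_disjoint hLM] at hc
  omega
end

section
/- Let t ≥ 2 and let r ∈ ℂᵗ satisfy |r_i|² < Σ_{j ≠ i} |r_j|² for every index i. Let d ∈ ℝᵗ satisfy d_i ≥ 0 for all i and d_i·d_j ≥ |r_i|²·|r_j|² for all i ≠ j. Then Σ_i d_i ≥ Σ_i |r_i|², with equality if and only if d_i = |r_i|² for all i. (In particular, the diagonal of r r* is the unique optimizer of the trace-minimization matrix completion problem (14) given all off-diagonal magnitudes |r_i||r_j|.) -/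
open Finset

/-- Let `t ≥ 2` and `r ∈ ℂᵗ` with `|r_i|² < Σ_{j ≠ i} |r_j|²` for every `i`.  If `d ∈ ℝᵗ`
satisfies `d_i ≥ 0` and `d_i d_j ≥ |r_i|²|r_j|²` for all `i ≠ j` (the 2×2 PSD constraints of
the matrix-completion program), then `Σ d_i ≥ Σ |r_i|²`, with equality iff `d_i = |r_i|²`
for all `i`. -/
theorem trace_min_matrix_completion
    (t : ℕ) (ht : 2 ≤ t) (r : Fin t → ℂ)
    (hr : ∀ i, ‖r i‖ ^ 2 < ∑ j ∈ Finset.univ.erase i, ‖r j‖ ^ 2)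
    (d : Fin t → ℝ) (hd0 : ∀ i, 0 ≤ d i)
    (hd : ∀ i j, i ≠ j → ‖r i‖ ^ 2 * ‖r j‖ ^ 2 ≤ d i * d j) :
    (∑ i, ‖r i‖ ^ 2) ≤ ∑ i, d i ∧
      ((∑ i, d i = ∑ i, ‖r i‖ ^ 2) ↔ ∀ i, d i = ‖r i‖ ^ 2) := by
  by_cases h : ∀ i, ‖r i‖ ^ 2 ≤ d i
  · refine ⟨Finset.sum_le_sum fun i _ => h i, fun he i => ?_, fun he => ?_⟩
    · have := (Finset.sum_eq_sum_iff_of_le (fun i _ => h i)).1 he.symm i (Finset.mem_univ i)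
      exact this.symm
    · exact Finset.sum_congr rfl fun i _ => he i
  · have key : (∑ i, ‖r i‖ ^ 2) < ∑ i, d i := by
      push Not at h
      obtain ⟨k, hk⟩ := h
      have h1 : ‖r k‖ ^ 2 * (∑ j ∈ Finset.univ.erase k, ‖r j‖ ^ 2)
          ≤ d k * ∑ j ∈ Finset.univ.erase k, d j := by
        rw [Finset.mul_sum, Finset.mul_sum]
        exact Finset.sum_le_sum fun j hj => hd k j (Finset.ne_of_mem_erase hj).symm
      have h2 := hr k
      have h3 := hd0 k
      rw [← Finset.add_sum_erase _ _ (Finset.mem_univ k),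
        ← Finset.add_sum_erase _ d (Finset.mem_univ k)]
      generalize (∑ j ∈ Finset.univ.erase k, ‖r j‖ ^ 2) = S at *
      generalize (∑ j ∈ Finset.univ.erase k, d j) = D at *
      generalize ‖r k‖ ^ 2 = a at *
      generalize d k = x at *
      by_contra hc
      have h4 : 0 < (a - x) * (S - x) := mul_pos (by linarith) (by linarith)
      have h5 : 0 ≤ x * (a + S - (x + D)) := mul_nonneg h3 (by linarith)
      nlinarith
    exact ⟨key.le, fun he => absurd he key.ne', fun he =>
      Finset.sum_congr rfl fun i _ => he i⟩
end

section
/- Let k ≥ 2, η ≥ 0, and let r ∈ ℂᵏ satisfy |r_i|² ≥ 2η for all i. Let R be a k×k Hermitian positive semidefinite complex matrix such that |R_{ij} − r_i·conj(r_j)| ≤ 2η for all i ≠ j. Then there do not exist two distinct indices i and j with Re(R_{ii}) < |r_i|² − 2η and Re(R_{jj}) < |r_j|² − 2η; that is, at most one diagonal entry of R falls below the corresponding |r_i|² by more than 2η. -/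
open Complex
open scoped ComplexOrder

/-- Let `k ≥ 2`, `η ≥ 0`, and `r ∈ ℂᵏ` with `|r_i|² ≥ 2η` for all `i`.  If `R` is Hermitian
positive semidefinite with `|R_{ij} − r_i conj(r_j)| ≤ 2η` for all `i ≠ j`, then at most one
diagonal entry of `R` falls below the corresponding `|r_i|²` by more than `2η`. -/
theorem at_most_one_small_diagonal
    (k : ℕ) (hk : 2 ≤ k) (η : ℝ) (hη : 0 ≤ η) (r : Fin k → ℂ)
    (hr : ∀ i, 2 * η ≤ ‖r i‖ ^ 2)
    (R : Matrix (Fin k) (Fin k) ℂ) (hR : R.PosSemidef)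
    (hoff : ∀ i j, i ≠ j → ‖R i j - r i * (starRingEnd ℂ) (r j)‖ ≤ 2 * η) :
    ¬ ∃ i j, i ≠ j ∧ (R i i).re < ‖r i‖ ^ 2 - 2 * η ∧ (R j j).re < ‖r j‖ ^ 2 - 2 * η := by
  rintro ⟨i, j, hij, hi, hj⟩
  have hii : 0 ≤ (R i i).re := (Complex.nonneg_iff.1 (hR.diag_nonneg (i := i))).1
  have hjj : 0 ≤ (R j j).re := (Complex.nonneg_iff.1 (hR.diag_nonneg (i := j))).1
  have hii0 : (R i i).im = 0 := (Complex.nonneg_iff.1 (hR.diag_nonneg (i := i))).2.symm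
  have hdet := (hR.submatrix ![i, j]).det_nonneg
  rw [Matrix.det_fin_two] at hdet
  have hji : R j i = (starRingEnd ℂ) (R i j) := (hR.isHermitian.apply j i).symm
  have hminor : ‖R i j‖ ^ 2 ≤ (R i i).re * (R j j).re := by
    have h := (Complex.nonneg_iff.1 hdet).1
    simp [hji, hii0] at h
    rw [Complex.sq_norm, Complex.normSq_apply]
    linarith
  have h1 : ‖r i‖ * ‖r j‖ - 2 * η ≤ ‖R i j‖ := by
    have h := norm_sub_norm_le (r i * (starRingEnd ℂ) (r j)) (R i j)
    rw [norm_sub_rev, norm_mul, RCLike.norm_conj] at h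
    linarith [hoff i j hij]
  have h2 : 2 * η ≤ ‖r i‖ * ‖r j‖ := by
    refine (sq_le_sq₀ (by positivity) (by positivity)).1 ?_
    rw [sq (2 * η), mul_pow]
    exact mul_le_mul (hr i) (hr j) (by positivity) (by positivity)
  have h3 : (‖r i‖ * ‖r j‖ - 2 * η) ^ 2 ≤ ‖R i j‖ ^ 2 :=
    pow_le_pow_left₀ (by linarith) h1 2
  have h4 : (R i i).re * (R j j).re < (‖r i‖ ^ 2 - 2 * η) * (‖r j‖ ^ 2 - 2 * η) :=
    mul_lt_mul'' hi hj hii hjj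
  nlinarith [mul_nonneg hη (sq_nonneg (‖r i‖ - ‖r j‖))]
end

section
/- Let k ≥ 2, η ≥ 0, and r ∈ ℂᵏ. Let R be a k×k Hermitian positive semidefinite complex matrix such that: (a) |R_{ij} − r_i·conj(r_j)| ≤ 2η for all i ≠ j; (b) Σ_i Re(R_{ii}) ≤ Σ_i |r_i|²; (c) there exists an index i₀ with Re(R_{i₀ i₀}) ≥ |r_{i₀}|² − k·η and Re(R_{jj}) ≥ |r_j|² − 2η for all j ≠ i₀. Then the squared Frobenius distance satisfies Σ_{i,j} |R_{ij} − r_i·conj(r_j)|² ≤ 16·k²·η². -/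
open Complex
open scoped ComplexOrder

/-- Let `k ≥ 2`, `η ≥ 0`, `r ∈ ℂᵏ` and let `R` be a Hermitian positive semidefinite matrix
with (a) `|R_{ij} − r_i conj(r_j)| ≤ 2η` off the diagonal, (b) `Σ Re(R_{ii}) ≤ Σ |r_i|²`, and
(c) some index `i₀` with `Re(R_{i₀i₀}) ≥ |r_{i₀}|² − kη` and `Re(R_{jj}) ≥ |r_j|² − 2η` for
`j ≠ i₀`.  Then the squared Frobenius distance from `R` to `r r*` is at most `16 k² η²`. -/
theorem frobenius_error_bound
    (k : ℕ) (hk : 2 ≤ k) (η : ℝ) (hη : 0 ≤ η) (r : Fin k → ℂ)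
    (R : Matrix (Fin k) (Fin k) ℂ) (hR : R.PosSemidef)
    (hoff : ∀ i j, i ≠ j → ‖R i j - r i * (starRingEnd ℂ) (r j)‖ ≤ 2 * η)
    (htr : ∑ i, (R i i).re ≤ ∑ i, ‖r i‖ ^ 2)
    (hdiag : ∃ i₀ : Fin k, ‖r i₀‖ ^ 2 - k * η ≤ (R i₀ i₀).re ∧
      ∀ j, j ≠ i₀ → ‖r j‖ ^ 2 - 2 * η ≤ (R j j).re) :
    ∑ i, ∑ j, ‖R i j - r i * (starRingEnd ℂ) (r j)‖ ^ 2 ≤ 16 * k ^ 2 * η ^ 2 := by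
  obtain ⟨i₀, h0, h1⟩ := hdiag
  have hk' : (2 : ℝ) ≤ k := by exact_mod_cast hk
  set d : Fin k → ℝ := fun i => (R i i).re - ‖r i‖ ^ 2 with hd
  set c : Fin k → ℝ := fun i => 2 + if i = i₀ then (k : ℝ) - 2 else 0 with hc
  have he : ∀ i, 0 ≤ d i + c i * η := by
    intro i
    by_cases h : i = i₀
    · subst h
      simp only [hd, hc, if_true]
      linarith
    · have := h1 i h
      simp only [hd, hc, if_neg h]
      linarith
  have hc0 : ∀ i, 0 ≤ c i := by
    intro i
    simp only [hc]
    split_ifs <;> linarith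
  have hsc : ∑ i, c i = 3 * k - 2 := by
    simp only [hc, Finset.sum_add_distrib, Finset.sum_ite_eq', Finset.mem_univ, if_true,
      Finset.sum_const, Finset.card_univ, Fintype.card_fin, nsmul_eq_mul]
    ring
  have hsc2 : ∑ i, c i ^ 2 = k ^ 2 + 4 * k - 4 := by
    have : ∀ i, c i ^ 2 = 4 + if i = i₀ then (k : ℝ) ^ 2 - 4 else 0 := by
      intro i
      simp only [hc]
      split_ifs <;> ring
    simp only [this, Finset.sum_add_distrib, Finset.sum_ite_eq', Finset.mem_univ, if_true,
      Finset.sum_const, Finset.card_univ, Fintype.card_fin, nsmul_eq_mul]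
    ring
  have hsd : ∑ i, d i ≤ 0 := by
    simp only [hd, Finset.sum_sub_distrib]
    linarith
  have hse : ∑ i, (d i + c i * η) ≤ (3 * k - 2) * η := by
    rw [Finset.sum_add_distrib, ← Finset.sum_mul, hsc]
    linarith
  have hse0 : 0 ≤ ∑ i, (d i + c i * η) := Finset.sum_nonneg fun i _ => he i
  have hse2 : ∑ i, (d i + c i * η) ^ 2 ≤ ((3 * k - 2) * η) ^ 2 :=
    (Finset.sum_sq_le_sq_sum_of_nonneg fun i _ => he i).trans
      (pow_le_pow_left₀ hse0 hse 2)
  have hd2 : ∑ i, d i ^ 2 ≤ ((3 * k - 2) * η) ^ 2 + (k ^ 2 + 4 * k - 4) * η ^ 2 := by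
    have : ∑ i, d i ^ 2 ≤ ∑ i, ((d i + c i * η) ^ 2 + c i ^ 2 * η ^ 2) := by
      refine Finset.sum_le_sum fun i _ => ?_
      have := mul_nonneg (he i) (mul_nonneg (hc0 i) hη)
      nlinarith
    rw [Finset.sum_add_distrib, ← Finset.sum_mul, hsc2] at this
    linarith
  have hpt : ∀ i j, ‖R i j - r i * (starRingEnd ℂ) (r j)‖ ^ 2
      ≤ 4 * η ^ 2 + if i = j then d i ^ 2 else 0 := by
    intro i j
    by_cases h : i = j
    · subst h
      have him : (R i i).im = 0 := by
        have := hR.isHermitian.apply i i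
        exact Complex.conj_eq_iff_im.mp this
      have hdd : R i i - r i * (starRingEnd ℂ) (r i) = ((d i : ℝ) : ℂ) := by
        rw [Complex.mul_conj, Complex.normSq_eq_norm_sq]
        apply Complex.ext
        · simp only [hd, Complex.sub_re, Complex.ofReal_re]
        · simp only [Complex.sub_im, Complex.ofReal_im, him, sub_zero]
      rw [hdd, Complex.norm_real, Real.norm_eq_abs, sq_abs, if_pos rfl]
      nlinarith [sq_nonneg η]
    · rw [if_neg h]
      have := pow_le_pow_left₀ (norm_nonneg _) (hoff i j h) 2
      linarith
  have hsum : ∑ i, ∑ j, ‖R i j - r i * (starRingEnd ℂ) (r j)‖ ^ 2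
      ≤ ∑ i, ∑ j, (4 * η ^ 2 + if i = j then d i ^ 2 else 0) :=
    Finset.sum_le_sum fun i _ => Finset.sum_le_sum fun j _ => hpt i j
  simp only [Finset.sum_add_distrib, Finset.sum_ite_eq, Finset.mem_univ, if_true,
      Finset.sum_const, Finset.card_univ, Fintype.card_fin, nsmul_eq_mul] at hsum
  nlinarith [mul_nonneg (sub_nonneg.2 hk') (sq_nonneg η), sq_nonneg (k * η), sq_nonneg η]
end
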